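/- arXiv:1802.04214 — 5 statements merged into one kernel-verified Lean document; each statement's English description precedes it below -/
import Mathlib

section
/- The smallest size of a minimal 1-saturating set in PG(6,2) is 19: there exists a 1-saturating set of 19 nonzero vectors in (ZMod 2)^7, every 1-saturating set of nonzero vectors of (ZMod 2)^7 has at least 19 points, and no 1-saturating 19-set in (ZMod 2)^7 is a cap. -/
/-- Points of PG(n-1,2) are the nonzero vectors of `Fin n → ZMod 2`.
A set `S` of nonzero vectors is 1-saturating if every nonzero vector `x ∉ S`
is the sum of two distinct elements of `S`. -/
def Saturating {n : ℕ} (S : Set (Fin n → ZMod 2)) : Prop :=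
  (∀ s ∈ S, s ≠ 0) ∧
    ∀ x : Fin n → ZMod 2, x ≠ 0 → x ∉ S →
      ∃ a ∈ S, ∃ b ∈ S, a ≠ b ∧ x = a + b

/-- A minimal 1-saturating set: 1-saturating, and removing any point destroys saturation. -/
def MinSat {n : ℕ} (S : Set (Fin n → ZMod 2)) : Prop :=
  Saturating S ∧ ∀ s ∈ S, ¬ Saturating (S \ {s})

/-- A cap: a set of nonzero vectors no three pairwise distinct elements of which sum to zero. -/
def IsCap {n : ℕ} (S : Set (Fin n → ZMod 2)) : Prop :=
  (∀ s ∈ S, s ≠ 0) ∧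
    ∀ a ∈ S, ∀ b ∈ S, ∀ c ∈ S, a ≠ b → a ≠ c → b ≠ c → a + b + c ≠ 0

/-- A complete cap: a cap that is 1-saturating. -/
def CompleteCap {n : ℕ} (S : Set (Fin n → ZMod 2)) : Prop :=
  IsCap S ∧ Saturating S

/-- Projective equivalence: some element of GL(n, ZMod 2) maps `S` onto `T`. -/
def ProjEquiv {n : ℕ} (S T : Set (Fin n → ZMod 2)) : Prop :=
  ∃ g : Matrix.GeneralLinearGroup (Fin n) (ZMod 2),
    (fun x => Matrix.mulVec (g : Matrix (Fin n) (Fin n) (ZMod 2)) x) '' S = T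

abbrev V7 := Fin 7 → ZMod 2

namespace PG6

open Finset

lemma zmod2_cases (a : ZMod 2) : a = 0 ∨ a = 1 := by
  revert a; decide

lemma add_self' (x : V7) : x + x = 0 := by
  funext i; exact CharTwo.add_self_eq_zero (x i)

lemma add_cancel' (x y : V7) : x + (x + y) = y := by
  rw [← add_assoc, add_self', zero_add]

lemma eq_add_iff (a b c : V7) : a + b = c ↔ a = c + b := by
  constructor
  · rintro rfl; rw [add_assoc, add_self', add_zero]
  · rintro rfl; rw [add_assoc, add_self', add_zero]

lemma add_eq_zero' (a b : V7) : a + b = 0 ↔ a = b := by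
  rw [eq_add_iff, zero_add]

/-- character -/
def chi (y x : V7) : ℤ := if y ⬝ᵥ x = 0 then 1 else -1

lemma chi_add_right (y a b : V7) : chi y (a + b) = chi y a * chi y b := by
  unfold chi
  rw [dotProduct_add]
  rcases zmod2_cases (y ⬝ᵥ a) with h | h <;> rcases zmod2_cases (y ⬝ᵥ b) with h' | h' <;>
    simp [h, h']
  decide

lemma chi_comm (y x : V7) : chi y x = chi x y := by
  unfold chi; rw [dotProduct_comm]

lemma chi_add_left (a b x : V7) : chi (a + b) x = chi a x * chi b x := by
  rw [chi_comm, chi_add_right, chi_comm x a, chi_comm x b]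

@[simp] lemma chi_zero_right (y : V7) : chi y 0 = 1 := by simp [chi]
@[simp] lemma chi_zero_left (y : V7) : chi 0 y = 1 := by simp [chi]

lemma card_V7 : Fintype.card V7 = 128 := by simp [V7]

lemma exists_dot_one {x : V7} (hx : x ≠ 0) : ∃ t : V7, x ⬝ᵥ t = 1 := by
  obtain ⟨i, hi⟩ := Function.ne_iff.mp hx
  refine ⟨Pi.single i 1, ?_⟩
  rcases zmod2_cases (x i) with h | h
  · exact absurd h hi
  · simp [h]

lemma sum_chi (x : V7) : ∑ y : V7, chi y x = if x = 0 then 128 else 0 := by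
  split_ifs with h
  · subst h; simp
  · obtain ⟨t, ht⟩ := exists_dot_one h
    have h1 : ∑ y : V7, chi y x = ∑ y : V7, chi (t + y) x :=
      (Equiv.sum_comp (Equiv.addLeft t) (fun y => chi y x)).symm
    have h2 : chi t x = -1 := by
      unfold chi; rw [dotProduct_comm, ht]; simp
    simp only [chi_add_left, h2, ← Finset.mul_sum] at h1
    linarith

lemma parseval (g h : V7 → ℤ) :
    ∑ y : V7, (∑ x, g x * chi y x) * (∑ x, h x * chi y x) = 128 * ∑ x, g x * h x := by
  simp_rw [Finset.sum_mul_sum]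
  rw [Finset.sum_comm, Finset.mul_sum]
  refine Finset.sum_congr rfl fun x _ => ?_
  rw [Finset.sum_comm]
  have : ∀ z : V7, ∑ y : V7, g x * chi y x * (h z * chi y z)
      = if z = x then 128 * (g x * h x) else 0 := by
    intro z
    have e : ∀ y : V7, g x * chi y x * (h z * chi y z) = g x * h z * chi y (x + z) := by
      intro y; rw [chi_add_right]; ring
    simp_rw [e]
    rw [← Finset.mul_sum, sum_chi]
    by_cases hz : z = x
    · subst hz; rw [add_self']; simp; ring
    · rw [if_neg, if_neg hz, mul_zero]
      rw [add_eq_zero']; exact fun h => hz h.symm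
  simp_rw [this]
  simp

lemma inversion (g : V7 → ℤ) (z : V7) :
    ∑ y : V7, (∑ x, g x * chi y x) * chi y z = 128 * g z := by
  have := parseval g (fun x => if x = z then 1 else 0)
  simpa using this

/-- Fourier coefficient of the indicator -/
def vv (A : Finset V7) (y : V7) : ℤ := ∑ a ∈ A, chi y a

/-- number of ordered representations -/
def RR (A : Finset V7) (x : V7) : ℕ := ((A ×ˢ A).filter fun p => p.1 + p.2 = x).card

lemma vv_eq (A : Finset V7) (y : V7) :
    vv A y = ∑ x, (if x ∈ A then 1 else 0) * chi y x := by
  simp [vv]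

lemma vv_sq (A : Finset V7) (y : V7) :
    vv A y ^ 2 = ∑ x, (RR A x : ℤ) * chi y x := by
  have h1 : vv A y ^ 2 = ∑ p ∈ A ×ˢ A, chi y (p.1 + p.2) := by
    rw [sq, vv, Finset.sum_mul_sum, Finset.sum_product]
    simp_rw [chi_add_right]
  rw [h1, ← Finset.sum_fiberwise (s := A ×ˢ A) (g := fun p => p.1 + p.2)]
  refine Finset.sum_congr rfl fun x _ => ?_
  rw [Finset.sum_congr rfl (g := fun _ => chi y x)]
  · simp [RR]
  · intro p hp
    rw [(Finset.mem_filter.mp hp).2]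

lemma M1 (A : Finset V7) (x : V7) :
    ∑ y, vv A y * chi y x = if x ∈ A then 128 else 0 := by
  simp_rw [vv_eq]
  rw [inversion]; simp

lemma M2 (A : Finset V7) (x : V7) :
    ∑ y, vv A y ^ 2 * chi y x = 128 * RR A x := by
  simp_rw [vv_sq]
  rw [inversion]

lemma M3 (A : Finset V7) : ∑ y, vv A y ^ 3 = 128 * ∑ a ∈ A, (RR A a : ℤ) := by
  have : ∀ y, vv A y ^ 3 = (∑ x, (RR A x : ℤ) * chi y x) *
      (∑ x, (if x ∈ A then 1 else 0) * chi y x) := by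
    intro y; rw [← vv_sq, ← vv_eq]; ring
  simp_rw [this]
  rw [parseval]; simp

lemma M4 (A : Finset V7) : ∑ y, vv A y ^ 4 = 128 * ∑ x, (RR A x : ℤ) ^ 2 := by
  have : ∀ y, vv A y ^ 4 = (∑ x, (RR A x : ℤ) * chi y x) *
      (∑ x, (RR A x : ℤ) * chi y x) := by
    intro y; rw [← vv_sq]; ring
  simp_rw [this]
  rw [parseval]; simp_rw [sq]

lemma RR_zero (A : Finset V7) : RR A 0 = A.card := by
  unfold RR
  rw [← Finset.card_image_of_injective A (f := fun a : V7 => (a, a))]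
  · congr 1
    ext ⟨a, b⟩
    simp only [mem_filter, mem_product, mem_image, Prod.mk.injEq, add_eq_zero']
    constructor
    · rintro ⟨⟨h1, h2⟩, rfl⟩; exact ⟨a, h1, rfl, rfl⟩
    · rintro ⟨c, hc, rfl, rfl⟩; exact ⟨⟨hc, hc⟩, rfl⟩
  · intro a b h; exact (Prod.mk.inj h).1

lemma sum_RR (A : Finset V7) : ∑ x, RR A x = A.card * A.card := by
  rw [← Finset.card_product]
  exact (Finset.card_eq_sum_card_fiberwise (fun _ _ => Finset.mem_coe.mpr (Finset.mem_univ _))).symm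

/-- parts -/
def P1 (A : Finset V7) (y : V7) : Finset V7 := A.filter fun a => y ⬝ᵥ a = 1
def P0 (A : Finset V7) (y : V7) : Finset V7 := A.filter fun a => y ⬝ᵥ a = 0

lemma card_parts (A : Finset V7) (y : V7) : (P0 A y).card + (P1 A y).card = A.card := by
  rw [← Finset.card_filter_add_card_filter_not (s := A) (fun a => y ⬝ᵥ a = 0)]
  congr 2
  ext a; simp only [P1, mem_filter]
  rcases zmod2_cases (y ⬝ᵥ a) with h | h <;> simp [h]

lemma vv_parts (A : Finset V7) (y : V7) : vv A y = (P0 A y).card - (P1 A y).card := by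
  unfold vv
  rw [← Finset.sum_filter_add_sum_filter_not A (fun a => y ⬝ᵥ a = 0)]
  have h1 : A.filter (fun a => ¬ y ⬝ᵥ a = 0) = P1 A y := by
    ext a; simp only [P1, mem_filter]
    rcases zmod2_cases (y ⬝ᵥ a) with h | h <;> simp [h]
  rw [h1, Finset.sum_congr rfl (g := fun _ => (1:ℤ)),
    Finset.sum_congr (s₂ := P1 A y) rfl (g := fun _ => (-1:ℤ))]
  · simp [P0]; ring
  · intro a ha
    have := (mem_filter.mp ha).2
    simp [chi, this]
  · intro a ha
    have := (mem_filter.mp ha).2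
    simp [chi, this]

lemma card_P1_mod (A : Finset V7) (y : V7) : ((P1 A y).card : ZMod 2) = y ⬝ᵥ ∑ a ∈ A, a := by
  rw [dotProduct_sum]
  unfold P1
  rw [Finset.card_filter]
  push_cast
  refine Finset.sum_congr rfl fun a _ => ?_
  rcases zmod2_cases (y ⬝ᵥ a) with h | h <;> simp [h]

lemma P1_even (A : Finset V7) (y : V7) (h : y ⬝ᵥ ∑ a ∈ A, a = 0) : 2 ∣ (P1 A y).card := by
  rw [← card_P1_mod] at h
  exact (ZMod.natCast_eq_zero_iff _ _).mp h

lemma P1_odd (A : Finset V7) (y : V7) (h : y ⬝ᵥ ∑ a ∈ A, a ≠ 0) : ¬ 2 ∣ (P1 A y).card := by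
  rw [← card_P1_mod] at h
  exact fun h' => h ((ZMod.natCast_eq_zero_iff _ _).mpr h')

lemma card_dot_one {y : V7} (hy : y ≠ 0) : (univ.filter fun v : V7 => y ⬝ᵥ v = 1).card = 64 := by
  have h1 := card_parts univ y
  have h2 := vv_parts univ y
  have h3 : vv univ y = 0 := by
    unfold vv
    simp_rw [chi_comm y]
    rw [sum_chi, if_neg hy]
  have h4 : (univ : Finset V7).card = 128 := by rw [Finset.card_univ, card_V7]
  have h5 : (univ.filter fun v : V7 => y ⬝ᵥ v = 1) = P1 univ y := rfl
  rw [h5]; omega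


/-- odd-weight words of length 6, as a bit mask -/
def FULL : ℕ := 7608434000728254870

def nbm (z : ℕ) : ℕ :=
  (1 <<< (z ^^^ 1)) ||| (1 <<< (z ^^^ 2)) ||| (1 <<< (z ^^^ 4)) ||| (1 <<< (z ^^^ 8)) |||
    (1 <<< (z ^^^ 16)) ||| (1 <<< (z ^^^ 32))

def fbm (b : Bool) (z : ℕ) : ℕ :=
  if b then (1 <<< (z ^^^ 3)) ||| (1 <<< (z ^^^ 5)) ||| (1 <<< (z ^^^ 9)) ||| (1 <<< (z ^^^ 17)) |||
    (1 <<< (z ^^^ 33)) else 0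

def srch (b : Bool) : ℕ → ℕ → ℕ → Bool
  | 0, rem, _ => rem == 0
  | k + 1, rem, forb => rem == 0 ||
      [1, 2, 4, 8, 16, 32].any fun e =>
        (!(forb.testBit (rem.log2 ^^^ e))) &&
          srch b k (rem ^^^ (rem &&& nbm (rem.log2 ^^^ e))) (forb ||| fbm b (rem.log2 ^^^ e))

lemma srch_A : srch false 5 (FULL ^^^ (FULL &&& nbm 0)) (fbm false 0) = false := by
  decide +kernel

lemma srch_B : srch true 6 (FULL ^^^ (FULL &&& nbm 0)) (fbm true 0) = false := by
  decide +kernel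

lemma testBit_one_shl (a n : ℕ) : (1 <<< a).testBit n = decide (n = a) := by
  rw [Nat.one_shiftLeft, Nat.testBit_two_pow]
  simp [eq_comm]

lemma nbm_testBit (z e : ℕ) (he : e ∈ [1, 2, 4, 8, 16, 32]) : (nbm z).testBit (z ^^^ e) = true := by
  simp only [nbm, Nat.testBit_or, testBit_one_shl]
  simp only [List.mem_cons, List.not_mem_nil, or_false] at he
  rcases he with rfl | rfl | rfl | rfl | rfl | rfl <;> simp

lemma srch_sound (b : Bool) (Z : Finset ℕ)
    (hcov : ∀ o, FULL.testBit o = true → ∃ e ∈ [1, 2, 4, 8, 16, 32], o ^^^ e ∈ Z)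
    (hfb : ∀ z ∈ Z, ∀ z' ∈ Z, (fbm b z).testBit z' = false) :
    ∀ (k rem forb : ℕ) (C : Finset ℕ), C ⊆ Z → Z.card ≤ C.card + k →
      (∀ o, rem.testBit o = true → FULL.testBit o = true) →
      (∀ z ∈ C, ∀ e ∈ [1, 2, 4, 8, 16, 32], rem.testBit (z ^^^ e) = false) →
      (∀ z ∈ Z, forb.testBit z = false) → srch b k rem forb = true := by
  intro k
  induction k with
  | zero =>
    intro rem forb C hC hk h1 h2 h3
    by_contra hne
    have hr : rem ≠ 0 := by simpa [srch] using hne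
    obtain ⟨e, he, hz⟩ := hcov _ (h1 _ (Nat.testBit_log2 hr))
    have : C = Z := Finset.eq_of_subset_of_card_le hC (by omega)
    rw [← this] at hz
    have := h2 _ hz e he
    rw [Nat.xor_assoc, Nat.xor_self, Nat.xor_zero, Nat.testBit_log2 hr] at this
    exact absurd this (by simp)
  | succ k ih =>
    intro rem forb C hC hk h1 h2 h3
    by_cases hr : rem = 0
    · simp [srch, hr]
    obtain ⟨e, he, hz⟩ := hcov _ (h1 _ (Nat.testBit_log2 hr))
    have hzC : rem.log2 ^^^ e ∉ C := by
      intro hz'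
      have := h2 _ hz' e he
      rw [Nat.xor_assoc, Nat.xor_self, Nat.xor_zero, Nat.testBit_log2 hr] at this
      exact absurd this (by simp)
    unfold srch
    rw [Bool.or_eq_true]
    right
    rw [List.any_eq_true]
    refine ⟨e, he, ?_⟩
    rw [Bool.and_eq_true]
    refine ⟨by rw [h3 _ hz]; rfl, ?_⟩
    refine ih _ _ (insert (rem.log2 ^^^ e) C) (Finset.insert_subset hz hC) ?_ ?_ ?_ ?_
    · rw [Finset.card_insert_of_notMem hzC]; omega
    · intro o ho
      apply h1
      rw [Nat.testBit_xor, Nat.testBit_and] at ho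
      revert ho
      cases rem.testBit o <;> simp
    · intro z hz' e' he'
      rw [Nat.testBit_xor, Nat.testBit_and]
      rcases Finset.mem_insert.mp hz' with rfl | hz'
      · rw [nbm_testBit _ _ he']; simp
      · rw [h2 z hz' e' he']; simp
    · intro z hz'
      rw [Nat.testBit_or, h3 z hz', hfb _ hz z hz']; rfl

lemma no_cover (b : Bool) (Z : Finset ℕ) (h0 : 0 ∈ Z)
    (hcov : ∀ o, FULL.testBit o = true → ∃ e ∈ [1, 2, 4, 8, 16, 32], o ^^^ e ∈ Z)
    (hfb : ∀ z ∈ Z, ∀ z' ∈ Z, (fbm b z).testBit z' = false)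
    (hc : Z.card ≤ if b then 7 else 6) : False := by
  have key : srch b (if b then 6 else 5) (FULL ^^^ (FULL &&& nbm 0)) (fbm b 0) = true := by
    refine srch_sound b Z hcov hfb _ _ _ {0} (by simpa using h0) ?_ ?_ ?_ ?_
    · cases b <;> simp at hc ⊢ <;> omega
    · intro o ho
      rw [Nat.testBit_xor, Nat.testBit_and] at ho
      revert ho
      cases FULL.testBit o <;> simp
    · intro z hz e he
      rw [Finset.mem_singleton] at hz
      subst hz
      rw [Nat.testBit_xor, Nat.testBit_and, nbm_testBit _ _ he]; simp
    · intro z hz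
      exact hfb 0 h0 z hz
  cases b
  · simp only [Bool.false_eq_true, if_false] at key
    rw [srch_A] at key; exact absurd key (by simp)
  · simp only [if_true] at key
    rw [srch_B] at key; exact absurd key (by simp)


/-- the covering situation -/
structure Cov (y : V7) (X Y : Finset V7) : Prop where
  hX : ∀ x ∈ X, y ⬝ᵥ x = 1
  hY : ∀ z ∈ Y, y ⬝ᵥ z = 0
  cov : ∀ v, y ⬝ᵥ v = 1 → ∃ x ∈ X, ∃ z ∈ Y, x + z = v

lemma Cov.mul_le {y : V7} {X Y : Finset V7} (h : Cov y X Y) (hy : y ≠ 0) :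
    64 ≤ X.card * Y.card := by
  rw [← card_dot_one hy, ← Finset.card_product]
  refine le_trans (Finset.card_le_card ?_) (Finset.card_image_le (f := fun p : V7 × V7 => p.1 + p.2))
  intro v hv
  obtain ⟨x, hx, z, hz, hxz⟩ := h.cov v (mem_filter.mp hv).2
  exact mem_image.mpr ⟨(x, z), mem_product.mpr ⟨hx, hz⟩, hxz⟩

open Classical in
/-- odd part of a subspace -/
noncomputable def LO (y : V7) (L : Submodule (ZMod 2) V7) : Finset V7 :=
  univ.filter fun v => v ∈ L ∧ y ⬝ᵥ v = 1

open Classical in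
lemma two_mul_LO {y x : V7} {L : Submodule (ZMod 2) V7} (hx : x ∈ L) (hyx : y ⬝ᵥ x = 1) :
    2 * (LO y L).card = Nat.card L := by
  have h1 : Nat.card L = (univ.filter fun v : V7 => v ∈ L).card := by
    rw [Nat.card_eq_fintype_card, Fintype.card_subtype]
  rw [h1, ← Finset.card_filter_add_card_filter_not (s := univ.filter fun v : V7 => v ∈ L)
    (fun a => y ⬝ᵥ a = 1), Finset.filter_filter, Finset.filter_filter, two_mul]
  congr 1
  refine Finset.card_bij (fun v _ => v + x) ?_ ?_ ?_
  · intro a ha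
    simp only [LO, mem_filter, mem_univ, true_and] at ha ⊢
    refine ⟨L.add_mem ha.1 hx, ?_⟩
    rw [dotProduct_add, ha.2, hyx]; decide
  · intro a _ b _ hab; exact add_right_cancel hab
  · intro b hb
    simp only [LO, mem_filter, mem_univ, true_and] at hb ⊢
    refine ⟨b + x, ⟨L.add_mem hb.1 hx, ?_⟩, by rw [add_assoc, add_self', add_zero]⟩
    rcases zmod2_cases (y ⬝ᵥ b) with h | h
    · rw [dotProduct_add, h, hyx]; decide
    · exact absurd h hb.2

open Classical in
/-- the part of Y in a coset -/
noncomputable def YC (L : Submodule (ZMod 2) V7) (Y : Finset V7) (c : V7 ⧸ L) : Finset V7 :=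
  Y.filter fun z => L.mkQ z = c

lemma Cov.coset {y : V7} {X Y : Finset V7} (h : Cov y X Y) {L : Submodule (ZMod 2) V7}
    (hL : ∀ x ∈ X, x ∈ L) {v0 : V7} (hv0 : y ⬝ᵥ v0 = 0) {o : V7} (ho : o ∈ LO y L) :
    ∃ x ∈ X, ∃ z ∈ YC L Y (L.mkQ v0), o = x + (z + v0) := by
  simp only [LO, mem_filter, mem_univ, true_and] at ho
  obtain ⟨x, hx, z, hz, hxz⟩ := h.cov (v0 + o) (by rw [dotProduct_add, hv0, ho.2, zero_add])
  have e : o = x + (z + v0) := by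
    rw [← add_assoc, hxz, add_comm v0, add_assoc, add_self', add_zero]
  refine ⟨x, hx, z, ?_, e⟩
  simp only [YC, mem_filter]
  refine ⟨hz, ?_⟩
  have e2 : z = v0 + (o + x) := by
    rw [← add_assoc, ← hxz, add_comm x, add_assoc, add_self', add_zero]
  rw [e2, map_add]
  have : L.mkQ (o + x) = 0 := by
    rw [Submodule.mkQ_apply, Submodule.Quotient.mk_eq_zero]
    exact L.add_mem ho.1 (hL x hx)
  rw [this, add_zero]

lemma exists_rep {y x : V7} {L : Submodule (ZMod 2) V7} (hx : x ∈ L) (hyx : y ⬝ᵥ x = 1)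
    (c : V7 ⧸ L) : ∃ v0, L.mkQ v0 = c ∧ y ⬝ᵥ v0 = 0 := by
  obtain ⟨v, rfl⟩ := L.mkQ_surjective c
  rcases zmod2_cases (y ⬝ᵥ v) with h | h
  · exact ⟨v, rfl, h⟩
  · refine ⟨v + x, ?_, by rw [dotProduct_add, h, hyx]; decide⟩
    rw [map_add]
    have : L.mkQ x = 0 := by
      rw [Submodule.mkQ_apply, Submodule.Quotient.mk_eq_zero]; exact hx
    rw [this, add_zero]

lemma Cov.coset_card {y : V7} {X Y : Finset V7} (h : Cov y X Y) {L : Submodule (ZMod 2) V7}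
    (hL : ∀ x ∈ X, x ∈ L) (hX : X.Nonempty) (c : V7 ⧸ L) :
    (LO y L).card ≤ X.card * (YC L Y c).card := by
  obtain ⟨x, hx⟩ := hX
  obtain ⟨v0, rfl, hv0⟩ := exists_rep (hL x hx) (h.hX x hx) c
  rw [← Finset.card_product]
  refine le_trans (Finset.card_le_card ?_)
    (Finset.card_image_le (f := fun p : V7 × V7 => p.1 + (p.2 + v0)))
  intro o ho
  obtain ⟨x, hx, z, hz, e⟩ := h.coset hL hv0 ho
  exact mem_image.mpr ⟨(x, z), mem_product.mpr ⟨hx, hz⟩, e.symm⟩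

open Classical in
lemma sum_cosets (L : Submodule (ZMod 2) V7) (Y : Finset V7) (k : ℕ)
    (h : ∀ c, k ≤ (YC L Y c).card) : k * Nat.card (V7 ⧸ L) ≤ Y.card := by
  rw [Finset.card_eq_sum_card_fiberwise (f := L.mkQ) (t := univ) (fun _ _ => by simp)]
  rw [Nat.card_eq_fintype_card, mul_comm, ← smul_eq_mul, ← Finset.card_univ]
  exact Finset.card_nsmul_le_sum _ _ _ fun c _ => h c

lemma card_quot (L : Submodule (ZMod 2) V7) : Nat.card (V7 ⧸ L) * Nat.card L = 128 := by
  have h := Submodule.card_eq_card_quotient_mul_card L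
  rw [Nat.card_eq_fintype_card, card_V7] at h
  rw [h]; ring

lemma id3 : ∀ a b c : ZMod 2, a + b + c + a + a = a + b + c := by decide
lemma id3b : ∀ a b c : ZMod 2, a + b + c + a + b = c := by decide
lemma id3c : ∀ a b c : ZMod 2, a + b + c + a + c = b := by decide
lemma id3d : ∀ a b c : ZMod 2, a + b + c + b + a = c := by decide
lemma id3e : ∀ a b c : ZMod 2, a + b + c + b + b = a + b + c := by decide
lemma id3f : ∀ a b c : ZMod 2, a + b + c + b + c = a := by decide
lemma id3g : ∀ a b c : ZMod 2, a + b + c + c + a = b := by decide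
lemma id3h : ∀ a b c : ZMod 2, a + b + c + c + b = a := by decide
lemma id3i : ∀ a b c : ZMod 2, a + b + c + c + c = a + b + c := by decide

/-- three translates of a six-set cannot cover sixteen points -/
lemma three_six {y : V7} {X T : Finset V7} {L : Submodule (ZMod 2) V7}
    (hXL : ∀ x ∈ X, x ∈ L ∧ y ⬝ᵥ x = 1) (hTL : ∀ t ∈ T, t ∈ L ∧ y ⬝ᵥ t = 0)
    (hO : (LO y L).card = 16) (hX : X.card = 6) (hT : T.card = 3)
    (hc : ∀ o ∈ LO y L, ∃ x ∈ X, ∃ t ∈ T, o = x + t) : False := by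
  classical
  obtain ⟨t0, t1, t2, h01, h02, h12, rfl⟩ := Finset.card_eq_three.mp hT
  have m0 : t0 ∈ ({t0, t1, t2} : Finset V7) := by simp
  have m1 : t1 ∈ ({t0, t1, t2} : Finset V7) := by simp
  have m2 : t2 ∈ ({t0, t1, t2} : Finset V7) := by simp
  have memO : ∀ v, v ∈ LO y L ↔ v ∈ L ∧ y ⬝ᵥ v = 1 := by simp [LO]
  set Pi : Finset V7 := {t0, t1, t2, t0 + t1 + t2} with hPi
  have key : ∀ o ∈ LO y L, 2 ≤ (X.filter fun x => x + o ∈ Pi).card := by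
    intro o ho
    obtain ⟨x, hx, t, ht, e⟩ := hc o ho
    have ho' : x + (t0 + t1 + t2) ∈ LO y L := by
      rw [memO]
      refine ⟨L.add_mem (hXL x hx).1 (L.add_mem (L.add_mem (hTL _ m0).1 (hTL _ m1).1) (hTL _ m2).1), ?_⟩
      rw [dotProduct_add, dotProduct_add, dotProduct_add, (hXL x hx).2, (hTL _ m0).2, (hTL _ m1).2,
        (hTL _ m2).2]; simp
    obtain ⟨x', hx', t', ht', e'⟩ := hc _ ho'
    have hx'e : x' = x + (t0 + t1 + t2) + t' := (eq_add_iff _ _ _).mp e'.symm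
    have hne : x ≠ x' := by
      intro hh
      rw [hh] at e'
      have e'' : t0 + t1 + t2 = t' := add_left_cancel e'
      simp only [mem_insert, mem_singleton] at ht'
      rcases ht' with rfl | rfl | rfl
      · apply h12
        rw [add_assoc] at e''
        rw [← add_eq_zero']; exact add_eq_left.mp e''
      · apply h02
        rw [add_comm t0, add_assoc] at e''
        rw [← add_eq_zero']; exact add_eq_left.mp e''
      · apply h01
        rw [← add_eq_zero']; exact add_eq_right.mp e''
    have hsub : ({x, x'} : Finset V7) ⊆ X.filter fun x => x + o ∈ Pi := by
      intro z hz
      simp only [mem_insert, mem_singleton] at hz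
      rw [mem_filter]
      rcases hz with rfl | rfl
      · refine ⟨hx, ?_⟩
        rw [e, add_cancel', hPi]
        simp only [mem_insert, mem_singleton] at ht ⊢
        tauto
      · refine ⟨hx', ?_⟩
        have e3 : z + o = t0 + t1 + t2 + t' + t := by
          rw [hx'e, e]
          have := add_self' x
          calc x + (t0 + t1 + t2) + t' + (x + t) = (x + x) + (t0 + t1 + t2 + t' + t) := by abel
            _ = _ := by rw [this, zero_add]
        rw [e3, hPi]
        simp only [mem_insert, mem_singleton] at ht ht' ⊢
        rcases ht' with rfl | rfl | rfl <;> rcases ht with rfl | rfl | rfl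
        · right; right; right; funext i; exact id3 (t i) (t1 i) (t2 i)
        · right; right; left; funext i; exact id3b (t' i) (t i) (t2 i)
        · right; left; funext i; exact id3c (t' i) (t1 i) (t i)
        · right; right; left; funext i; exact id3d (t i) (t' i) (t2 i)
        · right; right; right; funext i; exact id3e (t0 i) (t i) (t2 i)
        · left; funext i; exact id3f (t0 i) (t' i) (t i)
        · right; left; funext i; exact id3g (t i) (t1 i) (t' i)
        · left; funext i; exact id3h (t0 i) (t i) (t' i)
        · right; right; right; funext i; exact id3i (t0 i) (t1 i) (t i)
    have hcc := Finset.card_le_card hsub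
    rw [Finset.card_pair hne] at hcc
    exact hcc
  have h1 : 32 ≤ ∑ o ∈ LO y L, (X.filter fun x => x + o ∈ Pi).card := by
    have := Finset.card_nsmul_le_sum _ _ _ key
    rw [hO] at this; simpa using this
  have h2 : ∑ o ∈ LO y L, (X.filter fun x => x + o ∈ Pi).card
      = ∑ x ∈ X, ((LO y L).filter fun o => x + o ∈ Pi).card :=
    Finset.sum_card_bipartiteAbove_eq_sum_card_bipartiteBelow (fun o x => x + o ∈ Pi)
  have h3 : ∀ x ∈ X, ((LO y L).filter fun o => x + o ∈ Pi).card ≤ 4 := by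
    intro x _
    refine le_trans ?_ (Finset.card_le_four (a := t0) (b := t1) (c := t2) (d := t0 + t1 + t2))
    refine Finset.card_le_card_of_injOn (fun o => x + o) ?_ ?_
    · intro o ho
      exact (mem_filter.mp ho).2
    · intro o _ o' _ h
      exact add_left_cancel h
  have h4 := Finset.sum_le_card_nsmul _ _ _ h3
  rw [hX, smul_eq_mul] at h4
  omega


lemma Cov.dim {y : V7} {X Y : Finset V7} (h : Cov y X Y) (hX : X.Nonempty) :
    ∃ d, d = Module.finrank (ZMod 2) (Submodule.span (ZMod 2) (X : Set V7)) ∧ d ≤ X.card ∧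
      Nat.card (Submodule.span (ZMod 2) (X : Set V7)) = 2 ^ d ∧
      2 * (LO y (Submodule.span (ZMod 2) (X : Set V7))).card = 2 ^ d ∧
      X.card ≤ (LO y (Submodule.span (ZMod 2) (X : Set V7))).card := by
  have hc : Nat.card (Submodule.span (ZMod 2) (X : Set V7)) =
      2 ^ Module.finrank (ZMod 2) (Submodule.span (ZMod 2) (X : Set V7)) := by
    rw [Module.natCard_eq_pow_finrank (K := ZMod 2)]; simp
  obtain ⟨x, hx⟩ := hX
  have hsub : ∀ x ∈ X, x ∈ Submodule.span (ZMod 2) (X : Set V7) :=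
    fun x hx => Submodule.subset_span (Finset.mem_coe.mpr hx)
  refine ⟨_, rfl, finrank_span_finset_le_card X, hc, ?_, ?_⟩
  · rw [← hc]; exact two_mul_LO (hsub x hx) (h.hX x hx)
  · refine Finset.card_le_card fun z hz => ?_
    simp only [LO, mem_filter, mem_univ, true_and]
    exact ⟨hsub z hz, h.hX z hz⟩

lemma core5 {y : V7} {X Y : Finset V7} (h : Cov y X Y) (hX : X.card = 5) : 16 ≤ Y.card := by
  have hne : X.Nonempty := Finset.card_pos.mp (by omega)
  obtain ⟨d, -, hd, hc, hLO, hXL⟩ := h.dim hne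
  have hq := card_quot (Submodule.span (ZMod 2) (X : Set V7))
  have hcos := h.coset_card (fun x hx => Submodule.subset_span (Finset.mem_coe.mpr hx)) hne
  have hs := sum_cosets (Submodule.span (ZMod 2) (X : Set V7)) Y
  rw [hX] at hd hXL hcos
  rw [hc] at hq
  generalize Nat.card (V7 ⧸ Submodule.span (ZMod 2) (X : Set V7)) = q at hq hs
  interval_cases d <;> try omega
  · have := hs 2 (fun c => by have := hcos c; omega)
    omega
  · have := hs 4 (fun c => by have := hcos c; omega)
    omega

lemma core6 {y : V7} {X Y : Finset V7} (h : Cov y X Y) (hX : X.card = 6) (hY : Y.card ≤ 15) :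
    Module.finrank (ZMod 2) (Submodule.span (ZMod 2) (X : Set V7)) = 6 := by
  classical
  have hne : X.Nonempty := Finset.card_pos.mp (by omega)
  have hsub : ∀ x ∈ X, x ∈ Submodule.span (ZMod 2) (X : Set V7) :=
    fun x hx => Submodule.subset_span (Finset.mem_coe.mpr hx)
  obtain ⟨d, hdd, hd, hc, hLO, hXL⟩ := h.dim hne
  have hq := card_quot (Submodule.span (ZMod 2) (X : Set V7))
  have hcos := h.coset_card hsub hne
  have hs := sum_cosets (Submodule.span (ZMod 2) (X : Set V7)) Y
  rw [← hdd]
  rw [hX] at hd hXL hcos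
  rw [hc] at hq
  generalize Nat.card (V7 ⧸ Submodule.span (ZMod 2) (X : Set V7)) = q at hq hs
  interval_cases d <;> try omega
  · have := hs 2 (fun c => by have := hcos c; omega)
    omega
  · have h3 : ∀ c, (YC (Submodule.span (ZMod 2) (X : Set V7)) Y c).card ≠ 3 := by
      intro c hc3
      obtain ⟨x, hx⟩ := hne
      obtain ⟨v0, rfl, hv0⟩ := exists_rep (hsub x hx) (h.hX x hx) c
      refine three_six (y := y) (X := X) (L := Submodule.span (ZMod 2) (X : Set V7))
        (T := (YC (Submodule.span (ZMod 2) (X : Set V7)) Y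
          ((Submodule.span (ZMod 2) (X : Set V7)).mkQ v0)).image (fun z => z + v0))
        (fun x hx => ⟨hsub x hx, h.hX x hx⟩) ?_ (by omega) hX ?_ ?_
      · intro t ht
        obtain ⟨z, hz, rfl⟩ := mem_image.mp ht
        simp only [YC, mem_filter] at hz
        refine ⟨?_, by rw [dotProduct_add, h.hY z hz.1, hv0, add_zero]⟩
        rw [← Submodule.Quotient.mk_eq_zero, ← Submodule.mkQ_apply, map_add, hz.2, ← map_add,
          add_self', map_zero]
      · rw [Finset.card_image_of_injective _ (add_left_injective v0)]; exact hc3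
      · intro o ho
        obtain ⟨x, hx, z, hz, e⟩ := h.coset hsub hv0 ho
        exact ⟨x, hx, _, mem_image_of_mem _ hz, e⟩
    have := hs 4 (fun c => by have := hcos c; have := h3 c; omega)
    omega

/-- binary combination -/
def phi (x : Fin 6 → V7) (n : ℕ) : V7 := ∑ i : Fin 6, if n.testBit i then x i else 0

lemma phi_xor (x : Fin 6 → V7) (n m : ℕ) : phi x (n ^^^ m) = phi x n + phi x m := by
  unfold phi
  rw [← Finset.sum_add_distrib]
  refine Finset.sum_congr rfl fun i _ => ?_
  rw [Nat.testBit_xor]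
  cases n.testBit i <;> cases m.testBit i <;> simp [add_self']

lemma phi_zero (x : Fin 6 → V7) : phi x 0 = 0 := by simp [phi]

lemma phi_pow (x : Fin 6 → V7) (i : Fin 6) : phi x (2 ^ (i : ℕ)) = x i := by
  unfold phi
  rw [Finset.sum_eq_single i]
  · simp
  · intro j _ hj
    rw [Nat.testBit_two_pow, if_neg]
    simp only [decide_eq_true_eq]
    exact fun h => hj (Fin.ext h.symm)
  · simp

lemma phi_inj {x : Fin 6 → V7} (hx : LinearIndependent (ZMod 2) x) {n m : ℕ} (hn : n < 64)
    (hm : m < 64) (h : phi x n = phi x m) : n = m := by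
  have h0 : phi x (n ^^^ m) = 0 := by rw [phi_xor, h, add_self']
  have hlt : n ^^^ m < 2 ^ 6 := Nat.xor_lt_two_pow (by omega) (by omega)
  rw [Fintype.linearIndependent_iff] at hx
  have h1 := hx (fun i => if (n ^^^ m).testBit i then 1 else 0) (by
    rw [← h0]; unfold phi
    refine Finset.sum_congr rfl fun i _ => ?_
    split_ifs <;> simp)
  have h2 : n ^^^ m = 0 := by
    apply Nat.eq_of_testBit_eq
    intro i
    rw [Nat.zero_testBit]
    by_cases hi : i < 6
    · have := h1 ⟨i, hi⟩
      simp only at this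
      by_contra hcon
      rw [Bool.not_eq_false] at hcon
      rw [if_pos hcon] at this
      exact one_ne_zero this
    · exact Nat.testBit_lt_two_pow (lt_of_lt_of_le hlt (Nat.pow_le_pow_right (by norm_num) (by omega)))
  exact Nat.xor_eq_zero_iff.mp h2

lemma FULL_odd : ∀ o < 64, FULL.testBit o = true →
    (∑ i : Fin 6, if o.testBit i then (1 : ZMod 2) else 0) = 1 := by decide +kernel

lemma FULL_lt {o : ℕ} (h : FULL.testBit o = true) : o < 64 := by
  by_contra hh
  rw [Nat.testBit_lt_two_pow] at h
  · cases h
  · exact lt_of_lt_of_le (b := 2 ^ 64) (by unfold FULL; norm_num)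
      (Nat.pow_le_pow_right (by norm_num) (by omega))

lemma phi_odd {y : V7} {x : Fin 6 → V7} (hx : ∀ i, y ⬝ᵥ x i = 1) {o : ℕ}
    (h : FULL.testBit o = true) : y ⬝ᵥ phi x o = 1 := by
  rw [← FULL_odd o (FULL_lt h) h]
  unfold phi
  rw [dotProduct_sum]
  refine Finset.sum_congr rfl fun i _ => ?_
  split_ifs <;> simp [hx]

lemma search {y : V7} {X Y : Finset V7} (h : Cov y X Y) (hX : X.card = 6)
    (hd : Module.finrank (ZMod 2) (Submodule.span (ZMod 2) (X : Set V7)) = 6) (b : Bool)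
    {t : V7} (ht : t ∈ X)
    (hb : b = true → ∀ z ∈ Y, ∀ z' ∈ Y, ∀ x ∈ X, x ≠ t → z + z' ≠ t + x)
    (hc : Y.card ≤ if b then 15 else 13) : False := by
  classical
  have hne : X.Nonempty := ⟨t, ht⟩
  have hsub : ∀ x ∈ X, x ∈ Submodule.span (ZMod 2) (X : Set V7) :=
    fun x hx => Submodule.subset_span (Finset.mem_coe.mpr hx)
  -- enumeration
  obtain ⟨x, hxX, hxs, hx0, hli⟩ : ∃ x : Fin 6 → V7, (∀ i, x i ∈ X) ∧ (∀ v ∈ X, ∃ i, x i = v) ∧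
      x 0 = t ∧ LinearIndependent (ZMod 2) x := by
    let e0 : Fin 6 ≃ X := (X.equivFinOfCardEq hX).symm
    let e : Fin 6 ≃ X := (Equiv.swap 0 (e0.symm ⟨t, ht⟩)).trans e0
    have hs : ∀ v ∈ X, ∃ i, (e i : V7) = v := fun v hv => ⟨e.symm ⟨v, hv⟩, by simp⟩
    refine ⟨fun i => (e i : V7), fun i => (e i).2, hs, ?_, ?_⟩
    · simp [e]
    · rw [linearIndependent_iff_card_eq_finrank_span]
      have : Set.range (fun i => (e i : V7)) = (X : Set V7) := by
        ext v
        constructor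
        · rintro ⟨i, rfl⟩; exact (e i).2
        · intro hv; exact hs v hv
      rw [this, Set.finrank, hd]; simp
  have hinj := hli.injective
  obtain ⟨d, hdd, -, hcL, hLO, -⟩ := h.dim hne
  rw [hd] at hdd
  subst hdd
  have hq := card_quot (Submodule.span (ZMod 2) (X : Set V7))
  rw [hcL] at hq
  -- small coset
  obtain ⟨c, hcc⟩ : ∃ c, (YC (Submodule.span (ZMod 2) (X : Set V7)) Y c).card ≤
      if b then 7 else 6 := by
    by_contra hcon
    push Not at hcon
    have := sum_cosets _ Y ((if b then 7 else 6) + 1) hcon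
    generalize Nat.card (V7 ⧸ Submodule.span (ZMod 2) (X : Set V7)) = q at hq this
    cases b <;> simp at this hc <;> omega
  have hpos : (YC (Submodule.span (ZMod 2) (X : Set V7)) Y c).card ≠ 0 := by
    intro h0
    have := h.coset_card hsub hne c
    rw [h0] at this; omega
  obtain ⟨z0, hz0⟩ := Finset.card_pos.mp (Nat.pos_of_ne_zero hpos)
  simp only [YC, mem_filter] at hz0
  have hphiL : ∀ n, phi x n ∈ Submodule.span (ZMod 2) (X : Set V7) := by
    intro n
    refine Submodule.sum_mem _ fun i _ => ?_
    split_ifs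
    · exact hsub _ (hxX i)
    · exact Submodule.zero_mem _
  refine no_cover b ((range 64).filter fun n => phi x n + z0 ∈ Y) ?_ ?_ ?_ ?_
  · simp [phi_zero, hz0.1]
  · intro o ho
    have hov : y ⬝ᵥ (phi x o + z0) = 1 := by
      rw [dotProduct_add, phi_odd (fun i => h.hX _ (hxX i)) ho, h.hY _ hz0.1, add_zero]
    obtain ⟨v, hv, z, hz, e⟩ := h.cov _ hov
    obtain ⟨i, rfl⟩ := hxs v hv
    refine ⟨2 ^ (i : ℕ), by fin_cases i <;> simp, ?_⟩
    rw [mem_filter, mem_range]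
    refine ⟨Nat.xor_lt_two_pow (n := 6) (FULL_lt ho) (Nat.pow_lt_pow_right (by norm_num) i.2), ?_⟩
    rw [phi_xor, phi_pow, add_right_comm, ← e, add_comm, add_cancel']
    exact hz
  · intro n hn m hm
    cases b with
    | false => simp [fbm]
    | true =>
      rw [mem_filter] at hn hm
      have key : ∀ i : Fin 6, i ≠ 0 → m ≠ n ^^^ (2 ^ ((0 : Fin 6) : ℕ) ^^^ 2 ^ (i : ℕ)) := by
        intro i hi hmn
        refine hb rfl _ hn.2 _ hm.2 (x i) (hxX i) (fun hh => hi (hinj (hh.trans hx0.symm))) ?_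
        rw [hmn, phi_xor, phi_xor, phi_pow, phi_pow, hx0]
        calc phi x n + z0 + (phi x n + (t + x i) + z0)
            = (phi x n + phi x n) + (z0 + z0) + (t + x i) := by abel
          _ = _ := by rw [add_self', add_self', zero_add, zero_add]
      have k1 := key 1 (by decide)
      have k2 := key 2 (by decide)
      have k3 := key 3 (by decide)
      have k4 := key 4 (by decide)
      have k5 := key 5 (by decide)
      simp only [fbm, if_true, Nat.testBit_or, testBit_one_shl, Bool.or_eq_false_iff,
        decide_eq_false_iff_not]
      exact ⟨⟨⟨⟨k1, k2⟩, k3⟩, k4⟩, k5⟩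
  · refine le_trans ?_ hcc
    refine Finset.card_le_card_of_injOn (fun n => phi x n + z0) ?_ ?_
    · intro n hn
      have hn := mem_filter.mp (Finset.mem_coe.mp hn)
      simp only [YC, Finset.coe_filter, Set.mem_ofPred_eq]
      refine ⟨hn.2, ?_⟩
      rw [map_add, hz0.2]
      have : (Submodule.span (ZMod 2) (X : Set V7)).mkQ (phi x n) = 0 := by
        rw [Submodule.mkQ_apply, Submodule.Quotient.mk_eq_zero]; exact hphiL n
      rw [this, zero_add]
    · intro n hn m hm hnm
      have hn := mem_filter.mp (Finset.mem_coe.mp hn)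
      have hm := mem_filter.mp (Finset.mem_coe.mp hm)
      exact phi_inj hli (mem_range.mp hn.1) (mem_range.mp hm.1) (add_right_cancel hnm)


/-- every vector is a sum of two elements -/
def Full2 (A : Finset V7) : Prop := ∀ v, ∃ a ∈ A, ∃ b ∈ A, a + b = v

lemma mem_P0 {A : Finset V7} {y a : V7} : a ∈ P0 A y ↔ a ∈ A ∧ y ⬝ᵥ a = 0 := by simp [P0]
lemma mem_P1 {A : Finset V7} {y a : V7} : a ∈ P1 A y ↔ a ∈ A ∧ y ⬝ᵥ a = 1 := by simp [P1]

lemma cov_P1 {A : Finset V7} (hA : Full2 A) (y : V7) : Cov y (P1 A y) (P0 A y) := by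
  refine ⟨fun x hx => (mem_P1.mp hx).2, fun x hx => (mem_P0.mp hx).2, fun v hv => ?_⟩
  obtain ⟨a, ha, b, hb, rfl⟩ := hA v
  rw [dotProduct_add] at hv
  rcases zmod2_cases (y ⬝ᵥ a) with h | h <;> rcases zmod2_cases (y ⬝ᵥ b) with h' | h'
  · rw [h, h'] at hv; exact absurd hv (by decide)
  · exact ⟨b, mem_P1.mpr ⟨hb, h'⟩, a, mem_P0.mpr ⟨ha, h⟩, add_comm _ _⟩
  · exact ⟨a, mem_P1.mpr ⟨ha, h⟩, b, mem_P0.mpr ⟨hb, h'⟩, rfl⟩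
  · rw [h, h'] at hv; exact absurd hv (by decide)

/-- translate -/
def tr (t : V7) (A : Finset V7) : Finset V7 := A.image fun a => t + a

lemma card_tr (t : V7) (A : Finset V7) : (tr t A).card = A.card :=
  Finset.card_image_of_injective _ (add_right_injective t)

lemma mem_tr {t : V7} {A : Finset V7} {x : V7} : x ∈ tr t A ↔ t + x ∈ A := by
  simp only [tr, mem_image]
  constructor
  · rintro ⟨a, ha, rfl⟩; rwa [add_cancel']
  · intro h; exact ⟨_, h, add_cancel' _ _⟩

lemma cov_P0 {A : Finset V7} (hA : Full2 A) {y t : V7} (ht : y ⬝ᵥ t = 1) :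
    Cov y (tr t (P0 A y)) (tr t (P1 A y)) := by
  refine ⟨fun x hx => ?_, fun x hx => ?_, fun v hv => ?_⟩
  · have := (mem_P0.mp (mem_tr.mp hx)).2
    rw [dotProduct_add, ht] at this
    rcases zmod2_cases (y ⬝ᵥ x) with h | h
    · rw [h] at this; exact absurd this (by decide)
    · exact h
  · have := (mem_P1.mp (mem_tr.mp hx)).2
    rw [dotProduct_add, ht] at this
    rcases zmod2_cases (y ⬝ᵥ x) with h | h
    · exact h
    · rw [h] at this; exact absurd this (by decide)
  · obtain ⟨a, ha, b, hb, e⟩ := (cov_P1 hA y).cov v hv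
    refine ⟨t + b, ?_, t + a, ?_, ?_⟩
    · rw [mem_tr, add_cancel']; exact hb
    · rw [mem_tr, add_cancel']; exact ha
    · rw [← e]
      calc t + b + (t + a) = (t + t) + (a + b) := by abel
        _ = _ := by rw [add_self', zero_add]

lemma Full2_tr {A : Finset V7} (hA : Full2 A) (t : V7) : Full2 (tr t A) := by
  intro v
  obtain ⟨a, ha, b, hb, e⟩ := hA v
  refine ⟨t + a, ?_, t + b, ?_, ?_⟩
  · rw [mem_tr, add_cancel']; exact ha
  · rw [mem_tr, add_cancel']; exact hb
  · rw [← e]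
    calc t + a + (t + b) = (t + t) + (a + b) := by abel
      _ = _ := by rw [add_self', zero_add]

lemma no_small19 {y : V7} (hy : y ≠ 0) {X Y : Finset V7} (h : Cov y X Y)
    (hc : X.card + Y.card = 19) : 7 ≤ X.card := by
  by_contra hcon
  have hm := h.mul_le hy
  have hle : X.card ≤ 6 := by omega
  have hY : Y.card = 19 - X.card := by omega
  rw [hY] at hm
  generalize hn : X.card = n at *
  interval_cases n <;> try omega
  · have := core5 h hn; omega
  · have hd := core6 h hn (by omega)
    obtain ⟨t, ht⟩ := Finset.card_pos.mp (by omega : 0 < X.card)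
    exact search h hn hd false ht (by simp) (by simp; omega)

lemma no19_aux {A : Finset V7} (hA : Full2 A) (hc : A.card = 19) (hs : ∑ a ∈ A, a = 0) : False := by
  have hterm : ∀ y : V7, y ≠ 0 → vv A y ^ 2 + 2 * vv A y - 15 ≤ 0 := by
    intro y hy
    have hp := card_parts A y
    have h1 := no_small19 hy (cov_P1 hA y) (by omega)
    obtain ⟨t, ht⟩ := exists_dot_one hy
    have h0 := no_small19 hy (cov_P0 hA ht) (by rw [card_tr, card_tr]; omega)
    rw [card_tr] at h0
    have hev := P1_even A y (by rw [hs]; simp)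
    have hv := vv_parts A y
    have h3 : vv A y ≤ 3 := by omega
    have h5 : -5 ≤ vv A y := by omega
    nlinarith
  have hsum : ∑ y, (vv A y ^ 2 + 2 * vv A y - 15) ≤ vv A 0 ^ 2 + 2 * vv A 0 - 15 := by
    rw [← Finset.add_sum_erase univ _ (mem_univ (0 : V7))]
    have : ∑ y ∈ univ.erase (0 : V7), (vv A y ^ 2 + 2 * vv A y - 15) ≤ 0 :=
      Finset.sum_nonpos fun y hy => hterm y (Finset.ne_of_mem_erase hy)
    linarith
  have hv0 : vv A 0 = 19 := by simp [vv, hc]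
  have m1 := M1 A 0
  have m2 := M2 A 0
  rw [RR_zero, hc] at m2
  simp only [chi_zero_right, mul_one] at m1 m2
  have m1' : 0 ≤ ∑ y, vv A y := by rw [m1]; split_ifs <;> norm_num
  rw [Finset.sum_sub_distrib, Finset.sum_add_distrib, ← Finset.mul_sum, m2, hv0] at hsum
  simp only [sum_const, card_univ, card_V7] at hsum
  norm_num at hsum
  linarith

lemma no19 {A : Finset V7} (hA : Full2 A) (hc : A.card = 19) : False := by
  refine no19_aux (Full2_tr hA (∑ a ∈ A, a)) (by rw [card_tr, hc]) ?_
  unfold tr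
  rw [Finset.sum_image (fun a _ b _ h => add_left_cancel h), Finset.sum_add_distrib, sum_const, hc]
  have : ∀ s : V7, 19 • s + s = 0 := by
    intro s
    funext i
    have : ∀ a : ZMod 2, 19 • a + a = 0 := by decide
    exact this (s i)
  exact this _

lemma sat_full {S : Set V7} (hS : Saturating S) {A : Finset V7} (h0 : (0 : V7) ∈ A)
    (hSA : ∀ s ∈ S, s ∈ A) : Full2 A := by
  intro v
  by_cases hv : v = 0
  · exact ⟨0, h0, 0, h0, by rw [hv, add_zero]⟩
  by_cases hvS : v ∈ S
  · exact ⟨v, hSA v hvS, 0, h0, add_zero v⟩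
  · obtain ⟨a, ha, b, hb, -, e⟩ := hS.2 v hv hvS
    exact ⟨a, hSA a ha, b, hSA b hb, e.symm⟩

lemma lower_bound (S : Set V7) (hS : Saturating S) : 19 ≤ S.ncard := by
  classical
  by_contra hcon
  have hfin : S.Finite := Set.toFinite S
  rw [Set.ncard_eq_toFinset_card S hfin] at hcon
  have h1 : (insert 0 hfin.toFinset : Finset V7).card ≤ 19 := by
    have := Finset.card_insert_le (0 : V7) hfin.toFinset
    omega
  obtain ⟨A, hA, hc⟩ := Finset.exists_superset_card_eq h1 (by rw [card_V7]; norm_num)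
  refine no19 (sat_full hS (hA (mem_insert_self _ _)) fun s hs => hA ?_) hc
  exact mem_insert_of_mem (hfin.mem_toFinset.mpr hs)


structure Cap20 (A : Finset V7) : Prop where
  full : Full2 A
  card : A.card = 20
  zero : (0 : V7) ∈ A
  cap : ∀ a ∈ A, ∀ b ∈ A, a ≠ 0 → b ≠ 0 → a ≠ b → a + b ∉ A

lemma RR_ge_two {A : Finset V7} (hA : Full2 A) {x : V7} (hx : x ≠ 0) : 2 ≤ RR A x := by
  obtain ⟨a, ha, b, hb, e⟩ := hA x
  have hab : a ≠ b := fun h => hx (by rw [← e, h, add_self'])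
  have hsub : ({(a, b), (b, a)} : Finset (V7 × V7)) ⊆ (A ×ˢ A).filter fun p => p.1 + p.2 = x := by
    intro p hp
    simp only [mem_insert, mem_singleton] at hp
    rcases hp with rfl | rfl
    · simp [ha, hb, e]
    · simp [ha, hb, add_comm b a, e]
  have := Finset.card_le_card hsub
  rw [Finset.card_pair (fun h => hab (Prod.mk.inj h).1)] at this
  exact this

lemma Cap20.RR_two {A : Finset V7} (h : Cap20 A) {s : V7} (hs : s ∈ A) (hs0 : s ≠ 0) :
    RR A s = 2 := by
  refine le_antisymm ?_ (RR_ge_two h.full hs0)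
  have hsub : ((A ×ˢ A).filter fun p => p.1 + p.2 = s) ⊆ ({(0, s), (s, 0)} : Finset (V7 × V7)) := by
    rintro ⟨a, b⟩ hp
    simp only [mem_filter, mem_product] at hp
    obtain ⟨⟨ha, hb⟩, e⟩ := hp
    simp only [mem_insert, mem_singleton, Prod.mk.injEq]
    by_cases ha0 : a = 0
    · left; refine ⟨ha0, ?_⟩; rw [← e, ha0, zero_add]
    by_cases hb0 : b = 0
    · right; refine ⟨?_, hb0⟩; rw [← e, hb0, add_zero]
    exfalso
    refine h.cap a ha b hb ha0 hb0 ?_ (e ▸ hs)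
    intro hab; apply hs0; rw [← e, hab, add_self']
  exact le_trans (Finset.card_le_card hsub) Finset.card_le_two

lemma Cap20.vv_eq {A : Finset V7} (h : Cap20 A) (y : V7) :
    vv A y = 20 - 2 * ((P1 A y).card : ℤ) := by
  have h1 := card_parts A y
  have h2 := vv_parts A y
  have := h.card
  omega

lemma Cap20.vv_zero {A : Finset V7} (h : Cap20 A) : vv A 0 = 20 := by simp [vv, h.card]

lemma Cap20.m1 {A : Finset V7} (h : Cap20 A) : ∑ y, vv A y = 128 := by
  have := M1 A 0
  simpa [h.zero] using this

lemma Cap20.m2 {A : Finset V7} (h : Cap20 A) : ∑ y, vv A y ^ 2 = 2560 := by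
  have := M2 A 0
  rw [RR_zero, h.card] at this
  simpa using this

lemma Cap20.m3 {A : Finset V7} (h : Cap20 A) : ∑ y, vv A y ^ 3 = 7424 := by
  rw [M3, ← Finset.add_sum_erase A _ h.zero, RR_zero, h.card]
  rw [Finset.sum_congr rfl (g := fun _ => (2 : ℤ))]
  · rw [sum_const, Finset.card_erase_of_mem h.zero, h.card]; norm_num
  · intro a ha
    rw [h.RR_two (Finset.mem_of_mem_erase ha) (Finset.ne_of_mem_erase ha)]; norm_num

lemma four_poly (k : ℤ) : 0 ≤ (4 * k) ^ 4 - 80 * (4 * k) ^ 2 + 1024 := by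
  have h : 0 ≤ (k ^ 2 - 1) * (k ^ 2 - 4) := by
    by_cases h1 : k ^ 2 ≤ 1
    · nlinarith
    · have h2 : 4 ≤ k ^ 2 := by
        by_contra h3
        have a1 : k < 2 := by nlinarith
        have a2 : -2 < k := by nlinarith
        interval_cases k <;> simp at h1
      nlinarith
  nlinarith

lemma Cap20.no4 {A : Finset V7} (h : Cap20 A) {y : V7} (hy : y ≠ 0) (h4 : (P0 A y).card = 4) :
    False := by
  classical
  have hG : (P1 A y).card = 16 := by have := card_parts A y; have := h.card; omega
  have h0 : (0 : V7) ∈ P0 A y := mem_P0.mpr ⟨h.zero, by simp⟩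
  have he : ((P0 A y).erase 0).card = 3 := by rw [Finset.card_erase_of_mem h0, h4]
  obtain ⟨s1, s2, s3, h12, h13, h23, hset⟩ := Finset.card_eq_three.mp he
  have hmem : ∀ p, p ∈ P0 A y ↔ p = 0 ∨ p = s1 ∨ p = s2 ∨ p = s3 := by
    intro p
    rw [← Finset.insert_erase h0, hset]; simp
  have ne1 : s1 ≠ 0 := by
    have : s1 ∈ (P0 A y).erase 0 := by rw [hset]; simp
    exact Finset.ne_of_mem_erase this
  have ne2 : s2 ≠ 0 := by
    have : s2 ∈ (P0 A y).erase 0 := by rw [hset]; simp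
    exact Finset.ne_of_mem_erase this
  have ne3 : s3 ≠ 0 := by
    have : s3 ∈ (P0 A y).erase 0 := by rw [hset]; simp
    exact Finset.ne_of_mem_erase this
  have p1 : s1 ∈ P0 A y := by rw [hmem]; simp
  have p2 : s2 ∈ P0 A y := by rw [hmem]; simp
  have p3 : s3 ∈ P0 A y := by rw [hmem]; simp
  -- uniqueness
  have huniq : ∀ p ∈ P0 A y, ∀ g ∈ P1 A y, ∀ p' ∈ P0 A y, ∀ g' ∈ P1 A y, p + g = p' + g' → p = p' := by
    have hinj : Set.InjOn (fun q : V7 × V7 => q.1 + q.2) ((P0 A y ×ˢ P1 A y : Finset (V7 × V7)) : Set (V7 × V7)) := by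
      rw [← Finset.card_image_iff]
      apply le_antisymm Finset.card_image_le
      rw [Finset.card_product, h4, hG]
      refine le_trans (le_of_eq (card_dot_one hy).symm) (Finset.card_le_card ?_)
      intro v hv
      obtain ⟨a, ha, b, hb, e⟩ := (cov_P1 h.full y).cov v (mem_filter.mp hv).2
      exact mem_image.mpr ⟨(b, a), mem_product.mpr ⟨hb, ha⟩, by rw [← e]; exact add_comm _ _⟩
    intro p hp g hg p' hp' g' hg' e
    have := hinj (Finset.mem_coe.mpr (mem_product.mpr ⟨hp, hg⟩ : (p, g) ∈ _))
      (Finset.mem_coe.mpr (mem_product.mpr ⟨hp', hg'⟩ : (p', g') ∈ _)) e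
    exact (Prod.mk.inj this).1
  obtain ⟨τ, hτ⟩ : ∃ τ, τ = s1 + s2 + s3 := ⟨_, rfl⟩
  have hτ0 : τ ≠ 0 := by
    intro hh
    rw [hτ, add_eq_zero'] at hh
    exact h.cap s1 (mem_P0.mp p1).1 s2 (mem_P0.mp p2).1 ne1 ne2 h12 (hh ▸ (mem_P0.mp p3).1)
  have hyτ : y ⬝ᵥ τ = 0 := by
    rw [hτ, dotProduct_add, dotProduct_add, (mem_P0.mp p1).2, (mem_P0.mp p2).2, (mem_P0.mp p3).2]; simp
  have hGτ : ∀ g ∈ P1 A y, g + τ ∈ P1 A y := by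
    intro g hg
    obtain ⟨g', hg', p, hp, e⟩ := (cov_P1 h.full y).cov (g + τ)
      (by rw [dotProduct_add, (mem_P1.mp hg).2, hyτ, add_zero])
    rcases (hmem p).mp hp with rfl | rfl | rfl | rfl
    · rw [← e, add_zero]; exact hg'
    · exfalso
      refine h23 (huniq s2 p2 g hg s3 p3 g' hg' ?_)
      rw [← sub_eq_zero]
      have e' : g' = g + τ + p := (eq_add_iff _ _ _).mp e
      rw [e', hτ]; funext i
      exact (by decide : ∀ a b c d : ZMod 2, b + d - (c + (d + (a + b + c) + a)) = 0) _ _ _ _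
    · exfalso
      refine h13 (huniq s1 p1 g hg s3 p3 g' hg' ?_)
      rw [← sub_eq_zero]
      have e' : g' = g + τ + p := (eq_add_iff _ _ _).mp e
      rw [e', hτ]; funext i
      exact (by decide : ∀ a b c d : ZMod 2, a + d - (c + (d + (a + b + c) + b)) = 0) _ _ _ _
    · exfalso
      refine h12 (huniq s1 p1 g hg s2 p2 g' hg' ?_)
      rw [← sub_eq_zero]
      have e' : g' = g + τ + p := (eq_add_iff _ _ _).mp e
      rw [e', hτ]; funext i
      exact (by decide : ∀ a b c d : ZMod 2, a + d - (b + (d + (a + b + c) + c)) = 0) _ _ _ _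
  have hRRτ : 16 ≤ RR A τ := by
    rw [← hG]
    refine Finset.card_le_card_of_injOn (fun g => (g, g + τ)) ?_ ?_
    · intro g hg
      have hg := Finset.mem_coe.mp hg
      simp only [Finset.coe_filter, mem_product, Set.mem_ofPred_eq]
      exact ⟨⟨(mem_P1.mp hg).1, (mem_P1.mp (hGτ g hg)).1⟩, add_cancel' _ _⟩
    · intro a _ b _ hab; exact (Prod.mk.inj hab).1
  let Exc : Finset V7 := {0, s1, s2, s3, s1 + s2, s1 + s3, s2 + s3, τ}
  let E : Finset V7 := (univ.filter fun v : V7 => y ⬝ᵥ v = 0) \ Exc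
  have hEc : 56 ≤ E.card := by
    have a1 : (univ.filter fun v : V7 => y ⬝ᵥ v = 0).card = 64 := by
      have := card_parts univ y
      have h5 : (P1 univ y).card = 64 := card_dot_one hy
      rw [Finset.card_univ, card_V7] at this
      have h6 : (univ.filter fun v : V7 => y ⬝ᵥ v = 0) = P0 univ y := rfl
      rw [h6]; omega
    have a2 : Exc.card ≤ 8 := (Finset.card_insert_le _ _).trans
      (Nat.succ_le_succ ((Finset.card_insert_le _ _).trans (Nat.succ_le_succ Finset.card_le_six)))
    have a3 := Finset.le_card_sdiff Exc (univ.filter fun v : V7 => y ⬝ᵥ v = 0)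
    have a4 : E.card = ((univ.filter fun v : V7 => y ⬝ᵥ v = 0) \ Exc).card := rfl
    omega
  have hE0 : (0 : V7) ∉ E := by simp [E, Exc]
  have hEτ : τ ∉ E := by simp [E, Exc]
  have hRRE : ∀ x ∈ E, 4 ≤ RR A x := by
    intro x hx
    simp only [E, Exc, mem_sdiff, mem_filter, mem_univ, true_and, mem_insert, mem_singleton, not_or] at hx
    obtain ⟨hyx, x0, x1, x2, x3, x12, x13, x23, xτ⟩ := hx
    obtain ⟨a, ha, b, hb, e⟩ := h.full x
    have hab : y ⬝ᵥ a + y ⬝ᵥ b = 0 := by rw [← dotProduct_add, e, hyx]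
    rcases zmod2_cases (y ⬝ᵥ a) with ya | ya <;> rcases zmod2_cases (y ⬝ᵥ b) with yb | yb
    · exfalso
      have ha' := (hmem a).mp (mem_P0.mpr ⟨ha, ya⟩)
      have hb' := (hmem b).mp (mem_P0.mpr ⟨hb, yb⟩)
      rcases ha' with ha' | ha' | ha' | ha' <;> rcases hb' with hb' | hb' | hb' | hb' <;>
        rw [ha', hb'] at e <;> (try simp only [add_zero, zero_add, add_self'] at e)
      · exact x0 e.symm
      · exact x1 e.symm
      · exact x2 e.symm
      · exact x3 e.symm
      · exact x1 e.symm
      · exact x0 e.symm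
      · exact x12 e.symm
      · exact x13 e.symm
      · exact x2 e.symm
      · exact x12 (by rw [← e, add_comm])
      · exact x0 e.symm
      · exact x23 e.symm
      · exact x3 e.symm
      · exact x13 (by rw [← e, add_comm])
      · exact x23 (by rw [← e, add_comm])
      · exact x0 e.symm
    · rw [ya, yb] at hab; exact absurd hab (by decide)
    · rw [ya, yb] at hab; exact absurd hab (by decide)
    · have ga := mem_P1.mpr ⟨ha, ya⟩
      have gb := mem_P1.mpr ⟨hb, yb⟩
      have ga' := (mem_P1.mp (hGτ a ga)).1
      have gb' := (mem_P1.mp (hGτ b gb)).1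
      have n1 : a ≠ b := fun hh => x0 (by rw [← e, hh, add_self'])
      have n2 : a ≠ a + τ := fun hh => hτ0 (left_eq_add.mp hh)
      have n3 : a ≠ b + τ := fun hh => xτ (by rw [← e, hh, add_right_comm, add_self', zero_add])
      have n4 : b ≠ a + τ := fun hh => n3 ((eq_add_iff _ _ _).mp hh.symm)
      have n5 : b ≠ b + τ := fun hh => hτ0 (left_eq_add.mp hh)
      have n6 : a + τ ≠ b + τ := fun hh => n1 (add_right_cancel hh)
      have hc : ({a, b, a + τ, b + τ} : Finset V7).card = 4 := by
        rw [Finset.card_insert_of_notMem, Finset.card_insert_of_notMem, Finset.card_pair n6]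
        · simp [n4, n5]
        · simp only [mem_insert, mem_singleton, not_or]; exact ⟨n1, n2, n3⟩
      rw [← hc]
      refine Finset.card_le_card_of_injOn (fun g => (g, x + g)) ?_ ?_
      · intro g hg
        simp only [Finset.coe_insert, Finset.coe_singleton, Set.mem_insert_iff, Set.mem_singleton_iff] at hg
        simp only [Finset.coe_filter, mem_product, Set.mem_ofPred_eq]
        have eb : x + a = b := by rw [← e, add_comm, add_cancel']
        have ea : x + b = a := by rw [← e, add_comm a b, add_comm, add_cancel']
        refine ⟨?_, by rw [add_comm x, add_cancel']⟩
        rcases hg with rfl | rfl | rfl | rfl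
        · rw [eb]; exact ⟨ha, hb⟩
        · rw [ea]; exact ⟨hb, ha⟩
        · rw [← add_assoc, eb]; exact ⟨ga', gb'⟩
        · rw [← add_assoc, ea]; exact ⟨gb', ga'⟩
      · intro a _ b _ hab; exact (Prod.mk.inj hab).1
  -- rigidity
  let m : V7 → ℕ := fun x => 2 + (if x = 0 then 18 else 0) + (if x = τ then 14 else 0) +
    (if x ∈ E then 2 else 0)
  have hm : ∀ x ∈ (univ : Finset V7), m x ≤ RR A x := by
    intro x _
    simp only [m]
    by_cases x0 : x = 0
    · subst x0
      rw [RR_zero, h.card, if_pos rfl, if_neg (Ne.symm hτ0), if_neg hE0]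
    by_cases xτ : x = τ
    · rw [if_neg x0, if_pos xτ, xτ, if_neg hEτ]; omega
    by_cases xE : x ∈ E
    · rw [if_neg x0, if_neg xτ, if_pos xE]; exact hRRE x xE
    · rw [if_neg x0, if_neg xτ, if_neg xE]; exact RR_ge_two h.full x0
  have hmsum : 400 ≤ ∑ x, m x := by
    simp only [m, Finset.sum_add_distrib, Finset.sum_ite_eq', mem_univ, if_true, sum_const,
      card_univ, card_V7, Finset.sum_ite_mem, Finset.univ_inter]
    simp only [smul_eq_mul]; omega
  have hsumRR : ∑ x, RR A x = 400 := by rw [sum_RR, h.card]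
  have heq : ∀ x, m x = RR A x := by
    have h1 : ∑ x, m x = ∑ x, RR A x := le_antisymm (Finset.sum_le_sum hm) (by omega)
    intro x
    exact (Finset.sum_eq_sum_iff_of_le hm).mp h1 x (mem_univ x)
  have hRRτ' : RR A τ = 16 := by
    rw [← heq]; simp only [m, if_neg hτ0, if_neg hEτ, if_true]
  have hsq : ∑ x, (RR A x : ℤ) ^ 2 = 1832 := by
    have h1 : ∀ x, (RR A x : ℤ) ^ 2 = 6 * (RR A x : ℤ) - 8 + (if x = 0 then 288 else 0) +
        (if x = τ then 168 else 0) := by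
      intro x
      rw [← heq]
      simp only [m]
      by_cases x0 : x = 0
      · subst x0
        rw [if_pos rfl, if_neg (Ne.symm hτ0), if_neg hE0]; norm_num
        exact Ne.symm hτ0
      by_cases xτ : x = τ
      · subst xτ
        rw [if_neg x0, if_pos rfl, if_neg hEτ]; norm_num
        rw [if_neg x0]; norm_num
      by_cases xE : x ∈ E
      · simp [if_neg x0, if_neg xτ, if_pos xE]
      · simp [if_neg x0, if_neg xτ, if_neg xE]
    simp only [h1, Finset.sum_add_distrib, Finset.sum_sub_distrib, ← Finset.mul_sum]
    have h2 : ∑ x, (RR A x : ℤ) = 400 := by exact_mod_cast hsumRR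
    rw [h2]
    simp
  have m4 := M4 A
  rw [hsq] at m4
  have m2τ := M2 A τ
  rw [hRRτ'] at m2τ
  have mχ := sum_chi τ
  rw [if_neg hτ0] at mχ
  have hF : ∀ u, 0 ≤ vv A u ^ 4 - 44 * vv A u ^ 2 - 36 * (vv A u ^ 2 * chi u τ) + 520 + 504 * chi u τ := by
    intro u
    by_cases hu : u ⬝ᵥ τ = 0
    · have hev : u ⬝ᵥ ∑ a ∈ A, a = 0 := by
        rw [dotProduct_sum]
        have hsplit : A = P0 A y ∪ P1 A y := by
          ext a; rw [mem_union, mem_P0, mem_P1]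
          rcases zmod2_cases (y ⬝ᵥ a) with h | h <;> simp [h]
        have hdis : Disjoint (P0 A y) (P1 A y) := by
          rw [Finset.disjoint_left]
          intro a ha hb
          rw [mem_P0] at ha; rw [mem_P1, ha.2] at hb
          exact absurd hb.2 (by decide)
        rw [hsplit, Finset.sum_union hdis]
        have e1 : ∑ a ∈ P0 A y, u ⬝ᵥ a = 0 := by
          rw [← Finset.add_sum_erase _ _ h0, hset, Finset.sum_insert, Finset.sum_pair h23]
          · rw [← dotProduct_add, ← dotProduct_add, ← add_assoc, ← hτ, hu]; simp
          · simp [h12, h13]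
        have e2 : ∑ a ∈ P1 A y, u ⬝ᵥ a = 0 := by
          refine Finset.sum_involution (fun g _ => g + τ) ?_ ?_ ?_ ?_
          · intro g _
            rw [dotProduct_add, hu, add_zero]; exact CharTwo.add_self_eq_zero _
          · intro g _ _ hh; exact hτ0 (add_eq_left.mp hh)
          · intro g hg; exact hGτ g hg
          · intro g _; rw [add_assoc, add_self', add_zero]
        rw [e1, e2, add_zero]
      obtain ⟨k, hk⟩ := P1_even A u hev
      have hv := h.vv_eq u
      have hv' : vv A u = 4 * (5 - k) := by rw [hv, hk]; push_cast; ring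
      have := four_poly (5 - k)
      rw [← hv'] at this
      have hχ : chi u τ = 1 := by simp [chi, hu]
      rw [hχ]; linarith
    · have hχ : chi u τ = -1 := by simp [chi, hu]
      rw [hχ]
      have hsq4 := sq_nonneg (vv A u ^ 2 - 4)
      generalize vv A u = w at hsq4 ⊢
      have e : w ^ 4 - 44 * w ^ 2 - 36 * (w ^ 2 * -1) + 520 + 504 * -1 = (w ^ 2 - 4) ^ 2 := by ring
      rw [e]; exact hsq4
  have hle := Finset.single_le_sum (fun u _ => hF u) (mem_univ (0 : V7))
  simp only [Finset.sum_add_distrib, Finset.sum_sub_distrib, ← Finset.mul_sum] at hle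
  rw [m4, h.m2, m2τ, mχ, h.vv_zero] at hle
  simp at hle


lemma Cap20.neg {A : Finset V7} (h : Cap20 A) {y : V7} (hy : y ≠ 0) : -6 ≤ vv A y := by
  have hp := card_parts A y
  have hc := h.card
  have hv := vv_parts A y
  by_contra hcon
  obtain ⟨t, ht⟩ := exists_dot_one hy
  have hcov := cov_P0 h.full ht
  have hm := hcov.mul_le hy
  have hX := card_tr t (P0 A y)
  have hY := card_tr t (P1 A y)
  have hle : (P0 A y).card ≤ 6 := by omega
  have hY2 : (P1 A y).card = 20 - (P0 A y).card := by omega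
  rw [hX, hY, hY2] at hm
  have hcases : (P0 A y).card = 4 ∨ (P0 A y).card = 5 ∨ (P0 A y).card = 6 := by
    generalize (P0 A y).card = n at *
    interval_cases n <;> omega
  rcases hcases with h4 | h5 | h6
  · exact h.no4 hy h4
  · have := core5 hcov (by omega); omega
  · have hd := core6 hcov (by omega) (by omega)
    refine search hcov (by omega) hd true (t := t) ?_ ?_ (by simp; omega)
    · rw [mem_tr, add_self']; exact mem_P0.mpr ⟨h.zero, by simp⟩
    · intro _ z hz z' hz' x hx hxt e
      rw [mem_tr] at hz hz' hx
      have hs : t + x ≠ 0 := by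
        intro hh; rw [add_eq_zero'] at hh; exact hxt hh.symm
      have e2 : (t + z) + (t + z') = t + x := by
        rw [← e]
        calc t + z + (t + z') = (t + t) + (z + z') := by abel
          _ = _ := by rw [add_self', zero_add]
      have hn0 : ∀ g ∈ P1 A y, g ≠ 0 := by
        intro g hg hg0
        have := (mem_P1.mp hg).2
        rw [hg0, dotProduct_zero] at this
        exact absurd this (by decide)
      refine h.cap _ (mem_P1.mp hz).1 _ (mem_P1.mp hz').1 (hn0 _ hz) (hn0 _ hz') ?_ ?_
      · intro hh; rw [hh, add_self'] at e2; exact hs e2.symm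
      · rw [e2]; exact (mem_P0.mp hx).1

lemma vv_shift (A : Finset V7) (f k : V7) :
    vv A (f + k) = vv A f + vv A k - A.card + 4 * ((P1 (P1 A f) k).card : ℤ) := by
  have h1 : ∑ a ∈ A, (chi f a - 1) * (chi k a - 1) = 4 * ((P1 (P1 A f) k).card : ℤ) := by
    have : P1 (P1 A f) k = A.filter fun a => f ⬝ᵥ a = 1 ∧ k ⬝ᵥ a = 1 := by
      unfold P1; rw [Finset.filter_filter]
    rw [this, Finset.card_filter]
    push_cast
    rw [Finset.mul_sum]
    refine Finset.sum_congr rfl fun a _ => ?_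
    unfold chi
    rcases zmod2_cases (f ⬝ᵥ a) with h | h <;> rcases zmod2_cases (k ⬝ᵥ a) with h' | h' <;>
      simp [h, h']
  have h2 : ∀ a, (chi f a - 1) * (chi k a - 1) = chi (f + k) a - chi f a - chi k a + 1 := by
    intro a; rw [chi_add_left]; ring
  simp only [h2, Finset.sum_add_distrib, Finset.sum_sub_distrib, sum_const] at h1
  unfold vv
  simp at h1
  linarith

lemma card_K (s m : V7) : 32 ≤ (univ.filter fun k : V7 => k ⬝ᵥ s = 0 ∧ k ⬝ᵥ m = 0).card := by
  have h1 : ∑ k : V7, (1 + chi k s) * (1 + chi k m) =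
      4 * ((univ.filter fun k : V7 => k ⬝ᵥ s = 0 ∧ k ⬝ᵥ m = 0).card : ℤ) := by
    rw [Finset.card_filter]
    push_cast
    rw [Finset.mul_sum]
    refine Finset.sum_congr rfl fun k _ => ?_
    unfold chi
    rcases zmod2_cases (k ⬝ᵥ s) with h | h <;> rcases zmod2_cases (k ⬝ᵥ m) with h' | h' <;>
      simp [h, h']
  have h2 : ∀ k, (1 + chi k s) * (1 + chi k m) = 1 + chi k s + chi k m + chi k (s + m) := by
    intro k; rw [chi_add_right]; ring
  simp only [h2, Finset.sum_add_distrib, sum_const, card_univ, card_V7] at h1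
  have p : ∀ x, 0 ≤ ∑ k : V7, chi k x := by
    intro x; rw [sum_chi]; split_ifs <;> norm_num
  have p1 := p s
  have p2 := p m
  have p3 := p (s + m)
  simp only [smul_eq_mul, nsmul_eq_mul] at h1
  push_cast at h1
  omega

lemma poly_a (k : ℤ) (hk : -1 ≤ k) : 0 ≤ (4 * k) ^ 3 - 16 * (4 * k) := by
  by_cases h : k ≤ 1
  · interval_cases k <;> norm_num
  · have : (4 * k) ^ 3 - 16 * (4 * k) = 64 * (k * ((k - 1) * (k + 1))) := by ring
    rw [this]
    have a : 0 ≤ k := by omega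
    have b : 0 ≤ k - 1 := by omega
    have c : 0 ≤ k + 1 := by omega
    positivity

lemma poly_b (k : ℤ) (hk : -1 ≤ k) : 0 ≤ (4 * k - 2) * ((4 * k) ^ 2 - 16) := by
  by_cases h : k ≤ 1
  · interval_cases k <;> norm_num
  · have : (4 * k - 2) * ((4 * k) ^ 2 - 16) = 32 * ((2 * k - 1) * ((k - 1) * (k + 1))) := by ring
    rw [this]
    have a : 0 ≤ 2 * k - 1 := by omega
    have b : 0 ≤ k - 1 := by omega
    have c : 0 ≤ k + 1 := by omega
    positivity

lemma poly_c (k : ℤ) (hk : -2 ≤ k) : 0 ≤ (4 * k + 2 - 2) * ((4 * k + 2) ^ 2 - 36) := by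
  by_cases h : k ≤ 1
  · interval_cases k <;> norm_num
  · have : (4 * k + 2 - 2) * ((4 * k + 2) ^ 2 - 36) = 64 * (k * ((k - 1) * (k + 2))) := by ring
    rw [this]
    have a : 0 ≤ k := by omega
    have b : 0 ≤ k - 1 := by omega
    have c : 0 ≤ k + 2 := by omega
    positivity

lemma chi_cases (u s : V7) : (u ⬝ᵥ s = 0 ∧ chi u s = 1) ∨ (u ⬝ᵥ s = 1 ∧ chi u s = -1) := by
  rcases zmod2_cases (u ⬝ᵥ s) with h | h <;> simp [chi, h]

lemma Cap20.on {A : Finset V7} (h : Cap20 A) {u : V7} (hu : u ⬝ᵥ ∑ a ∈ A, a = 0) :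
    ∃ k : ℤ, vv A u = 4 * k := by
  obtain ⟨k, hk⟩ := P1_even A u hu
  refine ⟨5 - k, ?_⟩
  rw [h.vv_eq, hk]; push_cast; ring

lemma Cap20.off {A : Finset V7} (h : Cap20 A) {u : V7} (hu : u ⬝ᵥ ∑ a ∈ A, a = 1) :
    ∃ k : ℤ, vv A u = 4 * k + 2 := by
  have hk := P1_odd A u (by rw [hu]; decide)
  have hv := h.vv_eq u
  refine ⟨(vv A u - 2) / 4, ?_⟩
  omega

lemma no_cap20 {A : Finset V7} (h : Cap20 A) : False := by
  classical
  obtain ⟨σ, hσ⟩ : ∃ σ, σ = ∑ a ∈ A, a := ⟨_, rfl⟩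
  have hon : ∀ u, u ⬝ᵥ σ = 0 → ∃ k : ℤ, vv A u = 4 * k := fun u hu => h.on (hσ ▸ hu)
  have hoff : ∀ u, u ⬝ᵥ σ = 1 → ∃ k : ℤ, vv A u = 4 * k + 2 := fun u hu => h.off (hσ ▸ hu)
  by_cases hσ0 : σ = 0
  · have hF : ∀ u, 0 ≤ vv A u ^ 3 - 16 * vv A u := by
      intro u
      by_cases hu : u = 0
      · rw [hu, h.vv_zero]; norm_num
      obtain ⟨k, hk⟩ := hon u (by rw [hσ0]; simp)
      have := h.neg hu
      rw [hk]; exact poly_a k (by omega)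
    have hle := Finset.single_le_sum (fun u _ => hF u) (mem_univ (0 : V7))
    simp only [Finset.sum_sub_distrib, ← Finset.mul_sum] at hle
    rw [h.m1, h.m3, h.vv_zero] at hle
    norm_num at hle
  have mχ := sum_chi σ
  rw [if_neg hσ0] at mχ
  have mv := M1 A σ
  let F : V7 → ℤ := fun u => (vv A u - 2) * (vv A u ^ 2 - 26 + 10 * chi u σ)
  have hF : ∀ u, u ≠ 0 → 0 ≤ F u := by
    intro u hu
    have hn := h.neg hu
    simp only [F]
    rcases chi_cases u σ with ⟨h1, h2⟩ | ⟨h1, h2⟩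
    · obtain ⟨k, hk⟩ := hon u h1
      rw [h2, hk]
      have := poly_b k (by omega)
      linarith
    · obtain ⟨k, hk⟩ := hoff u h1
      rw [h2, hk]
      have := poly_c k (by omega)
      linarith
  have hsum : ∑ u, F u = 5632 + 10 * (if σ ∈ A then 128 else 0) := by
    have e : ∀ u, F u = vv A u ^ 3 - 2 * vv A u ^ 2 - 26 * vv A u + 10 * (vv A u * chi u σ)
        + 52 - 20 * chi u σ := by intro u; simp only [F]; ring
    simp only [e, Finset.sum_add_distrib, Finset.sum_sub_distrib, ← Finset.mul_sum, sum_const,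
      card_univ, card_V7]
    rw [h.m1, h.m2, h.m3, mv, mχ]
    norm_num
    split_ifs <;> norm_num
  have hF0 : F 0 = 6912 := by simp [F, h.vv_zero]
  have hadd := Finset.add_sum_erase univ F (mem_univ (0 : V7))
  rw [hsum, hF0] at hadd
  have hnn : ∀ u ∈ univ.erase (0 : V7), 0 ≤ F u := fun u hu => hF u (Finset.ne_of_mem_erase hu)
  have hge := Finset.sum_nonneg hnn
  by_cases hσA : σ ∈ A
  swap
  · rw [if_neg hσA] at hadd; linarith
  rw [if_pos hσA] at hadd mv
  have hz : ∀ u, u ≠ 0 → F u = 0 := by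
    intro u hu
    exact (Finset.sum_eq_zero_iff_of_nonneg hnn).mp (by linarith) u (mem_erase.mpr ⟨hu, mem_univ u⟩)
  have von : ∀ u, u ⬝ᵥ σ = 0 → vv A u % 8 = 4 := by
    intro u hu
    by_cases hu0 : u = 0
    · rw [hu0, h.vv_zero]; norm_num
    have := hz u hu0
    obtain ⟨k, hk⟩ := hon u hu
    have hχ : chi u σ = 1 := by simp [chi, hu]
    simp only [F, hχ] at this
    rcases mul_eq_zero.mp this with h1 | h1
    · omega
    · have h2 : (vv A u - 4) * (vv A u + 4) = 0 := by linarith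
      rcases mul_eq_zero.mp h2 with h3 | h3 <;> omega
  have voff : ∀ u, u ⬝ᵥ σ = 1 → vv A u = 2 ∨ vv A u = 6 ∨ vv A u = -6 := by
    intro u hu
    have hu0 : u ≠ 0 := by
      rintro rfl
      rw [zero_dotProduct] at hu; exact absurd hu (by decide)
    have := hz u hu0
    have hχ : chi u σ = -1 := by simp [chi, hu]
    simp only [F, hχ] at this
    rcases mul_eq_zero.mp this with h1 | h1
    · left; omega
    · have h2 : (vv A u - 6) * (vv A u + 6) = 0 := by linarith
      rcases mul_eq_zero.mp h2 with h3 | h3 <;> omega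
  have m2σ := M2 A σ
  rw [h.RR_two hσA hσ0] at m2σ
  let w : V7 → ℤ := fun u => (1 - chi u σ) * (vv A u ^ 2 + 4 * vv A u - 12)
  have hwsum : ∑ u, w u = 768 := by
    have e : ∀ u, w u = vv A u ^ 2 + 4 * vv A u - 12 - vv A u ^ 2 * chi u σ
        - 4 * (vv A u * chi u σ) + 12 * chi u σ := by intro u; simp only [w]; ring
    simp only [e, Finset.sum_add_distrib, Finset.sum_sub_distrib, ← Finset.mul_sum, sum_const,
      card_univ, card_V7]
    rw [h.m1, h.m2, m2σ, mv, mχ]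
    norm_num
  have hw0 : ∀ u, 0 ≤ w u := by
    intro u
    simp only [w]
    rcases chi_cases u σ with ⟨h1, h2⟩ | ⟨h1, h2⟩
    · rw [h2]; norm_num
    · rw [h2]
      rcases voff u h1 with h3 | h3 | h3 <;> rw [h3] <;> norm_num
  obtain ⟨f, hf1, hf6⟩ : ∃ f, f ⬝ᵥ σ = 1 ∧ vv A f = 6 := by
    by_contra hcon
    push Not at hcon
    have : ∑ u, w u = 0 := by
      refine Finset.sum_eq_zero fun u _ => ?_
      simp only [w]
      rcases chi_cases u σ with ⟨h1, h2⟩ | ⟨h1, h2⟩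
      · rw [h2]; norm_num
      · rcases voff u h1 with h3 | h3 | h3
        · rw [h3]; norm_num
        · exact absurd h3 (hcon u h1)
        · rw [h3]; norm_num
    omega
  have hK := card_K σ (∑ a ∈ P1 A f, a)
  have hval : ∀ k ∈ univ.filter (fun k : V7 => k ⬝ᵥ σ = 0 ∧ k ⬝ᵥ (∑ a ∈ P1 A f, a) = 0),
      96 ≤ w (f + k) := by
    intro k hk
    obtain ⟨-, hk1, hk2⟩ := mem_filter.mp hk
    have hs := vv_shift A f k
    have hev := P1_even (P1 A f) k hk2
    have h8 := von k hk1
    have hoffk : (f + k) ⬝ᵥ σ = 1 := by rw [add_dotProduct, hf1, hk1, add_zero]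
    have h6 : vv A (f + k) = 6 := by
      have := voff _ hoffk
      have hc := h.card
      rw [hf6, hc] at hs
      push_cast at hs
      omega
    have hχ : chi (f + k) σ = -1 := by simp [chi, hoffk]
    simp only [w]
    rw [h6, hχ]; norm_num
  have h1 := Finset.card_nsmul_le_sum _ _ _ hval
  have h2 : ∑ k ∈ univ.filter (fun k : V7 => k ⬝ᵥ σ = 0 ∧ k ⬝ᵥ (∑ a ∈ P1 A f, a) = 0), w (f + k)
      ≤ ∑ k, w (f + k) :=
    Finset.sum_le_sum_of_subset_of_nonneg (Finset.filter_subset _ _) (fun k _ _ => hw0 _)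
  have h3 : ∑ k, w (f + k) = ∑ k, w k := Equiv.sum_comp (Equiv.addLeft f) w
  rw [h3, hwsum] at h2
  rw [nsmul_eq_mul] at h1
  have : (32 : ℤ) ≤ ((univ.filter fun k : V7 => k ⬝ᵥ σ = 0 ∧ k ⬝ᵥ (∑ a ∈ P1 A f, a) = 0).card : ℤ) := by
    exact_mod_cast hK
  linarith

lemma no_cap (S : Set V7) (hS : Saturating S) (hn : S.ncard = 19) (hcap : IsCap S) : False := by
  classical
  have hfin : S.Finite := Set.toFinite S
  rw [Set.ncard_eq_toFinset_card S hfin] at hn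
  have h0 : (0 : V7) ∉ hfin.toFinset := fun h => hS.1 0 (hfin.mem_toFinset.mp h) rfl
  refine no_cap20 (A := insert 0 hfin.toFinset) ⟨?_, ?_, mem_insert_self _ _, ?_⟩
  · exact sat_full hS (mem_insert_self _ _) fun s hs => mem_insert_of_mem (hfin.mem_toFinset.mpr hs)
  · rw [Finset.card_insert_of_notMem h0, hn]
  · intro a ha b hb ha0 hb0 hab hc
    have ha' := hfin.mem_toFinset.mp ((mem_insert.mp ha).resolve_left ha0)
    have hb' := hfin.mem_toFinset.mp ((mem_insert.mp hb).resolve_left hb0)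
    have hc' := hfin.mem_toFinset.mp
      ((mem_insert.mp hc).resolve_left (fun hh => hab ((add_eq_zero' _ _).mp hh)))
    refine hcap.2 a ha' b hb' (a + b) hc' hab ?_ ?_ (add_self' _)
    · intro hh; exact hb0 (left_eq_add.mp hh)
    · intro hh; exact ha0 (right_eq_add.mp hh)

/-- bit vector of a number -/
def bv (n : ℕ) : V7 := fun i => if n.testBit i then 1 else 0

lemma bv_xor (n m : ℕ) : bv (n ^^^ m) = bv n + bv m := by
  funext i
  simp only [bv, Pi.add_apply, Nat.testBit_xor]
  cases n.testBit i <;> cases m.testBit i <;> simp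
  decide

lemma bv_inj : ∀ n < 128, ∀ m < 128, bv n = bv m → n = m := by
  intro n hn m hm h
  apply Nat.eq_of_testBit_eq
  intro i
  by_cases hi : i < 7
  · have := congrFun h ⟨i, hi⟩
    simp only [bv] at this
    cases h1 : n.testBit i <;> cases h2 : m.testBit i <;> simp [h1, h2] at this ⊢
  · have hp : 2 ^ 7 ≤ 2 ^ i := Nat.pow_le_pow_right (by norm_num) (by omega)
    rw [Nat.testBit_lt_two_pow (by omega), Nat.testBit_lt_two_pow (by omega)]

lemma bv_surj (x : V7) : ∃ n < 128, bv n = x := by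
  classical
  have hc : ((range 128).image bv).card = 128 := by
    rw [Finset.card_image_of_injOn]
    · simp
    · intro n hn m hm h
      exact bv_inj n (by simpa using hn) m (by simpa using hm) h
  have : (range 128).image bv = univ := by
    apply Finset.eq_univ_of_card; rw [hc, card_V7]
  have hx : x ∈ (range 128).image bv := by rw [this]; exact mem_univ x
  obtain ⟨n, hn, e⟩ := mem_image.mp hx
  exact ⟨n, mem_range.mp hn, e⟩

def ex19 : Finset ℕ :=
  {46, 109, 48, 37, 12, 96, 31, 11, 97, 76, 106, 16, 104, 122, 110, 33, 19, 56, 87}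

lemma ex19_lt : ∀ n ∈ ex19, n < 128 ∧ n ≠ 0 := by decide +kernel

lemma ex19_sat : ∀ n < 128, n ≠ 0 → n ∉ ex19 → ∃ a ∈ ex19, ∃ b ∈ ex19, a ≠ b ∧ n = a ^^^ b := by
  decide +kernel

lemma exists19 : ∃ S : Set V7, Saturating S ∧ S.ncard = 19 := by
  classical
  have hbz : bv 0 = 0 := by funext i; simp [bv]
  refine ⟨((ex19.image bv : Finset V7) : Set V7), ⟨?_, ?_⟩, ?_⟩
  · intro s hs
    obtain ⟨n, hn, rfl⟩ := mem_image.mp (Finset.mem_coe.mp hs)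
    intro hh
    exact (ex19_lt n hn).2 (bv_inj n (ex19_lt n hn).1 0 (by norm_num) (hh.trans hbz.symm))
  · intro x hx hxS
    obtain ⟨n, hn, rfl⟩ := bv_surj x
    have hn0 : n ≠ 0 := by rintro rfl; exact hx hbz
    have hns : n ∉ ex19 := fun hh => hxS (Finset.mem_coe.mpr (mem_image_of_mem _ hh))
    obtain ⟨a, ha, b, hb, hab, e⟩ := ex19_sat n hn hn0 hns
    refine ⟨bv a, Finset.mem_coe.mpr (mem_image_of_mem _ ha), bv b,
      Finset.mem_coe.mpr (mem_image_of_mem _ hb), ?_, ?_⟩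
    · intro hh; exact hab (bv_inj a (ex19_lt a ha).1 b (ex19_lt b hb).1 hh)
    · rw [e, bv_xor]
  · rw [Set.ncard_coe_finset, Finset.card_image_of_injOn]
    · rfl
    · intro a ha b hb hh
      exact bv_inj a (ex19_lt a ha).1 b (ex19_lt b hb).1 hh


end PG6

/-- The smallest size of a minimal 1-saturating set in PG(6,2) is 19: there is a
1-saturating 19-set, every 1-saturating set has at least 19 points, and no
1-saturating 19-set is a cap. -/
theorem saturating_PG6_min_size :
    (∃ S : Set (Fin 7 → ZMod 2), Saturating S ∧ S.ncard = 19) ∧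
    (∀ S : Set (Fin 7 → ZMod 2), Saturating S → 19 ≤ S.ncard) ∧
    (∀ S : Set (Fin 7 → ZMod 2), Saturating S → S.ncard = 19 → ¬ IsCap S) := by 
  refine ⟨PG6.exists19, PG6.lower_bound, ?_⟩
  intro S hS hn hc
  exact PG6.no_cap S hS hn hc
end

section
/- The smallest complete cap in PG(6,2) has size 21: there exists a complete cap of 21 nonzero vectors in (ZMod 2)^7, and there is no complete cap in (ZMod 2)^7 of cardinality at most 20. -/
noncomputable section

def frc (x : ℕ) (f : ℕ → Bool) : Bool :=
  Nat.rec (motive := fun _ => Bool) (f (nat_lit 0)) (fun n _ => f (Nat.succ n)) x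
def sel (b : Bool) (t e : Bool) : Bool := Bool.rec (motive := fun _ => Bool) e t b
def pcT : ℕ := nat_lit 0x8776766576656554766565546554544376656554655454436554544354434332766565546554544365545443544343326554544354434332544343324332322176656554655454436554544354434332655454435443433254434332433232216554544354434332544343324332322154434332433232214332322132212110
def pcb (x : ℕ) : ℕ :=
  Nat.land (Nat.shiftRight pcT (Nat.mul (nat_lit 4) (Nat.land x (nat_lit 255)))) (nat_lit 15)
def pc (x : ℕ) : ℕ :=
  Nat.add (pcb x) (Nat.add (pcb (Nat.shiftRight x (nat_lit 8)))
   (Nat.add (pcb (Nat.shiftRight x (nat_lit 16))) (Nat.add (pcb (Nat.shiftRight x (nat_lit 24)))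
   (Nat.add (pcb (Nat.shiftRight x (nat_lit 32))) (Nat.add (pcb (Nat.shiftRight x (nat_lit 40)))
   (Nat.add (pcb (Nat.shiftRight x (nat_lit 48))) (pcb (Nat.shiftRight x (nat_lit 56)))))))))
def tb (x i : ℕ) : Bool := Nat.beq (Nat.land (Nat.shiftRight x i) (nat_lit 1)) (nat_lit 1)
def look (T w : ℕ) : ℕ :=
  Nat.land (Nat.shiftRight T (Nat.mul (nat_lit 64) w)) (nat_lit 18446744073709551615)
def nf (as : List ℕ) (w : ℕ) : ℕ :=
  List.rec (motive := fun _ => ℕ) (Nat.shiftLeft (nat_lit 1) w)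
    (fun t _ ih => Nat.lor (Nat.shiftLeft (nat_lit 1) (Nat.xor w t)) ih) as
def loop (f : ℕ → ℕ → Bool) (v : ℕ) (l : List ℕ) : ℕ → Bool :=
  List.rec (motive := fun _ => ℕ → Bool) (fun _ => true)
    (fun t _ ih blk => frc (Nat.xor v t) fun w =>
      sel (tb blk w) (ih blk)
        (sel (f w blk) (frc (Nat.lor blk (Nat.shiftLeft (nat_lit 1) w)) ih) false)) l
def mem1 (Pm x : ℕ) (P : List ℕ) : Bool :=
  List.rec (motive := fun _ => Bool) false (fun p _ ih => sel (tb Pm (Nat.xor p x)) true ih) P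
def mkm (P : List ℕ) : ℕ :=
  List.rec (motive := fun _ => ℕ) (nat_lit 0)
    (fun p _ ih => Nat.lor (Nat.shiftLeft (nat_lit 1) p) ih) P
def leaf (need P : List ℕ) : Bool :=
  frc (mkm P) fun Pm =>
  List.rec (motive := fun _ => Bool) false (fun x _ ih => sel (mem1 Pm x P) ih true) need
def search (T full a1 : ℕ) (as0 need : List ℕ) (k : ℕ) : ℕ → ℕ → List ℕ → Bool :=
  Nat.rec (motive := fun _ => ℕ → ℕ → List ℕ → Bool)
    (fun _ dom P => sel (Nat.beq full dom) (leaf need P) true)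
    (fun k ih blk dom P => sel (Nat.beq full dom) (leaf need P)
      (frc (Nat.xor full dom) fun und =>
        sel (Nat.ble (pc und) (Nat.mul a1 (Nat.succ k)))
          (frc (Nat.log2 (Nat.xor und (Nat.pred und))) fun v =>
            loop (fun w blk => frc (look T w) fun m =>
              frc (Nat.lor blk m) fun blk' => frc (Nat.lor dom m) fun dom' =>
                ih blk' dom' (w :: P)) v as0 blk)
          true)) k
def mkT (as : List ℕ) (n : ℕ) : ℕ :=
  Nat.rec (motive := fun _ => ℕ) (nat_lit 0)
    (fun w ih => Nat.lor (Nat.shiftLeft (nf as w) (Nat.mul (nat_lit 64) w)) ih) n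
def okT (T : ℕ) (as : List ℕ) (n : ℕ) : Bool :=
  Nat.rec (motive := fun _ => Bool) true
    (fun w ih => sel (Nat.beq (look T w) (nf as w)) ih false) n
def nfs (as P : List ℕ) : ℕ :=
  List.rec (motive := fun _ => ℕ) (nat_lit 0) (fun p _ ih => Nat.lor (nf as p) ih) P
def run (r : ℕ) (as need : List ℕ) (k : ℕ) (P : List ℕ) (blk : ℕ) : Bool :=
  frc (mkT as 64) fun T => sel (okT T as 64)
    (frc (nfs as P) fun d => frc (Nat.lor blk d) fun b => frc (Nat.sub (Nat.pow 2 (Nat.pow 2 r)) 1) fun full =>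
      frc (Nat.succ as.length) fun a1 =>
      search T full a1 (0 :: as) need k b d P) false

theorem frc_eq (x : ℕ) (f : ℕ → Bool) : frc x f = f x := by cases x <;> rfl
theorem sel_eq (b t e : Bool) : sel b t e = if b then t else e := by cases b <;> rfl
theorem tb_eq (x i : ℕ) : tb x i = x.testBit i := by
  have h : tb x i = Nat.beq ((x >>> i) &&& 1) 1 := rfl
  rw [h, Nat.testBit, Nat.and_comm]
  have := Nat.and_one_is_mod (x >>> i)
  rw [Nat.and_comm 1, this]
  rcases Nat.mod_two_eq_zero_or_one (x >>> i) with h | h <;> rw [h] <;> rfl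

theorem nf_cons (t : ℕ) (as : List ℕ) (w : ℕ) : nf (t :: as) w = (1 <<< (w ^^^ t)) ||| nf as w := rfl
theorem testBit_one_shl (i x : ℕ) : (1 <<< i).testBit x = true ↔ x = i := by
  rw [Nat.one_shiftLeft, Nat.testBit_two_pow]; simp [eq_comm]
theorem nf_spec (as : List ℕ) (w x : ℕ) :
    (nf as w).testBit x = true ↔ x = w ∨ ∃ t ∈ as, x = w ^^^ t := by
  induction as with
  | nil =>
    have : nf [] w = 1 <<< w := rfl
    rw [this, testBit_one_shl]; simp
  | cons t as ih =>
    rw [nf_cons, Nat.testBit_or, Bool.or_eq_true, ih, testBit_one_shl]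
    simp only [List.mem_cons, exists_eq_or_imp]
    tauto
theorem nfs_spec (as P : List ℕ) (x : ℕ) :
    (nfs as P).testBit x = true ↔ ∃ p ∈ P, (nf as p).testBit x = true := by
  induction P with
  | nil =>
    have : nfs as [] = 0 := rfl
    rw [this]; simp
  | cons t P ih =>
    have : nfs as (t :: P) = nf as t ||| nfs as P := rfl
    rw [this, Nat.testBit_or, Bool.or_eq_true, ih]
    simp
theorem mkm_spec (P : List ℕ) (x : ℕ) : (mkm P).testBit x = true ↔ x ∈ P := by
  induction P with
  | nil =>
    have : mkm [] = 0 := rfl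
    rw [this]; simp
  | cons t P ih =>
    have : mkm (t :: P) = 1 <<< t ||| mkm P := rfl
    rw [this, Nat.testBit_or, Bool.or_eq_true, ih, testBit_one_shl]
    simp
theorem mem1_spec (Pm x : ℕ) (P : List ℕ) :
    mem1 Pm x P = true ↔ ∃ p ∈ P, Pm.testBit (p ^^^ x) = true := by
  induction P with
  | nil =>
    have : mem1 Pm x [] = false := rfl
    rw [this]; simp
  | cons t P ih =>
    have : mem1 Pm x (t :: P) = sel (tb Pm (t ^^^ x)) true (mem1 Pm x P) := rfl
    rw [this, sel_eq, tb_eq]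
    simp only [List.mem_cons, exists_eq_or_imp, ← ih]
    split <;> simp_all
theorem leaf_spec (need P : List ℕ) (h : leaf need P = true) :
    ∃ x ∈ need, ∀ p ∈ P, p ^^^ x ∉ P := by
  have h1 : leaf need P = frc (mkm P) fun Pm =>
    List.rec (motive := fun _ => Bool) false (fun x _ ih => sel (mem1 Pm x P) ih true) need := rfl
  rw [h1, frc_eq] at h
  clear h1
  induction need with
  | nil => simp at h
  | cons x need ih =>
    simp only [sel_eq] at h
    by_cases hm : mem1 (mkm P) x P = true
    · simp only [hm, if_true] at h
      obtain ⟨y, hy, hy2⟩ := ih (by simpa only [sel_eq] using h)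
      exact ⟨y, List.mem_cons_of_mem _ hy, hy2⟩
    · refine ⟨x, List.mem_cons_self, fun p hp hpx => hm ?_⟩
      rw [mem1_spec]
      exact ⟨p, hp, (mkm_spec _ _).2 hpx⟩

theorem okT_spec (T : ℕ) (as : List ℕ) (n : ℕ) (h : okT T as n = true) :
    ∀ w < n, look T w = nf as w := by
  induction n with
  | zero => intro w hw; omega
  | succ n ih =>
    have h1 : okT T as (n+1) = sel (Nat.beq (look T n) (nf as n)) (okT T as n) false := rfl
    rw [h1, sel_eq] at h
    split at h
    · rename_i h2
      intro w hw
      rcases Nat.lt_succ_iff_lt_or_eq.1 hw with h3 | h3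
      · exact ih h w h3
      · subst h3; exact Nat.eq_of_beq_eq_true h2
    · simp at h

def bsum (n x : ℕ) : ℕ := ∑ i ∈ Finset.range n, (x.testBit i).toNat
theorem pcb_table : ∀ y < 256, pcb y = bsum 8 y := by decide +kernel
theorem pcb_spec (x : ℕ) : pcb x = bsum 8 x := by
  have h1 : pcb x = pcb (x &&& 255) := by
    unfold pcb
    have : Nat.land (x &&& 255) 255 = Nat.land x 255 := by
      change (x &&& 255) &&& 255 = x &&& 255
      rw [Nat.and_assoc, Nat.and_self]
    rw [this]
  have h2 : x &&& 255 = x % 2^8 := Nat.and_two_pow_sub_one_eq_mod x 8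
  rw [h1, h2, pcb_table (x % 2^8) (Nat.mod_lt _ (by norm_num))]
  unfold bsum
  apply Finset.sum_congr rfl
  intro i hi
  rw [Nat.testBit_mod_two_pow]
  simp at hi
  simp [hi]
theorem bsum_add (m n x : ℕ) : bsum (m + n) x = bsum m x + bsum n (x >>> m) := by
  unfold bsum
  rw [Finset.sum_range_add]
  simp [Nat.testBit_shiftRight]
theorem pc_spec (x : ℕ) : pc x = bsum 64 x := by
  have h : pc x = pcb x + (pcb (x >>> 8) + (pcb (x >>> 16) + (pcb (x >>> 24) + (pcb (x >>> 32) +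
    (pcb (x >>> 40) + (pcb (x >>> 48) + pcb (x >>> 56))))))) := rfl
  rw [h]
  simp only [pcb_spec]
  rw [show (64:ℕ) = 8 + (8 + (8 + (8 + (8 + (8 + (8 + 8)))))) by norm_num]
  simp only [bsum_add, ← Nat.shiftRight_add]
theorem pc_card (x : ℕ) : pc x = ((Finset.range 64).filter fun i => x.testBit i = true).card := by
  rw [pc_spec, bsum, Finset.card_filter]
  apply Finset.sum_congr rfl
  intro i _
  cases x.testBit i <;> rfl

theorem loop_cons (f : ℕ → ℕ → Bool) (v t : ℕ) (l : List ℕ) (blk : ℕ) :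
    loop f v (t :: l) blk = if blk.testBit (v ^^^ t) then loop f v l blk else
      if f (v ^^^ t) blk then loop f v l (blk ||| 1 <<< (v ^^^ t)) else false := by
  have : loop f v (t :: l) blk = frc (v ^^^ t) fun w =>
      sel (tb blk w) (loop f v l blk)
        (sel (f w blk) (frc (blk ||| 1 <<< w) (loop f v l)) false) := rfl
  rw [this]
  simp only [frc_eq, sel_eq, tb_eq]

/-- soundness of the loop -/
theorem loop_sound (f : ℕ → ℕ → Bool) (v : ℕ) (R : Finset ℕ) (l : List ℕ) (blk : ℕ)
    (hblk : ∀ x ∈ R, blk.testBit x = false) (h : loop f v l blk = true)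
    (hex : ∃ t ∈ l, v ^^^ t ∈ R) :
    ∃ w ∈ R, (∃ t ∈ l, w = v ^^^ t) ∧ ∃ blk', (∀ x ∈ R, blk'.testBit x = false) ∧ f w blk' = true := by
  induction l generalizing blk with
  | nil => simp at hex
  | cons t l ih =>
    rw [loop_cons] at h
    by_cases ht : v ^^^ t ∈ R
    · rw [hblk _ ht] at h
      simp only [Bool.false_eq_true, if_false] at h
      refine ⟨_, ht, ⟨t, List.mem_cons_self, rfl⟩, blk, hblk, ?_⟩
      by_contra hc
      simp [hc] at h
    · have hex' : ∃ t ∈ l, v ^^^ t ∈ R := by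
        obtain ⟨s, hs, hs2⟩ := hex
        rcases List.mem_cons.1 hs with rfl | hs
        · exact absurd hs2 ht
        · exact ⟨s, hs, hs2⟩
      have key : ∃ b, (∀ x ∈ R, b.testBit x = false) ∧ loop f v l b = true := by
        split at h
        · exact ⟨_, hblk, h⟩
        · split at h
          · refine ⟨_, ?_, h⟩
            intro x hx
            rw [Nat.testBit_or, hblk x hx, Bool.false_or]
            by_contra hc
            rw [Bool.not_eq_false, testBit_one_shl] at hc
            exact ht (hc ▸ hx)
          · simp at h
      obtain ⟨b, hb, hb2⟩ := key
      obtain ⟨w, hw, ⟨s, hs, e⟩, rest⟩ := ih b hb hb2 hex'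
      exact ⟨w, hw, ⟨s, List.mem_cons_of_mem _ hs, e⟩, rest⟩

theorem low_spec (n : ℕ) (hn : n ≠ 0) : n.testBit (Nat.log2 (n ^^^ (n - 1))) = true := by
  induction n using Nat.strong_induction_on with
  | _ n ih =>
    rcases Nat.even_or_odd' n with ⟨m, rfl | rfl⟩
    · have hm : m ≠ 0 := by omega
      have e : (2 * m) ^^^ (2 * m - 1) = 2 * (m ^^^ (m - 1)) + 1 := by
        have e1 : 2 * m - 1 = 2 * (m - 1) + 1 := by omega
        rw [e1]
        apply Nat.eq_of_testBit_eq
        intro i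
        cases i with
        | zero => simp [Nat.testBit_zero]
        | succ i =>
          have q1 : ∀ z : ℕ, (2 * z + 1) / 2 = z := fun z => by omega
          have q2 : ∀ z : ℕ, (2 * z) / 2 = z := fun z => by omega
          rw [Nat.testBit_xor]
          simp only [Nat.testBit_xor, Nat.testBit_succ, q1, q2, Nat.add_sub_cancel, Bool.xor_self,
            Nat.reduceDiv, Nat.zero_testBit]
      have h0 : m ^^^ (m - 1) ≠ 0 := by
        intro h
        have := Nat.xor_eq_zero_iff.1 h
        omega
      have e2 : Nat.log2 (2 * (m ^^^ (m - 1)) + 1) = Nat.log2 (m ^^^ (m - 1)) + 1 := by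
        rw [Nat.log2_def, if_pos (by omega)]
        congr 2
        omega
      rw [e, e2, Nat.testBit_succ]
      have := ih m (by omega) hm
      simpa using this
    · have e : (2 * m + 1) ^^^ (2 * m + 1 - 1) = 1 := by
        apply Nat.eq_of_testBit_eq
        intro i
        cases i with
        | zero => simp [Nat.testBit_zero]
        | succ i =>
          have q1 : ∀ z : ℕ, (2 * z + 1) / 2 = z := fun z => by omega
          have q2 : ∀ z : ℕ, (2 * z) / 2 = z := fun z => by omega
          rw [Nat.testBit_xor]
          simp only [Nat.testBit_xor, Nat.testBit_succ, q1, q2, Nat.add_sub_cancel, Bool.xor_self,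
            Nat.reduceDiv, Nat.zero_testBit]
      have l1 : Nat.log2 1 = 0 := by decide
      rw [e, l1, Nat.testBit_zero]
      simp

theorem search_zero (T full a1 : ℕ) (as0 need : List ℕ) (blk dom : ℕ) (P : List ℕ) :
    search T full a1 as0 need 0 blk dom P = if full = dom then leaf need P else true := by
  have : search T full a1 as0 need 0 blk dom P = sel (Nat.beq full dom) (leaf need P) true := rfl
  rw [this, sel_eq]
  congr 1
  simp

theorem search_succ (T full a1 : ℕ) (as0 need : List ℕ) (k : ℕ) (blk dom : ℕ) (P : List ℕ) :
    search T full a1 as0 need (k+1) blk dom P = if full = dom then leaf need P else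
      if pc (full ^^^ dom) ≤ a1 * (k+1) then
        loop (fun w blk => search T full a1 as0 need k (blk ||| look T w) (dom ||| look T w) (w :: P))
          (Nat.log2 ((full ^^^ dom) ^^^ ((full ^^^ dom) - 1))) as0 blk
      else true := by
  have : search T full a1 as0 need (k+1) blk dom P = sel (Nat.beq full dom) (leaf need P)
      (frc (full ^^^ dom) fun und =>
        sel (Nat.ble (pc und) (a1 * (k+1)))
          (frc (Nat.log2 (und ^^^ (und - 1))) fun v =>
            loop (fun w blk => frc (look T w) fun m =>
              frc (blk ||| m) fun blk' => frc (dom ||| m) fun dom' =>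
                search T full a1 as0 need k blk' dom' (w :: P)) v as0 blk)
          true) := rfl
  rw [this]
  simp only [frc_eq, sel_eq]
  congr 1
  · simp
  · congr 1
    simp

theorem xor_cancel (a b : ℕ) : a ^^^ b ^^^ b = a := by
  rw [Nat.xor_assoc, Nat.xor_self, Nat.xor_zero]

theorem search_sound (r : ℕ) (hr : r ≤ 6) (T : ℕ) (as need : List ℕ) (B : Finset ℕ)
    (hT : ∀ w < 64, look T w = nf as w)
    (has : ∀ t ∈ as, t < 2 ^ r)
    (hB : ∀ x ∈ B, x < 2 ^ r)
    (hind : ∀ x ∈ B, ∀ t ∈ as, x ^^^ t ∉ B)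
    (hdom : ∀ x < 2 ^ r, x ∈ B ∨ ∃ t ∈ as, x ^^^ t ∈ B)
    (hdiff : ∀ x ∈ need, ∃ y ∈ B, y ^^^ x ∈ B)
    (k blk dom : ℕ) (P : List ℕ) (R : Finset ℕ)
    (hPB : ∀ p ∈ P, p ∈ B) (hRB : ∀ x ∈ R, x ∈ B) (hPR : ∀ x ∈ B, x ∈ P ∨ x ∈ R)
    (hk : R.card ≤ k) (hblk : ∀ x ∈ R, blk.testBit x = false)
    (hdm : ∀ x, dom.testBit x = true ↔ ∃ p ∈ P, (nf as p).testBit x = true)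
    (h : search T (2 ^ 2 ^ r - 1) (as.length + 1) (0 :: as) need k blk dom P = true) : False := by
  have h64 : 2 ^ r ≤ 64 := by
    calc 2 ^ r ≤ 2 ^ 6 := Nat.pow_le_pow_right (by norm_num) hr
      _ = 64 := by norm_num
  induction k generalizing blk dom P R with
  | zero =>
    have hR : R = ∅ := Finset.card_eq_zero.1 (by omega)
    have hPP : ∀ x ∈ B, x ∈ P := fun x hx => by
      rcases hPR x hx with h | h
      · exact h
      · simp [hR] at h
    rw [search_zero] at h
    have hfull : 2 ^ 2 ^ r - 1 = dom := by
      apply Nat.eq_of_testBit_eq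
      intro i
      rw [Nat.testBit_two_pow_sub_one, Bool.eq_iff_iff, hdm]
      simp only [decide_eq_true_eq]
      constructor
      · intro hi
        rcases hdom i hi with h1 | ⟨t, ht, h1⟩
        · exact ⟨i, hPP _ h1, (nf_spec _ _ _).2 (Or.inl rfl)⟩
        · exact ⟨_, hPP _ h1, (nf_spec _ _ _).2 (Or.inr ⟨t, ht, (xor_cancel _ _).symm⟩)⟩
      · rintro ⟨p, hp, h1⟩
        rcases (nf_spec _ _ _).1 h1 with rfl | ⟨t, ht, rfl⟩
        · exact hB _ (hPB _ hp)
        · exact Nat.xor_lt_two_pow (hB _ (hPB _ hp)) (has t ht)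
    rw [if_pos hfull] at h
    obtain ⟨x, hx, hx2⟩ := leaf_spec _ _ h
    obtain ⟨y, hy, hy2⟩ := hdiff x hx
    exact hx2 y (hPP _ hy) (hPP _ hy2)
  | succ k ih =>
    rw [search_succ] at h
    have hdlt : ∀ x, dom.testBit x = true → x < 2 ^ r := by
      intro x hx
      obtain ⟨p, hp, h1⟩ := (hdm x).1 hx
      rcases (nf_spec _ _ _).1 h1 with rfl | ⟨t, ht, rfl⟩
      · exact hB _ (hPB _ hp)
      · exact Nat.xor_lt_two_pow (hB _ (hPB _ hp)) (has t ht)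
    have hund : ∀ x, (2 ^ 2 ^ r - 1 ^^^ dom).testBit x = true ↔ x < 2 ^ r ∧ dom.testBit x = false := by
      intro x
      rw [Nat.testBit_xor, Nat.testBit_two_pow_sub_one]
      have := hdlt x
      cases hd : dom.testBit x <;> simp_all
    split at h
    · rename_i hfull
      have hPP : ∀ x ∈ B, x ∈ P := by
        intro x hx
        have h1 : dom.testBit x = true := by
          rw [← hfull, Nat.testBit_two_pow_sub_one]
          simpa using hB x hx
        obtain ⟨p, hp, h1⟩ := (hdm x).1 h1
        rcases (nf_spec _ _ _).1 h1 with rfl | ⟨t, ht, rfl⟩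
        · exact hp
        · exact absurd hx (hind _ (hPB _ hp) t ht)
      obtain ⟨x, hx, hx2⟩ := leaf_spec _ _ h
      obtain ⟨y, hy, hy2⟩ := hdiff x hx
      exact hx2 y (hPP _ hy) (hPP _ hy2)
    · rename_i hfull
      have hcov : ∀ x, (2 ^ 2 ^ r - 1 ^^^ dom).testBit x = true → ∃ t ∈ 0 :: as, x ^^^ t ∈ R := by
        intro x hx
        obtain ⟨hx1, hx2⟩ := (hund x).1 hx
        have : ∃ t ∈ 0 :: as, x ^^^ t ∈ B := by
          rcases hdom x hx1 with h1 | ⟨t, ht, h1⟩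
          · exact ⟨0, List.mem_cons_self, by simpa using h1⟩
          · exact ⟨t, List.mem_cons_of_mem _ ht, h1⟩
        obtain ⟨t, ht, h1⟩ := this
        refine ⟨t, ht, ?_⟩
        rcases hPR _ h1 with h2 | h2
        · exfalso
          have : dom.testBit x = true := (hdm x).2 ⟨_, h2, (nf_spec _ _ _).2 (by
            rcases List.mem_cons.1 ht with rfl | ht
            · left; simp
            · right; exact ⟨t, ht, (xor_cancel _ _).symm⟩)⟩
          simp [hx2] at this
        · exact h2
      have hprune : pc (2 ^ 2 ^ r - 1 ^^^ dom) ≤ (as.length + 1) * (k + 1) := by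
        rw [pc_card]
        have hsub : ((Finset.range 64).filter fun i => (2 ^ 2 ^ r - 1 ^^^ dom).testBit i = true) ⊆
            R.biUnion fun y => ((0 :: as).map fun t => y ^^^ t).toFinset := by
          intro x hx
          obtain ⟨t, ht, h1⟩ := hcov x (Finset.mem_filter.1 hx).2
          rw [Finset.mem_biUnion]
          refine ⟨_, h1, ?_⟩
          rw [List.mem_toFinset, List.mem_map]
          exact ⟨t, ht, xor_cancel _ _⟩
        refine (Finset.card_le_card hsub).trans ?_
        refine (Finset.card_biUnion_le_card_mul _ _ (as.length + 1) ?_).trans ?_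
        · intro y _
          refine (List.toFinset_card_le _).trans ?_
          simp
        · rw [Nat.mul_comm]
          exact Nat.mul_le_mul_left _ hk
      rw [if_pos hprune] at h
      set v := Nat.log2 ((2 ^ 2 ^ r - 1 ^^^ dom) ^^^ ((2 ^ 2 ^ r - 1 ^^^ dom) - 1)) with hv
      have hvu : (2 ^ 2 ^ r - 1 ^^^ dom).testBit v = true := by
        apply low_spec
        intro h0
        exact hfull (Nat.xor_eq_zero_iff.1 h0)
      obtain ⟨w, hw, _, blk', hb', hs⟩ := loop_sound _ v R (0 :: as) blk hblk h (hcov v hvu)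
      have hw64 : w < 64 := lt_of_lt_of_le (hB _ (hRB _ hw)) h64
      rw [hT w hw64] at hs
      refine ih (blk' ||| nf as w) (dom ||| nf as w) (w :: P) (R.erase w) ?_ ?_ ?_ ?_ ?_ ?_ hs
      · intro p hp
        rcases List.mem_cons.1 hp with rfl | hp
        · exact hRB _ hw
        · exact hPB _ hp
      · intro x hx
        exact hRB _ (Finset.mem_of_mem_erase hx)
      · intro x hx
        rcases hPR x hx with h1 | h1
        · left; exact List.mem_cons_of_mem _ h1
        · by_cases hxw : x = w
          · left; simp [hxw]
          · right; exact Finset.mem_erase.2 ⟨hxw, h1⟩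
      · rw [Finset.card_erase_of_mem hw]; omega
      · intro x hx
        obtain ⟨hxw, hxR⟩ := Finset.mem_erase.1 hx
        rw [Nat.testBit_or, hb' x hxR, Bool.false_or]
        by_contra hc
        rw [Bool.not_eq_false, nf_spec] at hc
        rcases hc with h1 | ⟨t, ht, h1⟩
        · exact hxw h1
        · exact hind w (hRB _ hw) t ht (h1 ▸ hRB _ hxR)
      · intro x
        rw [Nat.testBit_or, Bool.or_eq_true, hdm]
        simp only [List.mem_cons, exists_eq_or_imp]
        exact or_comm

theorem run_sound (r : ℕ) (as need : List ℕ) (k : ℕ) (P : List ℕ) (blk : ℕ)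
    (h : run r as need k P blk = true) (hr : r ≤ 6) (B : Finset ℕ)
    (has : ∀ t ∈ as, t < 2 ^ r)
    (hB : ∀ x ∈ B, x < 2 ^ r)
    (hind : ∀ x ∈ B, ∀ t ∈ as, x ^^^ t ∉ B)
    (hdom : ∀ x < 2 ^ r, x ∈ B ∨ ∃ t ∈ as, x ^^^ t ∈ B)
    (hdiff : ∀ x ∈ need, ∃ y ∈ B, y ^^^ x ∈ B)
    (hP : ∀ p ∈ P, p ∈ B) (hPn : P.Nodup) (hc : B.card ≤ k + P.length)
    (hblk : ∀ x ∈ B, blk.testBit x = false) : False := by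
  have h1 : run r as need k P blk = frc (mkT as 64) fun T => sel (okT T as 64)
    (frc (nfs as P) fun d => frc (blk ||| d) fun b => frc (2 ^ 2 ^ r - 1) fun full =>
      frc (as.length + 1) fun a1 =>
      search T full a1 (0 :: as) need k b d P) false := rfl
  rw [h1] at h
  simp only [frc_eq, sel_eq] at h
  split at h
  · rename_i hok
    refine search_sound r hr _ as need B (okT_spec _ _ _ hok) has hB hind hdom hdiff k _ _ P
      (B \ P.toFinset) hP ?_ ?_ ?_ ?_ ?_ h
    · intro x hx; exact (Finset.mem_sdiff.1 hx).1
    · intro x hx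
      by_cases hxP : x ∈ P
      · left; exact hxP
      · right; simp [hx, hxP]
    · rw [Finset.card_sdiff_of_subset (by intro x hx; exact hP x (by simpa using hx)),
        List.toFinset_card_of_nodup hPn]
      omega
    · intro x hx
      obtain ⟨hx1, hx2⟩ := Finset.mem_sdiff.1 hx
      rw [Nat.testBit_or, hblk x hx1, Bool.false_or]
      by_contra hc
      rw [Bool.not_eq_false, nfs_spec] at hc
      obtain ⟨p, hp, hc⟩ := hc
      rcases (nf_spec _ _ _).1 hc with rfl | ⟨t, ht, rfl⟩
      · exact hx2 (by simpa using hp)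
      · exact hind _ (hP _ hp) t ht hx1
    · exact nfs_spec as P
  · simp at h
end

theorem run0 : run 6 [] [] 13 [0,1,2,4,8,16,32] 0 = true := by decide +kernel
theorem run1 : run 6 [1] [] 13 [0,2,4,8,16,32] 0 = true := by decide +kernel
theorem run2 : run 6 [1,2] [] 13 [0,4,8,16,32] 0 = true := by decide +kernel
theorem run3 : run 6 [1,2,4] [7,8,9,10,11,12,13,14,15,16,17,18,19,20,21,22,23,24,25,26,27,28,29,30,31,32,33,34,35,36,37,38,39,40,41,42,43,44,45,46,47,48,49,50,51,52,53,54,55,56,57,58,59,60,61,62,63] 13 [0,8,16,32] 0 = true := by decide +kernel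
theorem run3' : run 6 [1,2,4,7] [9,10] 12 [0,8,16,32] 0 = true := by decide +kernel
theorem run4 : run 6 [1,2,4,8] [7,11,13,14,15] 12 [0,15,16,32] 0 = true := by decide +kernel
theorem run4' : ∀ x < 16, x ∈ [0,1,2,4,8] ∨ run 4 [1,2,4,8,x] [] 2 [0] 0 = true := by decide +kernel
theorem run4'' : ∀ x < 16, x ∈ [0,1,2,4,8] ∨ ∀ y < x, y ∈ [0,1,2,4,8] ∨ run 4 [1,2,4,8,x,y] [] 2 [0] 0 = true := by decide +kernel
theorem run5 : run 5 [1,2,4,8,16] [] 6 [0] 0 = true := by decide +kernel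
theorem run5' : ∀ x < 31, x ∈ [0,1,2,4,8,16] ∨ run 5 [1,2,4,8,16,x] [] 6 [0] 0 = true := by decide +kernel
theorem run5s : run 6 [1,2,4,8,16,31] [7,11,13,14,19,21,22,25,26,28,33,34,35,36,37,38,39,40,41,42,43,44,45,46,47,48,49,50,51,52,53,54,55,56,57,58,59,60,61,62,63] 11 [0,7,32] 0 = true := by decide +kernel
theorem run6 : run 6 [1,2,4,8,16,32] [7,11,13,14,15,19,21,22,23,25,26,27,28,29,30,31,35,37,38,39,41,42,43,44,45,46,47,49,50,51,52,53,54,55,56,57,58,59,60,61,62,63] 11 [0,63,3] 0 = true := by decide +kernel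
theorem run6' : run 6 [1,2,4,8,16,32] [7,11,13,14,15,19,21,22,23,25,26,27,28,29,30,31,35,37,38,39,41,42,43,44,45,46,47,49,50,51,52,53,54,55,56,57,58,59,60,61,62,63] 12 [0,63] 282668995843688 = true := by decide +kernel

/-- reduction to a single coset with few points -/
theorem wfib (r : ℕ) (hr : r ≤ 6) (as : List ℕ) (k : ℕ) (h : run r as [] k [0] 0 = true)
    (B : Finset ℕ) (has : ∀ t ∈ as, t < 2 ^ r) (hB : ∀ x ∈ B, x < 64)
    (hind : ∀ x ∈ B, ∀ t ∈ as, x ^^^ t ∉ B)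
    (hdom : ∀ x < 64, x ∈ B ∨ ∃ t ∈ as, x ^^^ t ∈ B)
    (hc : B.card < 2 ^ (6 - r) * (k + 2)) : False := by
  have h64 : 2 ^ r * 2 ^ (6 - r) = 64 := by
    rw [← pow_add, Nat.add_sub_cancel' hr]; norm_num
  have hdivlt : ∀ x < 64, x / 2 ^ r < 2 ^ (6 - r) := by
    intro x hx
    rw [Nat.div_lt_iff_lt_mul (by positivity), Nat.mul_comm, h64]
    exact hx
  have hxd : ∀ x t, t < 2 ^ r → (x ^^^ t) / 2 ^ r = x / 2 ^ r := by
    intro x t ht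
    rw [← Nat.shiftRight_eq_div_pow, ← Nat.shiftRight_eq_div_pow, Nat.shiftRight_xor_distrib]
    rw [Nat.shiftRight_eq_div_pow t, Nat.div_eq_of_lt ht, Nat.xor_zero]
  obtain ⟨c, hcr, hcard⟩ := Finset.exists_card_fiber_lt_of_card_lt_mul
    (s := B) (t := Finset.range (2 ^ (6 - r))) (f := fun x => x / 2 ^ r) (n := k + 2)
    (by simpa using hc)
  have hcl : c < 2 ^ (6 - r) := by simpa using hcr
  have hcc : 2 ^ r * c < 64 := by
    rw [← h64]; exact Nat.mul_lt_mul_of_pos_left hcl (by positivity)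
  have hcd : (2 ^ r * c) / 2 ^ r = c := Nat.mul_div_cancel_left _ (by positivity)
  obtain ⟨y, hy, hyc⟩ : ∃ y ∈ B, y / 2 ^ r = c := by
    rcases hdom _ hcc with h1 | ⟨t, ht, h1⟩
    · exact ⟨_, h1, hcd⟩
    · exact ⟨_, h1, by rw [hxd _ _ (has t ht), hcd]⟩
  have hy64 := hB y hy
  have hxlt : ∀ x < 2 ^ r, x ^^^ y < 64 := by
    intro x hx
    have : x < 64 := lt_of_lt_of_le hx (by
      calc 2 ^ r ≤ 2 ^ 6 := Nat.pow_le_pow_right (by norm_num) hr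
        _ = 64 := by norm_num)
    exact Nat.xor_lt_two_pow (n := 6) this hy64
  let C : Finset ℕ := (Finset.range (2 ^ r)).filter fun x => x ^^^ y ∈ B
  have hC : ∀ x, x ∈ C ↔ x < 2 ^ r ∧ x ^^^ y ∈ B := by
    intro x; simp [C]
  have hsw : ∀ x t, x ^^^ t ^^^ y = x ^^^ y ^^^ t := by
    intro x t; rw [Nat.xor_assoc, Nat.xor_comm t y, Nat.xor_assoc]
  refine run_sound r as [] k [0] 0 h hr C has (fun x hx => ((hC x).1 hx).1) ?_ ?_ (by simp) ?_
    (by simp) ?_ (by simp)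
  · intro x hx t ht hxt
    have h1 := ((hC _).1 hxt).2
    rw [hsw] at h1
    exact hind _ ((hC x).1 hx).2 t ht h1
  · intro x hx
    rcases hdom _ (hxlt x hx) with h1 | ⟨t, ht, h1⟩
    · exact Or.inl ((hC x).2 ⟨hx, h1⟩)
    · refine Or.inr ⟨t, ht, (hC _).2 ⟨Nat.xor_lt_two_pow hx (has t ht), ?_⟩⟩
      rw [hsw]; exact h1
  · intro p hp
    obtain rfl : p = 0 := by simpa using hp
    exact (hC 0).2 ⟨by positivity, by simpa using hy⟩
  · refine le_trans ?_ (Nat.le_of_lt_succ hcard)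
    refine Finset.card_le_card_of_injOn (fun x => x ^^^ y) ?_ ?_
    · intro x hx
      have := (hC x).1 hx
      simp only [Finset.coe_filter, Set.mem_ofPred_eq]
      refine ⟨this.2, ?_⟩
      rw [Nat.xor_comm, hxd _ _ this.1, hyc]
    · intro a _ b _ hab
      exact Nat.xor_right_injective (x := y) (by simpa [Nat.xor_comm] using hab)

theorem w2 : ∀ x < 64, Nat.testBit 282668995843688 x = true → ∃ i < 6, ∃ j < 6, i ≠ j ∧ x = 2 ^ i ^^^ 2 ^ j := by
  decide +kernel

set_option maxHeartbeats 1000000 in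
theorem nat_final (r : ℕ) (hr : r ≤ 6) (A B : Finset ℕ)
    (hA : ∀ x ∈ A, x < 2 ^ r) (hpow : ∀ i < r, 2 ^ i ∈ A)
    (h0 : 0 ∉ A) (hcap : ∀ x ∈ A, ∀ y ∈ A, x ^^^ y ∉ A)
    (hAc : A.card ≤ 6) (hc : A.card + B.card ≤ 20)
    (hB : ∀ x ∈ B, x < 64) (h0B : 0 ∈ B) (hBi : ∀ i, r ≤ i → i < 6 → 2 ^ i ∈ B)
    (hind : ∀ x ∈ B, ∀ t ∈ A, x ^^^ t ∉ B)
    (hdom : ∀ x < 64, x ∈ B ∨ ∃ t ∈ A, x ^^^ t ∈ B)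
    (hdiff : ∀ x < 64, x ≠ 0 → x ∈ A ∨ (∃ s ∈ A, s ^^^ x ∈ A) ∨ ∃ y ∈ B, y ^^^ x ∈ B)
    (hx0 : ∀ c, c = (if r = 5 then 7 else 2 ^ r - 1) → c ∈ A ∨ (∃ s ∈ A, s ^^^ c ∈ A) ∨ c ∈ B)
    (h6 : r = 6 → 3 ∈ B ∨ ∀ i < 6, ∀ j < 6, i ≠ j → 2 ^ i ^^^ 2 ^ j ∉ B) : False := by
  -- reduction for a listed set A
  have main : ∀ (as need : List ℕ) (k : ℕ) (P : List ℕ) (blk : ℕ),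
      run 6 as need k P blk = true → A = as.toFinset → as.Nodup → P.Nodup →
      20 - as.length = k + P.length → (∀ t ∈ as, t < 64) →
      (∀ x ∈ need, x < 64 ∧ x ≠ 0 ∧ x ∉ as ∧ ∀ s ∈ as, s ^^^ x ∉ as) →
      (∀ p ∈ P, p ∈ B) → (∀ x ∈ B, blk.testBit x = false) → False := by
    intro as need k P blk hrun hAe hn hPn hk h64 hneed hP hblk
    have hm : ∀ t, t ∈ A ↔ t ∈ as := by intro t; rw [hAe]; simp
    have hAl : A.card = as.length := by rw [hAe, List.toFinset_card_of_nodup hn]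
    refine run_sound 6 as need k P blk hrun le_rfl B h64 hB ?_ ?_ ?_ hP hPn (by omega) hblk
    · intro x hx t ht; exact hind x hx t ((hm t).2 ht)
    · intro x hx
      rcases hdom x hx with h | ⟨t, ht, h⟩
      · exact Or.inl h
      · exact Or.inr ⟨t, (hm t).1 ht, h⟩
    · intro x hx
      obtain ⟨a1, a2, a3, a4⟩ := hneed x hx
      rcases hdiff x a1 a2 with h | ⟨s, hs, h⟩ | h
      · exact absurd ((hm _).1 h) a3
      · exact absurd ((hm _).1 h) (a4 s ((hm _).1 hs))
      · exact h
  have wmain : ∀ (as : List ℕ) (k : ℕ), run r as [] k [0] 0 = true → A = as.toFinset →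
      as.Nodup → 20 - as.length < 2 ^ (6 - r) * (k + 2) → False := by
    intro as k hrun hAe hn hk
    have hm : ∀ t, t ∈ A ↔ t ∈ as := by intro t; rw [hAe]; simp
    have hAl : A.card = as.length := by rw [hAe, List.toFinset_card_of_nodup hn]
    refine wfib r hr as k hrun B (fun t ht => hA t ((hm t).2 ht)) hB
      (fun x hx t ht => hind x hx t ((hm t).2 ht)) ?_ (by omega)
    intro x hx
    rcases hdom x hx with h | ⟨t, ht, h⟩
    · exact Or.inl h
    · exact Or.inr ⟨t, (hm t).1 ht, h⟩
  -- the extra elements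
  obtain ⟨Q, hQ⟩ : ∃ Q : Finset ℕ, Q = (Finset.range r).image fun i => 2 ^ i := ⟨_, rfl⟩
  have hQA : Q ⊆ A := by
    intro x hx
    rw [hQ] at hx
    obtain ⟨i, hi, rfl⟩ := Finset.mem_image.1 hx
    exact hpow i (by simpa using hi)
  have hQc : Q.card = r := by
    rw [hQ, Finset.card_image_of_injective _ (Nat.pow_right_injective le_rfl)]; simp
  have hE : A = Q ∪ (A \ Q) := (Finset.union_sdiff_of_subset hQA).symm
  have hEc : (A \ Q).card + r ≤ 6 := by
    rw [Finset.card_sdiff_of_subset hQA, hQc]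
    have := Finset.card_le_card hQA
    omega
  have hEm : ∀ x ∈ A \ Q, x ∈ A ∧ x < 2 ^ r ∧ x ≠ 0 ∧ x ∉ Q ∧ ∀ s ∈ Q, s ^^^ x ∉ Q := by
    intro x hx
    obtain ⟨h1, h2⟩ := Finset.mem_sdiff.1 hx
    exact ⟨h1, hA x h1, fun h => h0 (h ▸ h1), h2, fun s hs h => hcap s (hQA hs) x h1 (hQA h)⟩
  generalize hEE : A \ Q = E at hE hEc hEm
  have hBp : ∀ i, r ≤ i → i < 6 → 2 ^ i ∈ B := hBi
  interval_cases r <;> subst hQ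
  · have hE0 : E = ∅ := by
      rw [Finset.eq_empty_iff_forall_notMem]
      intro x hx
      have := hEm x hx
      omega
    have hAe : A = ([] : List ℕ).toFinset := by rw [hE, hE0]; rfl
    refine main _ _ _ _ _ run0 hAe (by decide) (by decide) (by decide) (by decide) (by decide) ?_ (by simp)
    intro p hp
    fin_cases hp
    exacts [h0B, hBp 0 (by norm_num) (by norm_num), hBp 1 (by norm_num) (by norm_num), hBp 2 (by norm_num) (by norm_num), hBp 3 (by norm_num) (by norm_num), hBp 4 (by norm_num) (by norm_num), hBp 5 (by norm_num) (by norm_num)]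
  · have hE0 : E = ∅ := by
      rw [Finset.eq_empty_iff_forall_notMem]
      intro x hx
      obtain ⟨_, h1, h2, h3, h4⟩ := hEm x hx
      revert h3; revert h2; revert h1; clear h4 
      generalize x = z
      intro a b c
      have : z = 1 := by omega
      subst this
      exact c (by decide)
    have hAe : A = ([1] : List ℕ).toFinset := by rw [hE, hE0]; rfl
    refine main _ _ _ _ _ run1 hAe (by decide) (by decide) (by decide) (by decide) (by decide) ?_ (by simp)
    intro p hp
    fin_cases hp
    exacts [h0B, hBp 1 (by norm_num) (by norm_num), hBp 2 (by norm_num) (by norm_num), hBp 3 (by norm_num) (by norm_num), hBp 4 (by norm_num) (by norm_num), hBp 5 (by norm_num) (by norm_num)]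
  · have dd : ∀ x < 2 ^ 2, x ≠ 0 → x ∉ (Finset.range 2).image (fun i => 2 ^ i) →
        ¬ ∀ s ∈ (Finset.range 2).image (fun i => 2 ^ i), s ^^^ x ∉ (Finset.range 2).image (fun i => 2 ^ i) := by
      decide
    have hE0 : E = ∅ := by
      rw [Finset.eq_empty_iff_forall_notMem]
      intro x hx
      obtain ⟨_, h1, h2, h3, h4⟩ := hEm x hx
      exact dd x h1 h2 h3 h4
    have hAe : A = ([1, 2] : List ℕ).toFinset := by rw [hE, hE0]; rfl
    refine main _ _ _ _ _ run2 hAe (by decide) (by decide) (by decide) (by decide) (by decide) ?_ (by simp)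
    intro p hp
    fin_cases hp
    exacts [h0B, hBp 2 (by norm_num) (by norm_num), hBp 3 (by norm_num) (by norm_num), hBp 4 (by norm_num) (by norm_num), hBp 5 (by norm_num) (by norm_num)]
  · have dd : ∀ x < 2 ^ 3, x ≠ 0 → x ∉ (Finset.range 3).image (fun i => 2 ^ i) →
        (∀ s ∈ (Finset.range 3).image (fun i => 2 ^ i), s ^^^ x ∉ (Finset.range 3).image (fun i => 2 ^ i)) → x = 7 := by
      decide
    have hPB : ∀ p ∈ [0, 8, 16, 32], p ∈ B := by
      intro p hp
      fin_cases hp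
      exacts [h0B, hBp 3 (by norm_num) (by norm_num), hBp 4 (by norm_num) (by norm_num), hBp 5 (by norm_num) (by norm_num)]
    have hE1 : E ⊆ {7} := by
      intro x hx
      obtain ⟨_, h1, h2, h3, h4⟩ := hEm x hx
      simp [dd x h1 h2 h3 h4]
    rcases Finset.subset_singleton_iff.1 hE1 with hE0 | hE0
    · have hAe : A = ([1, 2, 4] : List ℕ).toFinset := by rw [hE, hE0]; rfl
      exact main _ _ _ _ _ run3 hAe (by decide) (by decide) (by decide) (by decide) (by decide) hPB (by simp)
    · have hAe : A = ([1, 2, 4, 7] : List ℕ).toFinset := by rw [hE, hE0]; rfl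
      exact main _ _ _ _ _ run3' hAe (by decide) (by decide) (by decide) (by decide) (by decide) hPB (by simp)
  · have dd : ∀ x < 16, x ∈ [0, 1, 2, 4, 8] → x ≠ 0 → x ∈ (Finset.range 4).image (fun i => 2 ^ i) := by
      decide
    have hEl : ∀ x ∈ E, x < 16 ∧ x ∉ [0, 1, 2, 4, 8] := by
      intro x hx
      obtain ⟨_, h1, h2, h3, h4⟩ := hEm x hx
      exact ⟨h1, fun h => h3 (dd x h1 h h2)⟩
    have hcard : E.card = 0 ∨ E.card = 1 ∨ E.card = 2 := by omega
    rcases hcard with h | h | h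
    · have hE0 := Finset.card_eq_zero.1 h
      have hAe : A = ([1, 2, 4, 8] : List ℕ).toFinset := by rw [hE, hE0]; rfl
      have h15 : 15 ∈ B := by
        rcases hx0 15 (by norm_num) with h | ⟨s, hs, h⟩ | h
        · exact absurd h (by rw [hAe]; decide)
        · rw [hAe] at h hs
          exact absurd h ((by decide : ∀ s ∈ ([1, 2, 4, 8] : List ℕ).toFinset, s ^^^ 15 ∉ ([1, 2, 4, 8] : List ℕ).toFinset) s hs)
        · exact h
      have hPB : ∀ p ∈ [0, 15, 16, 32], p ∈ B := by
        intro p hp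
        fin_cases hp
        exacts [h0B, h15, hBp 4 (by norm_num) (by norm_num), hBp 5 (by norm_num) (by norm_num)]
      exact main _ _ _ _ _ run4 hAe (by decide) (by decide) (by decide) (by decide) (by decide) hPB (by simp)
    · obtain ⟨x, hx⟩ := Finset.card_eq_one.1 h
      obtain ⟨h1, h2⟩ := hEl x (by simp [hx])
      have hAe : A = ([1, 2, 4, 8, x] : List ℕ).toFinset := by
        rw [hE, hx, (by decide : (Finset.range 4).image (fun i => 2 ^ i) = {1, 2, 4, 8})]; ext z; simp [or_assoc]
      refine wmain _ 2 ((run4' x h1).resolve_left h2) hAe ?_ (by simp)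
      simp only [List.mem_cons, not_or, List.not_mem_nil] at h2
      simp; omega
    · obtain ⟨x, y, hne, hx⟩ := Finset.card_eq_two.1 h
      obtain ⟨h1, h2⟩ := hEl x (by simp [hx])
      obtain ⟨h3, h4⟩ := hEl y (by simp [hx])
      rcases lt_or_gt_of_ne hne with hlt | hlt
      · have hAe : A = ([1, 2, 4, 8, y, x] : List ℕ).toFinset := by
          rw [hE, hx, (by decide : (Finset.range 4).image (fun i => 2 ^ i) = {1, 2, 4, 8})]; ext z; simp [or_assoc]; omega
        refine wmain _ 2 (((run4'' y h3).resolve_left h4 x hlt).resolve_left h2) hAe ?_ (by simp)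
        simp only [List.mem_cons, not_or, List.not_mem_nil] at h2 h4
        simp; omega
      · have hAe : A = ([1, 2, 4, 8, x, y] : List ℕ).toFinset := by
          rw [hE, hx, (by decide : (Finset.range 4).image (fun i => 2 ^ i) = {1, 2, 4, 8})]; ext z; simp [or_assoc]; omega
        refine wmain _ 2 (((run4'' x h1).resolve_left h2 y hlt).resolve_left h4) hAe ?_ (by simp)
        simp only [List.mem_cons, not_or, List.not_mem_nil] at h2 h4
        simp; omega
  · have dd : ∀ x < 32, x ∈ [0, 1, 2, 4, 8, 16] → x ≠ 0 → x ∈ (Finset.range 5).image (fun i => 2 ^ i) := by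
      decide
    have hEl : ∀ x ∈ E, x < 32 ∧ x ∉ [0, 1, 2, 4, 8, 16] := by
      intro x hx
      obtain ⟨_, h1, h2, h3, h4⟩ := hEm x hx
      exact ⟨h1, fun h => h3 (dd x h1 h h2)⟩
    have hcard : E.card = 0 ∨ E.card = 1 := by omega
    rcases hcard with h | h
    · have hE0 := Finset.card_eq_zero.1 h
      have hAe : A = ([1, 2, 4, 8, 16] : List ℕ).toFinset := by rw [hE, hE0]; rfl
      exact wmain _ 6 run5 hAe (by decide) (by simp)
    · obtain ⟨x, hx⟩ := Finset.card_eq_one.1 h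
      obtain ⟨h1, h2⟩ := hEl x (by simp [hx])
      by_cases h31 : x = 31
      · subst h31
        have hAe : A = ([1, 2, 4, 8, 16, 31] : List ℕ).toFinset := by rw [hE, hx]; rfl
        have h7 : 7 ∈ B := by
          rcases hx0 7 (by norm_num) with h | ⟨s, hs, h⟩ | h
          · exact absurd h (by rw [hAe]; decide)
          · rw [hAe] at h hs
            exact absurd h ((by decide : ∀ s ∈ ([1, 2, 4, 8, 16, 31] : List ℕ).toFinset, s ^^^ 7 ∉ ([1, 2, 4, 8, 16, 31] : List ℕ).toFinset) s hs)
          · exact h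
        have hPB : ∀ p ∈ [0, 7, 32], p ∈ B := by
          intro p hp
          fin_cases hp
          exacts [h0B, h7, hBp 5 (by norm_num) (by norm_num)]
        exact main _ _ _ _ _ run5s hAe (by decide) (by decide) (by decide) (by decide) (by decide) hPB (by simp)
      · have hAe : A = ([1, 2, 4, 8, 16, x] : List ℕ).toFinset := by
          rw [hE, hx, (by decide : (Finset.range 5).image (fun i => 2 ^ i) = {1, 2, 4, 8, 16})]; ext z; simp [or_assoc]
        refine wmain _ 6 ((run5' x (by omega)).resolve_left h2) hAe ?_ (by simp)
        simp only [List.mem_cons, not_or, List.not_mem_nil] at h2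
        simp; omega
  · have hE0 : E = ∅ := Finset.card_eq_zero.1 (by omega)
    have hAe : A = ([1, 2, 4, 8, 16, 32] : List ℕ).toFinset := by rw [hE, hE0]; rfl
    have h63 : 63 ∈ B := by
      rcases hx0 63 (by norm_num) with h | ⟨s, hs, h⟩ | h
      · exact absurd h (by rw [hAe]; decide)
      · rw [hAe] at h hs
        exact absurd h ((by decide : ∀ s ∈ ([1, 2, 4, 8, 16, 32] : List ℕ).toFinset, s ^^^ 63 ∉ ([1, 2, 4, 8, 16, 32] : List ℕ).toFinset) s hs)
      · exact h
    rcases h6 rfl with h3 | h3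
    · have hPB : ∀ p ∈ [0, 63, 3], p ∈ B := by
        intro p hp
        fin_cases hp
        exacts [h0B, h63, h3]
      exact main _ _ _ _ _ run6 hAe (by decide) (by decide) (by decide) (by decide) (by decide) hPB (by simp)
    · have hPB : ∀ p ∈ [0, 63], p ∈ B := by
        intro p hp
        fin_cases hp
        exacts [h0B, h63]
      refine main _ _ _ _ _ run6' hAe (by decide) (by decide) (by decide) (by decide) (by decide) hPB ?_
      intro x hx
      have hx64 := hB x hx
      by_contra hcon
      have := w2 x hx64 (by simpa using hcon)
      obtain ⟨i, hi, j, hj, hij, e⟩ := this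
      exact h3 i hi j hj hij (e ▸ hx)

def sg (z : ZMod 2) : ℤ := if z = 0 then 1 else -1
theorem sg_add : ∀ a b : ZMod 2, sg (a + b) = sg a * sg b := by decide
theorem sg_one_add : ∀ a : ZMod 2, sg (a + 1) = - sg a := by decide
theorem zm2 : ∀ a : ZMod 2, a ≠ 0 → a = 1 := by decide
theorem vadd_self (x : Fin 7 → ZMod 2) : x + x = 0 := by
  ext i; exact CharTwo.add_self_eq_zero _

theorem sum_sg (x : Fin 7 → ZMod 2) :
    ∑ u : Fin 7 → ZMod 2, sg (u ⬝ᵥ x) = if x = 0 then 128 else 0 := by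
  split
  · rename_i h
    subst h
    simp [sg]
  · rename_i h
    obtain ⟨i, hi⟩ := Function.ne_iff.1 h
    have hi1 : x i = 1 := zm2 _ hi
    have h1 : ∑ u : Fin 7 → ZMod 2, sg (u ⬝ᵥ x) =
        ∑ u : Fin 7 → ZMod 2, sg ((u + Pi.single i 1) ⬝ᵥ x) :=
      (Equiv.sum_comp (Equiv.addRight (Pi.single i (1 : ZMod 2) : Fin 7 → ZMod 2))
        (fun u => sg (u ⬝ᵥ x))).symm
    have h2 : ∀ u : Fin 7 → ZMod 2, sg ((u + Pi.single i 1) ⬝ᵥ x) = - sg (u ⬝ᵥ x) := by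
      intro u
      rw [add_dotProduct, single_dotProduct, hi1, mul_one, sg_one_add]
    simp only [h2, Finset.sum_neg_distrib] at h1
    omega

theorem fourier_cap (S : Finset (Fin 7 → ZMod 2)) (h0 : (0 : Fin 7 → ZMod 2) ∉ S)
    (hcap : ∀ a ∈ S, ∀ b ∈ S, a + b ∉ S) (hn : S.card ≤ 20) :
    ∃ u : Fin 7 → ZMod 2, u ≠ 0 ∧ (S.filter fun s => u ⬝ᵥ s = 0).card ≤ 6 := by
  by_contra hcon
  push Not at hcon
  let y : (Fin 7 → ZMod 2) → ℤ := fun u => ∑ s ∈ S, sg (u ⬝ᵥ s)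
  have hy0 : y 0 = S.card := by simp [y, sg]
  have hy : ∀ u, y u = 2 * ((S.filter fun s => u ⬝ᵥ s = 0).card : ℤ) - S.card := by
    intro u
    simp only [y, sg]
    rw [Finset.sum_ite]
    have := Finset.card_filter_add_card_filter_not (s := S) (fun s => u ⬝ᵥ s = 0)
    simp only [Finset.sum_const, nsmul_eq_mul, mul_one, mul_neg]
    omega
  have e1 : ∑ u, y u = 0 := by
    simp only [y]
    rw [Finset.sum_comm]
    apply Finset.sum_eq_zero
    intro s hs
    rw [sum_sg, if_neg]
    intro h
    exact h0 (h ▸ hs)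
  have e2 : ∑ u, y u ^ 2 = 128 * S.card := by
    have : ∀ u, y u ^ 2 = ∑ s ∈ S, ∑ t ∈ S, sg (u ⬝ᵥ (s + t)) := by
      intro u
      simp only [y, sq, Finset.sum_mul_sum, dotProduct_add, sg_add]
    simp only [this]
    rw [Finset.sum_comm]
    have h1 : ∀ s ∈ S, ∑ u, ∑ t ∈ S, sg (u ⬝ᵥ (s + t)) = 128 := by
      intro s hs
      rw [Finset.sum_comm]
      rw [Finset.sum_eq_single_of_mem s hs]
      · rw [sum_sg, if_pos (vadd_self s)]
      · intro t ht hts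
        rw [sum_sg, if_neg]
        intro h
        apply hts
        have : t = s + (s + t) := by rw [← add_assoc, vadd_self, zero_add]
        rw [this, h, add_zero]
    rw [Finset.sum_congr rfl h1]
    simp [mul_comm]
  have e3 : ∑ u, y u ^ 3 = 0 := by
    have : ∀ u, y u ^ 3 = ∑ s ∈ S, ∑ t ∈ S, ∑ w ∈ S, sg (u ⬝ᵥ (s + t + w)) := by
      intro u
      simp only [y, pow_succ, pow_zero, one_mul, Finset.sum_mul_sum, Finset.sum_mul,
        Finset.mul_sum, dotProduct_add, sg_add]
      refine Finset.sum_congr rfl fun x _ => Finset.sum_congr rfl fun z _ =>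
        Finset.sum_congr rfl fun w _ => ?_
      ring
    simp only [this]
    rw [Finset.sum_comm]
    apply Finset.sum_eq_zero
    intro s hs
    rw [Finset.sum_comm]
    apply Finset.sum_eq_zero
    intro t ht
    rw [Finset.sum_comm]
    apply Finset.sum_eq_zero
    intro w hw
    rw [sum_sg, if_neg]
    intro h
    apply hcap s hs t ht
    have : s + t = (s + t + w) + w := by rw [add_assoc (s + t), vadd_self, add_zero]
    rw [this, h, zero_add]
    exact hw
  set n := S.card with hnn
  let U : Finset (Fin 7 → ZMod 2) := Finset.univ.erase 0
  have f : ∀ g : (Fin 7 → ZMod 2) → ℤ, ∑ u ∈ U, g u = ∑ u, g u - g 0 := by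
    intro g
    have := Finset.add_sum_erase Finset.univ g (Finset.mem_univ (0 : Fin 7 → ZMod 2))
    simp only [U]
    linarith
  have f1 : ∑ u ∈ U, y u = - n := by rw [f, e1, hy0]; ring
  have f2 : ∑ u ∈ U, y u ^ 2 = 128 * n - n ^ 2 := by rw [f, e2, hy0]
  have f3 : ∑ u ∈ U, y u ^ 3 = - n ^ 3 := by rw [f, e3, hy0]; ring
  have f0 : U.card = 127 := by simp [U]
  have hz : ∀ u ∈ U, ∃ a : ℤ, 7 ≤ a ∧ y u = 2 * a - n := by
    intro u hu
    refine ⟨_, ?_, hy u⟩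
    have := hcon u (Finset.ne_of_mem_erase hu)
    omega
  have key : ∀ j : ℤ, 0 ≤ ∑ u ∈ U, (y u + n - 14) * (y u + n - 2 * j) * (y u + n - 2 * j - 2) := by
    intro j
    apply Finset.sum_nonneg
    intro u hu
    obtain ⟨a, ha, hya⟩ := hz u hu
    rw [hya]
    have h1 : 0 ≤ (a - j) * (a - j - 1) := by
      rcases le_or_gt a j with h | h
      · exact mul_nonneg_of_nonpos_of_nonpos (by omega) (by omega)
      · exact mul_nonneg (by omega) (by omega)
    have h2 := mul_nonneg (sub_nonneg.2 ha) h1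
    nlinarith
  have key2 : ∀ j : ℤ, 0 ≤ - (n : ℤ) ^ 3 + (3 * n - 16 - 4 * j) * (128 * n - n ^ 2)
      + ((n - 14) * (2 * n - 4 * j - 2) + (n - 2 * j) * (n - 2 * j - 2)) * (- n)
      + 127 * ((n - 14) * (n - 2 * j) * (n - 2 * j - 2)) := by
    intro j
    have := key j
    have ex : ∀ u ∈ U, (y u + n - 14) * (y u + n - 2 * j) * (y u + n - 2 * j - 2) =
      y u ^ 3 + (3 * n - 16 - 4 * j) * y u ^ 2
      + ((n - 14) * (2 * n - 4 * j - 2) + (n - 2 * j) * (n - 2 * j - 2)) * y u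
      + ((n - 14) * (n - 2 * j) * (n - 2 * j - 2)) := by
      intro u _; ring
    rw [Finset.sum_congr rfl ex] at this
    simp only [Finset.sum_add_distrib, ← Finset.mul_sum, f1, f2, f3, Finset.sum_const, f0] at this
    skip
    push_cast at this
    simp only [nsmul_eq_mul] at this
    push_cast at this
    linarith
  have hpos : 14 ≤ n := by
    by_contra hlt
    have : 0 ≤ ∑ u ∈ U, (y u + n - 14) := by
      apply Finset.sum_nonneg
      intro u hu
      obtain ⟨a, ha, hya⟩ := hz u hu
      omega
    simp only [Finset.sum_sub_distrib, Finset.sum_add_distrib, f1, Finset.sum_const, f0] at this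
    simp at this
    omega
  clear_value n
  interval_cases n
  · have := key2 8; norm_num at this
  · have := key2 8; norm_num at this
  · have := key2 9; norm_num at this
  · have := key2 9; norm_num at this
  · have := key2 10; norm_num at this
  · have := key2 10; norm_num at this
  · have := key2 11; norm_num at this

def dec : List V7 → ℕ → V7
  | [], _ => 0
  | v :: L, m => (if m.testBit 0 then v else 0) + dec L (m / 2)

theorem xor_half (m k : ℕ) : (m ^^^ k) / 2 = m / 2 ^^^ k / 2 := by
  have := Nat.shiftRight_xor_distrib (a := m) (b := k) (i := 1)
  simpa [Nat.shiftRight_eq_div_pow] using this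

theorem vcancel (a b : V7) : a + b + b = a := by rw [add_assoc, vadd_self, add_zero]

theorem dec_zero (L : List V7) : dec L 0 = 0 := by
  induction L with
  | nil => rfl
  | cons v L ih => simp [dec, ih]

theorem dec_xor (L : List V7) (m k : ℕ) : dec L (m ^^^ k) = dec L m + dec L k := by
  induction L generalizing m k with
  | nil => simp [dec]
  | cons v L ih =>
    simp only [dec, xor_half, ih, Nat.testBit_xor]
    have := vadd_self v
    cases m.testBit 0 <;> cases k.testBit 0 <;> simp
    · abel
    · abel
    · have e : v + dec L (m / 2) + (v + dec L (k / 2)) = (v + v) + (dec L (m / 2) + dec L (k / 2)) := by abel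
      rw [e, this, zero_add]

theorem dec_pow (L : List V7) (i : ℕ) (hi : i < L.length) : dec L (2 ^ i) = L[i] := by
  induction L generalizing i with
  | nil => simp at hi
  | cons v L ih =>
    cases i with
    | zero => simp [dec, dec_zero]
    | succ i =>
      have h2 : 2 ^ (i + 1) / 2 = 2 ^ i := by rw [pow_succ]; simp
      have h3 : Nat.testBit (2 ^ (i + 1)) 0 = false := by
        rw [Nat.testBit_two_pow]; simp
      simp only [dec, h2, h3, List.getElem_cons_succ]
      rw [ih i (by simpa using hi)]; simp

theorem dec_append (L J : List V7) (m : ℕ) : dec (L ++ J) m = dec L m + dec J (m / 2 ^ L.length) := by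
  induction L generalizing m with
  | nil => simp [dec]
  | cons v L ih =>
    simp only [List.cons_append, dec, ih, List.length_cons, pow_succ, Nat.div_div_eq_div_mul, add_assoc, Nat.mul_comm]

theorem dec_mod (L : List V7) (m : ℕ) : dec L (m % 2 ^ L.length) = dec L m := by
  induction L generalizing m with
  | nil => rfl
  | cons v L ih =>
    simp only [dec, List.length_cons, Nat.testBit_mod_two_pow]
    have : m % 2 ^ (L.length + 1) / 2 = m / 2 % 2 ^ L.length := by
      rw [pow_succ, Nat.mul_comm, Nat.mod_mul_right_div_self]
    rw [this, ih]; simp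

theorem dec_all (L : List V7) : dec L (2 ^ L.length - 1) = L.sum := by
  induction L with
  | nil => rfl
  | cons v L ih =>
    have h1 : (2 ^ (L.length + 1) - 1) / 2 = 2 ^ L.length - 1 := by
      rw [pow_succ]; omega
    have h2 : Nat.testBit (2 ^ (L.length + 1) - 1) 0 = true := by
      rw [Nat.testBit_two_pow_sub_one]; simp
    simp [dec, h1, h2, ih]

theorem dec_ker (u : V7) (L : List V7) (h : ∀ v ∈ L, u ⬝ᵥ v = 0) (m : ℕ) : u ⬝ᵥ dec L m = 0 := by
  induction L generalizing m with
  | nil => simp [dec]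
  | cons v L ih =>
    simp only [dec, dotProduct_add]
    rw [ih (fun w hw => h w (List.mem_cons_of_mem _ hw)), add_zero]
    split
    · exact h v List.mem_cons_self
    · simp

def Ind (L : List V7) : Prop := ∀ m < 2 ^ L.length, dec L m = 0 → m = 0
def img (L : List V7) : Finset V7 := (Finset.range (2 ^ L.length)).image (dec L)

theorem mem_img (L : List V7) (v : V7) : v ∈ img L ↔ ∃ m < 2 ^ L.length, dec L m = v := by
  simp [img]

theorem dec_mem (L : List V7) (m : ℕ) : dec L m ∈ img L :=
  (mem_img _ _).2 ⟨m % 2 ^ L.length, Nat.mod_lt _ (by positivity), dec_mod _ _⟩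

theorem img_add (L : List V7) (v w : V7) (hv : v ∈ img L) (hw : w ∈ img L) : v + w ∈ img L := by
  obtain ⟨m, _, rfl⟩ := (mem_img _ _).1 hv
  obtain ⟨k, _, rfl⟩ := (mem_img _ _).1 hw
  rw [← dec_xor]; exact dec_mem _ _

theorem img_zero (L : List V7) : 0 ∈ img L := by
  rw [← dec_zero L]; exact dec_mem _ _

theorem img_self (L : List V7) (v : V7) (hv : v ∈ L) : v ∈ img L := by
  obtain ⟨i, hi, rfl⟩ := List.mem_iff_getElem.1 hv
  rw [← dec_pow L i hi]; exact dec_mem _ _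

theorem img_sub (L L' : List V7) (h : ∀ v ∈ L, v ∈ img L') : img L ⊆ img L' := by
  intro x hx
  obtain ⟨m, _, rfl⟩ := (mem_img _ _).1 hx
  clear hx
  induction L generalizing m with
  | nil => exact img_zero _
  | cons v L ih =>
    simp only [dec]
    apply img_add
    · split
      · exact h v List.mem_cons_self
      · exact img_zero _
    · have := ih (fun w hw => h w (List.mem_cons_of_mem _ hw)) (m / 2 % 2 ^ L.length)
        (Nat.mod_lt _ (by positivity))
      rwa [dec_mod] at this

theorem Ind.inj {L : List V7} (h : Ind L) (m k : ℕ) (hm : m < 2 ^ L.length) (hk : k < 2 ^ L.length)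
    (e : dec L m = dec L k) : m = k := by
  apply Nat.xor_eq_zero_iff.1
  apply h _ (Nat.xor_lt_two_pow hm hk)
  rw [dec_xor, e, vadd_self]

theorem Ind.card {L : List V7} (h : Ind L) : (img L).card = 2 ^ L.length := by
  rw [img, Finset.card_image_of_injOn, Finset.card_range]
  intro m hm k hk e
  exact h.inj m k (by simpa using hm) (by simpa using hk) e

theorem Ind.of_card {L : List V7} (h : (img L).card = 2 ^ L.length) : Ind L := by
  have h1 : Set.InjOn (dec L) (Finset.range (2 ^ L.length)) := by
    apply Finset.injOn_of_card_image_eq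
    rw [Finset.card_range]; exact h
  intro m hm e
  exact h1 (by simpa using hm) (by simp) (by rw [e, dec_zero])

theorem Ind.len {L : List V7} (h : Ind L) : L.length ≤ 7 := by
  have h1 := h.card
  have h2 : (img L).card ≤ 128 := (Finset.card_le_univ _).trans (by simp)
  by_contra hc
  have : 2 ^ 8 ≤ 2 ^ L.length := Nat.pow_le_pow_right (by norm_num) (by omega)
  omega

theorem Ind.snoc {L : List V7} (h : Ind L) (t : V7) (ht : t ∉ img L) : Ind (L ++ [t]) := by
  intro m hm e
  simp only [List.length_append, List.length_singleton] at hm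
  rw [dec_append] at e
  have hq : m / 2 ^ L.length < 2 := by
    rw [Nat.div_lt_iff_lt_mul (by positivity), Nat.mul_comm, ← pow_succ]; exact hm
  rcases Nat.lt_or_ge m (2 ^ L.length) with hlt | hge
  · rw [Nat.div_eq_of_lt hlt, dec_zero, add_zero] at e
    exact h m hlt e
  · exfalso
    have : m / 2 ^ L.length = 1 := by
      have : 0 < m / 2 ^ L.length := Nat.div_pos hge (by positivity)
      omega
    rw [this] at e
    have e1 : dec [t] 1 = t := by simp [dec]
    rw [e1] at e
    apply ht
    have : t = dec L m := by
      have h2 := vcancel (dec L m) t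
      rw [e, zero_add] at h2
      exact h2
    rw [this]; exact dec_mem _ _

theorem ext_list (X : V7 → Prop) (d : ℕ) (L : List V7) (hL : Ind L) (hd : 7 ≤ L.length + d) :
    ∃ J : List V7, (∀ j ∈ J, X j ∧ j ∉ img L) ∧ Ind (L ++ J) ∧ ∀ v, X v → v ∈ img (L ++ J) := by
  induction d generalizing L with
  | zero =>
    refine ⟨[], by simp, by simpa using hL, ?_⟩
    intro v _
    by_contra hv
    rw [List.append_nil] at hv
    have := (hL.snoc v hv).len
    simp at this
    omega
  | succ d ih =>
    by_cases hex : ∃ v, X v ∧ v ∉ img L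
    · obtain ⟨v, hv, hvL⟩ := hex
      obtain ⟨J, h1, h2, h3⟩ := ih (L ++ [v]) (hL.snoc v hvL) (by simp; omega)
      refine ⟨v :: J, ?_, by simpa using h2, by simpa using h3⟩
      intro j hj
      rcases List.mem_cons.1 hj with rfl | hj
      · exact ⟨hv, hvL⟩
      · refine ⟨(h1 j hj).1, fun h => (h1 j hj).2 ?_⟩
        exact img_sub L _ (fun w hw => img_self _ _ (by simp [hw])) h
    · push Not at hex
      exact ⟨[], by simp, by simpa using hL, by simpa using hex⟩

theorem ker_card (u : (Fin 7 → ZMod 2)) (hu : u ≠ 0) : (Finset.univ.filter fun x : (Fin 7 → ZMod 2) => u ⬝ᵥ x = 0).card = 64 := by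
  have h := sum_sg u
  rw [if_neg hu] at h
  simp only [sg] at h
  rw [Finset.sum_ite] at h
  have h2 := Finset.card_filter_add_card_filter_not (s := (Finset.univ : Finset (Fin 7 → ZMod 2))) (fun x => x ⬝ᵥ u = 0)
  have h3 : (Finset.univ : Finset (Fin 7 → ZMod 2)).card = 128 := by simp
  simp only [Finset.sum_const, nsmul_eq_mul, mul_one, mul_neg] at h
  have h4 : (Finset.univ.filter fun x : (Fin 7 → ZMod 2) => u ⬝ᵥ x = 0) = (Finset.univ.filter fun x : (Fin 7 → ZMod 2) => x ⬝ᵥ u = 0) := by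
    ext x; simp [dotProduct_comm]
  rw [h4]
  omega

theorem zz : ∀ a b : ZMod 2, a + b = 0 → (a = 0 ∧ b = 0) ∨ (a = 1 ∧ b = 1) := by decide
theorem zo : ∀ a b : ZMod 2, a + b = 1 → (a = 0 ∧ b = 1) ∨ (a = 1 ∧ b = 0) := by decide

theorem coord (S : Finset V7) (h0 : (0 : V7) ∉ S)
    (hcap : ∀ a ∈ S, ∀ b ∈ S, a + b ∉ S)
    (hsat : ∀ x, x ≠ 0 → x ∉ S → ∃ a ∈ S, ∃ b ∈ S, x = a + b)
    (hn : S.card ≤ 20) (u : V7) (hu : u ≠ 0) (hu6 : (S.filter fun s => u ⬝ᵥ s = 0).card ≤ 6)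
    (LI : List V7) (hLA : ∀ v ∈ LI, v ∈ S ∧ u ⬝ᵥ v = 0) (hI : Ind LI)
    (hsp : ∀ v ∈ S, u ⬝ᵥ v = 0 → v ∈ img LI)
    (b0 : V7) (hb0 : b0 ∈ S) (hub : u ⬝ᵥ b0 = 1)
    (hx0 : ∀ x0, x0 = (if LI.length = 5 then dec LI 7 else dec LI (2 ^ LI.length - 1)) →
      x0 ∈ S ∨ (∃ s ∈ S, u ⬝ᵥ s = 0 ∧ s + x0 ∈ S) ∨ x0 + b0 ∈ S)
    (h6 : LI.length = 6 → dec LI 3 + b0 ∈ S ∨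
      ∀ i < 6, ∀ j < 6, i ≠ j → dec LI (2 ^ i ^^^ 2 ^ j) + b0 ∉ S) : False := by
  obtain ⟨J, hJ, hW, hWX⟩ := ext_list
    (fun v => (v ∈ S ∧ u ⬝ᵥ v = 0) ∨ (v + b0 ∈ S ∧ u ⬝ᵥ v = 0)) 7 LI hI (by omega)
  have hJ' : ∀ j ∈ J, j + b0 ∈ S ∧ u ⬝ᵥ j = 0 := by
    intro j hj
    obtain ⟨h1 | h1, h2⟩ := hJ j hj
    · exact absurd (hsp j h1.1 h1.2) h2
    · exact h1
  have hker : ∀ m, u ⬝ᵥ dec (LI ++ J) m = 0 := by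
    apply dec_ker
    intro v hv
    rcases List.mem_append.1 hv with h | h
    · exact (hLA v h).2
    · exact (hJ' v h).2
  have hub2 : ∀ v, u ⬝ᵥ v = 1 → u ⬝ᵥ (v + b0) = 0 := by
    intro v hv; rw [dotProduct_add, hv, hub]; decide
  have honto : ∀ v, u ⬝ᵥ v = 0 → v ∈ img (LI ++ J) := by
    intro v hv
    by_cases hv0 : v = 0
    · rw [hv0]; exact img_zero _
    by_cases hvS : v ∈ S
    · exact hWX v (Or.inl ⟨hvS, hv⟩)
    obtain ⟨a, ha, b, hb, rfl⟩ := hsat v hv0 hvS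
    rw [dotProduct_add] at hv
    rcases zz _ _ hv with ⟨e1, e2⟩ | ⟨e1, e2⟩
    · exact img_add _ _ _ (hWX a (Or.inl ⟨ha, e1⟩)) (hWX b (Or.inl ⟨hb, e2⟩))
    · have e : a + b = (a + b0) + (b + b0) := by
        have : (a + b0) + (b + b0) = a + b + b0 + b0 := by abel
        rw [this, vcancel]
      rw [e]
      exact img_add _ _ _ (hWX _ (Or.inr ⟨by rwa [vcancel], hub2 a e1⟩))
        (hWX _ (Or.inr ⟨by rwa [vcancel], hub2 b e2⟩))
  have himg : img (LI ++ J) = Finset.univ.filter fun x : Fin 7 → ZMod 2 => u ⬝ᵥ x = 0 := by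
    ext v
    constructor
    · intro h
      obtain ⟨m, _, rfl⟩ := (mem_img _ _).1 h
      simpa using hker m
    · intro h
      exact honto v (by simpa using h)
  have hlen : (LI ++ J).length = 6 := by
    have h1 := hW.card
    rw [himg, ker_card u hu] at h1
    have h2 : 2 ^ 6 = 2 ^ (LI ++ J).length := by rw [← h1]; norm_num
    exact (Nat.pow_right_injective le_rfl h2).symm
  have hlow : ∀ m < 2 ^ LI.length, dec (LI ++ J) m = dec LI m := by
    intro m hm
    rw [dec_append, Nat.div_eq_of_lt hm, dec_zero, add_zero]
  have hr : LI.length ≤ 6 := by rw [List.length_append] at hlen; omega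
  have hr64 : 2 ^ LI.length ≤ 64 := by
    calc 2 ^ LI.length ≤ 2 ^ 6 := Nat.pow_le_pow_right (by norm_num) hr
      _ = 64 := by norm_num
  have hinj : ∀ m < 64, ∀ k < 64, dec (LI ++ J) m = dec (LI ++ J) k → m = k := by
    intro m hm k hk e
    exact hW.inj m k (by rw [hlen]; exact hm) (by rw [hlen]; exact hk) e
  have hcode : ∀ v, u ⬝ᵥ v = 0 → ∃ m < 64, dec (LI ++ J) m = v := by
    intro v hv
    obtain ⟨m, hm, e⟩ := (mem_img _ _).1 (honto v hv)
    rw [hlen] at hm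
    exact ⟨m, hm, e⟩
  have hx64 : ∀ x < 64, ∀ y < 64, x ^^^ y < 64 := fun x hx y hy =>
    Nat.xor_lt_two_pow (n := 6) hx hy
  have hdx := dec_xor (LI ++ J)
  have hd0 := dec_zero (LI ++ J)
  have hdp := dec_pow (LI ++ J)
  generalize hD : dec (LI ++ J) = D at hker hlow hinj hcode hdx hd0 hdp
  let A : Finset ℕ := (Finset.range 64).filter fun m => D m ∈ S
  let B : Finset ℕ := (Finset.range 64).filter fun m => D m + b0 ∈ S
  have mA : ∀ m, m ∈ A ↔ m < 64 ∧ D m ∈ S := by intro m; simp [A]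
  have mB : ∀ m, m ∈ B ↔ m < 64 ∧ D m + b0 ∈ S := by intro m; simp [B]
  have hAc : A.card ≤ (S.filter fun s => u ⬝ᵥ s = 0).card := by
    refine Finset.card_le_card_of_injOn D ?_ ?_
    · intro m hm
      have := (mA m).1 hm
      simp [this.2, hker m]
    · intro a ha b hb e
      exact hinj a ((mA a).1 ha).1 b ((mA b).1 hb).1 e
  have hBc : B.card ≤ (S.filter fun s => ¬ u ⬝ᵥ s = 0).card := by
    refine Finset.card_le_card_of_injOn (fun m => D m + b0) ?_ ?_
    · intro m hm
      have := (mB m).1 hm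
      simp [this.2, hker m, dotProduct_add, hub]
    · intro a ha b hb e
      exact hinj a ((mB a).1 ha).1 b ((mB b).1 hb).1 (add_right_cancel e)
  have hsum : (S.filter fun s => u ⬝ᵥ s = 0).card + (S.filter fun s => ¬ u ⬝ᵥ s = 0).card = S.card := by
    convert Finset.card_filter_add_card_filter_not (s := S) (fun s => u ⬝ᵥ s = 0)
  refine nat_final LI.length hr A B ?_ ?_ ?_ ?_ (hAc.trans hu6) (by omega) (fun x hx => ((mB x).1 hx).1)
    ?_ ?_ ?_ ?_ ?_ ?_ ?_
  · intro x hx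
    obtain ⟨hx1, hx2⟩ := (mA x).1 hx
    obtain ⟨m, hm, e⟩ := (mem_img _ _).1 (hsp _ hx2 (hker x))
    rw [← hlow m hm] at e
    rw [← hinj m (by omega) x hx1 e]
    exact hm
  · intro i hi
    have hp : 2 ^ i < 2 ^ LI.length := Nat.pow_lt_pow_right (by norm_num) hi
    rw [mA]
    refine ⟨by omega, ?_⟩
    rw [hlow _ hp, dec_pow _ _ hi]
    exact (hLA _ (List.getElem_mem hi)).1
  · intro h
    have := ((mA 0).1 h).2
    rw [hd0] at this
    exact h0 this
  · intro x hx y hy h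
    have := ((mA _).1 h).2
    rw [hdx] at this
    exact hcap _ ((mA x).1 hx).2 _ ((mA y).1 hy).2 this
  · rw [mB, hd0, zero_add]; exact ⟨by norm_num, hb0⟩
  · intro i hi hi6
    have hp : 2 ^ i < 2 ^ 6 := Nat.pow_lt_pow_right (by norm_num) hi6
    rw [mB]
    refine ⟨by omega, ?_⟩
    rw [hdp i (by omega), List.getElem_append_right hi]
    exact (hJ' _ (List.getElem_mem _)).1
  · intro x hx t ht h
    have := ((mB _).1 h).2
    rw [hdx, add_right_comm] at this
    exact hcap _ ((mB x).1 hx).2 _ ((mA t).1 ht).2 this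
  · intro x hx
    by_cases hxS : D x + b0 ∈ S
    · exact Or.inl ((mB x).2 ⟨hx, hxS⟩)
    right
    have hux : u ⬝ᵥ (D x + b0) = 1 := by rw [dotProduct_add, hker, hub, zero_add]
    have hne : D x + b0 ≠ 0 := by
      intro h; rw [h] at hux; simp at hux
    have key : ∀ a ∈ S, ∀ b ∈ S, D x + b0 = a + b → u ⬝ᵥ a = 0 → ∃ t ∈ A, x ^^^ t ∈ B := by
      intro a ha b hb e hua
      obtain ⟨t, ht, rfl⟩ := hcode a hua
      refine ⟨t, (mA t).2 ⟨ht, ha⟩, (mB _).2 ⟨hx64 x hx t ht, ?_⟩⟩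
      rw [hdx, add_right_comm, e, add_right_comm, vadd_self, zero_add]
      exact hb
    obtain ⟨a, ha, b, hb, e⟩ := hsat _ hne hxS
    rw [e, dotProduct_add] at hux
    rcases zo _ _ hux with ⟨e1, e2⟩ | ⟨e1, e2⟩
    · exact key a ha b hb e e1
    · exact key b hb a ha (by rw [e, add_comm]) e2
  · intro x hx hx0'
    have hne : D x ≠ 0 := by
      intro h
      exact hx0' (hinj x hx 0 (by norm_num) (by rw [h, hd0]))
    by_cases hxS : D x ∈ S
    · exact Or.inl ((mA x).2 ⟨hx, hxS⟩)
    right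
    obtain ⟨a, ha, b, hb, e⟩ := hsat _ hne hxS
    have hux := hker x
    rw [e, dotProduct_add] at hux
    rcases zz _ _ hux with ⟨e1, e2⟩ | ⟨e1, e2⟩
    · left
      obtain ⟨s, hs, rfl⟩ := hcode a e1
      refine ⟨s, (mA s).2 ⟨hs, ha⟩, (mA _).2 ⟨hx64 _ hs _ hx, ?_⟩⟩
      rw [hdx, e, ← add_assoc, vadd_self, zero_add]
      exact hb
    · right
      obtain ⟨y, hy, ey⟩ := hcode _ (hub2 a e1)
      refine ⟨y, (mB y).2 ⟨hy, by rw [ey, vcancel]; exact ha⟩, (mB _).2 ⟨hx64 _ hy _ hx, ?_⟩⟩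
      rw [hdx, e, ey]
      have : a + b0 + (a + b) + b0 = (a + a) + (b + b0 + b0) := by abel
      rw [this, vadd_self, zero_add, vcancel]
      exact hb
  · intro c hc
    have hclt : c < 2 ^ LI.length := by
      rw [hc]; split
      · rename_i h; rw [h]; norm_num
      · have : 0 < 2 ^ LI.length := by positivity
        omega
    have hDc : D c = (if LI.length = 5 then dec LI 7 else dec LI (2 ^ LI.length - 1)) := by
      rw [hlow c hclt, hc]; split <;> rfl
    have hc64 : c < 64 := by omega
    rcases hx0 _ hDc with h | ⟨s, hs, hus, h⟩ | h
    · exact Or.inl ((mA c).2 ⟨hc64, h⟩)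
    · right; left
      obtain ⟨m, hm, rfl⟩ := hcode s hus
      exact ⟨m, (mA m).2 ⟨hm, hs⟩, (mA _).2 ⟨hx64 _ hm _ hc64, by rw [hdx]; exact h⟩⟩
    · right; right
      exact (mB c).2 ⟨hc64, h⟩
  · intro hl
    rcases h6 hl with h | h
    · left
      rw [mB, hlow 3 (by rw [hl]; norm_num)]
      exact ⟨by norm_num, h⟩
    · right
      intro i hi j hj hij hB
      have := ((mB _).1 hB)
      rw [hlow _ (by rw [hl]; exact this.1)] at this
      exact h i hi j hj hij this.2

theorem no_small (S : Finset V7) (h0 : (0 : V7) ∉ S)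
    (hcap : ∀ a ∈ S, ∀ b ∈ S, a + b ∉ S)
    (hsat : ∀ x, x ≠ 0 → x ∉ S → ∃ a ∈ S, ∃ b ∈ S, x = a + b)
    (hn : S.card ≤ 20) : False := by
  obtain ⟨u, hu, hu6⟩ := fourier_cap S h0 hcap hn
  obtain ⟨LI, hJ, hI, hsp⟩ := ext_list (fun v => v ∈ S ∧ u ⬝ᵥ v = 0) 7 []
    (by intro m hm _; simpa using hm) (by simp)
  rw [List.nil_append] at hI hsp
  have hLA : ∀ v ∈ LI, v ∈ S ∧ u ⬝ᵥ v = 0 := fun v hv => (hJ v hv).1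
  have hB : ∃ b ∈ S, u ⬝ᵥ b = 1 := by
    obtain ⟨i, hi⟩ := Function.ne_iff.1 hu
    have h1 : u ⬝ᵥ (Pi.single i 1) = 1 := by rw [dotProduct_single, mul_one]; exact zm2 _ hi
    by_cases hS : (Pi.single i 1 : V7) ∈ S
    · exact ⟨_, hS, h1⟩
    · obtain ⟨a, ha, b, hb, e⟩ := hsat (Pi.single i 1) (by simp) hS
      rw [e, dotProduct_add] at h1
      rcases zo _ _ h1 with ⟨_, e2⟩ | ⟨e1, _⟩
      · exact ⟨b, hb, e2⟩
      · exact ⟨a, ha, e1⟩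
  have hx : ∀ x, u ⬝ᵥ x = 0 → ∃ b0 ∈ S, u ⬝ᵥ b0 = 1 ∧
      (x ∈ S ∨ (∃ s ∈ S, u ⬝ᵥ s = 0 ∧ s + x ∈ S) ∨ x + b0 ∈ S) := by
    intro x hux
    obtain ⟨b, hb, hub⟩ := hB
    by_cases hx0 : x = 0
    · exact ⟨b, hb, hub, Or.inr (Or.inr (by rw [hx0, zero_add]; exact hb))⟩
    by_cases hxS : x ∈ S
    · exact ⟨b, hb, hub, Or.inl hxS⟩
    obtain ⟨c, hc, d, hd, rfl⟩ := hsat x hx0 hxS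
    rw [dotProduct_add] at hux
    rcases zz _ _ hux with ⟨e1, e2⟩ | ⟨e1, e2⟩
    · exact ⟨b, hb, hub, Or.inr (Or.inl ⟨c, hc, e1, by rw [← add_assoc, vadd_self, zero_add]; exact hd⟩)⟩
    · exact ⟨c, hc, e1, Or.inr (Or.inr (by rw [add_right_comm, vadd_self, zero_add]; exact hd))⟩
  have hk := dec_ker u LI (fun v hv => (hLA v hv).2)
  obtain ⟨b0, hb0, hub, hb⟩ := hx (if LI.length = 5 then dec LI 7 else dec LI (2 ^ LI.length - 1))
    (by split <;> exact hk _)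
  by_cases h6 : LI.length = 6 ∧ ∃ p ∈ LI, ∃ q ∈ LI, p ≠ q ∧ p + q + b0 ∈ S
  · obtain ⟨hl, p, hp, q, hq, hpq, hpqS⟩ := h6
    have hq' : q ∈ LI.erase p := (List.mem_erase_of_ne hpq.symm).2 hq
    have perm : LI.Perm (p :: q :: (LI.erase p).erase q) :=
      (List.perm_cons_erase hp).trans (List.Perm.cons p (List.perm_cons_erase hq'))
    generalize (LI.erase p).erase q = R at perm
    have hl' : (p :: q :: R).length = 6 := by rw [← perm.length_eq, hl]
    have himg : img LI = img (p :: q :: R) := by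
      apply Finset.Subset.antisymm
      · exact img_sub _ _ fun v hv => img_self _ _ (perm.mem_iff.1 hv)
      · exact img_sub _ _ fun v hv => img_self _ _ (perm.mem_iff.2 hv)
    refine coord S h0 hcap hsat hn u hu hu6 (p :: q :: R) (fun v hv => hLA v (perm.mem_iff.2 hv)) ?_ ?_
      b0 hb0 hub ?_ ?_
    · apply Ind.of_card
      rw [← himg, hI.card, perm.length_eq]
    · intro v hv huv
      rw [← himg]; exact hsp v ⟨hv, huv⟩
    · intro x e
      rw [if_neg (by rw [hl']; norm_num), dec_all, ← perm.sum_eq] at e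
      rw [if_neg (by rw [hl]; norm_num), dec_all, ← e] at hb
      exact hb
    · intro _
      left
      have : dec (p :: q :: R) 3 = p + q := by
        have e1 : Nat.testBit 3 0 = true := by decide
        have e2 : Nat.testBit (3 / 2) 0 = true := by decide
        have e3 : 3 / 2 / 2 = 0 := by norm_num
        simp only [dec, e1, e2, e3, dec_zero]
        simp
      rw [this]; exact hpqS
  · refine coord S h0 hcap hsat hn u hu hu6 LI hLA hI (fun v hv huv => hsp v ⟨hv, huv⟩)
      b0 hb0 hub ?_ ?_
    · intro x e
      rw [← e] at hb
      exact hb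
    · intro hl
      right
      intro i hi j hj hij hS
      apply h6
      have hi' : i < LI.length := by omega
      have hj' : j < LI.length := by omega
      refine ⟨hl, LI[i], List.getElem_mem hi', LI[j], List.getElem_mem hj', ?_, ?_⟩
      · rw [← dec_pow _ _ hi', ← dec_pow _ _ hj']
        intro h
        have := hI.inj _ _ (Nat.pow_lt_pow_right (by norm_num) hi') (Nat.pow_lt_pow_right (by norm_num) hj') h
        exact hij (Nat.pow_right_injective le_rfl this)
      · rw [dec_xor, dec_pow _ _ hi', dec_pow _ _ hj'] at hS
        exact hS

def capL : List ℕ :=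
  [8, 11, 14, 19, 22, 23, 26, 39, 42, 53, 56, 66, 69, 71, 72, 87, 90, 103, 106, 117, 120]
def enc (m : ℕ) : Fin 7 → ZMod 2 := fun i => if m.testBit i then 1 else 0

theorem capL_free : ∀ a ∈ capL, ∀ b ∈ capL, a ^^^ b ∉ capL := by decide +kernel
theorem capL_sat : ∀ x < 128, x ≠ 0 → x ∉ capL → ∃ a ∈ capL, a ^^^ x ∈ capL := by decide +kernel
theorem capL_lt : ∀ a ∈ capL, a < 128 ∧ a ≠ 0 := by decide +kernel
theorem capL_nodup : capL.Nodup := by decide +kernel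

theorem enc_xor (m k : ℕ) : enc (m ^^^ k) = enc m + enc k := by
  ext i
  simp only [enc, Nat.testBit_xor, Pi.add_apply]
  cases m.testBit i <;> cases k.testBit i <;> decide

theorem enc_inj (m k : ℕ) (hm : m < 128) (hk : k < 128) (h : enc m = enc k) : m = k := by
  apply Nat.eq_of_testBit_eq
  intro i
  by_cases hi : i < 7
  · have := congrFun h ⟨i, hi⟩
    simp only [enc] at this
    revert this
    cases m.testBit i <;> cases k.testBit i <;> decide
  · have h7 : 2 ^ 7 ≤ 2 ^ i := Nat.pow_le_pow_right (by norm_num) (by omega)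
    rw [Nat.testBit_lt_two_pow (by omega), Nat.testBit_lt_two_pow (by omega)]

theorem enc_surj (x : Fin 7 → ZMod 2) : ∃ m < 128, enc m = x := by
  have h1 : ((Finset.range 128).image enc).card = 128 := by
    rw [Finset.card_image_of_injOn, Finset.card_range]
    intro a ha b hb e
    exact enc_inj a b (by simpa using ha) (by simpa using hb) e
  have h2 : (Finset.range 128).image enc = Finset.univ := by
    rw [← Finset.card_eq_iff_eq_univ, h1]; simp
  have : x ∈ (Finset.range 128).image enc := by rw [h2]; simp
  simpa using this

theorem enc_mem (m : ℕ) (hm : m < 128) : enc m ∈ enc '' {a | a ∈ capL} ↔ m ∈ capL := by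
  constructor
  · rintro ⟨a, ha, e⟩
    rw [← enc_inj a m (capL_lt a ha).1 hm e]; exact ha
  · intro h; exact ⟨m, h, rfl⟩

theorem enc_zero : enc 0 = 0 := by
  ext i; simp [enc]

theorem cap21 : ∃ S : Set (Fin 7 → ZMod 2), CompleteCap S ∧ S.ncard = 21 := by
  have hne : ∀ s ∈ enc '' {a | a ∈ capL}, s ≠ 0 := by
    rintro _ ⟨a, ha, rfl⟩ h
    rw [← enc_zero] at h
    exact (capL_lt a ha).2 (enc_inj a 0 (capL_lt a ha).1 (by norm_num) h)
  refine ⟨enc '' {a | a ∈ capL}, ⟨⟨hne, ?_⟩, hne, ?_⟩, ?_⟩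
  · rintro _ ⟨a, ha, rfl⟩ _ ⟨b, hb, rfl⟩ _ ⟨c, hc, rfl⟩ _ _ _ h
    rw [← enc_xor] at h
    have h1 : enc (a ^^^ b) = enc c := by
      rw [← vadd_self (enc c)] at h
      exact add_right_cancel h
    have := enc_inj _ _ (Nat.xor_lt_two_pow (n := 7) (capL_lt a ha).1 (capL_lt b hb).1) (capL_lt c hc).1 h1
    exact capL_free a ha b hb (this ▸ hc)
  · intro x hx hxS
    obtain ⟨m, hm, rfl⟩ := enc_surj x
    rw [enc_mem m hm] at hxS
    have hm0 : m ≠ 0 := by rintro rfl; exact hx enc_zero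
    obtain ⟨a, ha, hb⟩ := capL_sat m hm hm0 hxS
    have e : enc m = enc a + enc (a ^^^ m) := by
      rw [enc_xor, ← add_assoc, vadd_self, zero_add]
    refine ⟨enc a, ⟨a, ha, rfl⟩, enc (a ^^^ m), ⟨_, hb, rfl⟩, ?_, e⟩
    intro h
    rw [← h, vadd_self] at e
    exact hx e
  · rw [Set.ncard_image_of_injOn]
    · have : {a | a ∈ capL} = ((capL.toFinset : Finset ℕ) : Set ℕ) := by ext; simp
      rw [this, Set.ncard_coe_finset, List.toFinset_card_of_nodup capL_nodup]
      rfl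
    · intro a ha b hb e
      exact enc_inj a b (capL_lt a ha).1 (capL_lt b hb).1 e

/-- The smallest complete cap in PG(6,2) has size 21: there is a complete 21-cap and
no complete cap of cardinality at most 20. -/
theorem completeCap_PG6_min_size :
    (∃ S : Set (Fin 7 → ZMod 2), CompleteCap S ∧ S.ncard = 21) ∧
      ∀ S : Set (Fin 7 → ZMod 2), CompleteCap S → ¬ (S.ncard ≤ 20) := by
  refine ⟨cap21, ?_⟩
  intro S hS hn
  obtain ⟨⟨h0, hcap⟩, -, hsat⟩ := hS
  have hfin : S.Finite := Set.toFinite S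
  have hm : ∀ x, x ∈ hfin.toFinset ↔ x ∈ S := by simp
  refine no_small hfin.toFinset ?_ ?_ ?_ ?_
  · rw [hm]; exact fun h => h0 _ h rfl
  · intro a ha b hb hab
    rw [hm] at ha hb hab
    by_cases e : a = b
    · subst e; rw [vadd_self] at hab; exact h0 _ hab rfl
    · refine hcap a ha b hb (a + b) hab e ?_ ?_ (vadd_self _)
      · intro h
        exact h0 b hb (by simpa using h)
      · intro h
        exact h0 a ha (by simpa using h)
  · intro x hx hxS
    rw [hm] at hxS
    obtain ⟨a, ha, b, hb, _, e⟩ := hsat x hx hxS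
    exact ⟨a, (hm a).2 ha, b, (hm b).2 hb, e⟩
  · rw [← Set.ncard_eq_toFinset_card S hfin]; exact hn
end

section
/- In PG(v,2) with v ≥ 2, a hyperplane together with one point outside it is a minimal 1-saturating set of size 2^v which is not a cap: for any nonzero linear functional f on (ZMod 2)^(v+1) and any vector s with f s = 1, the set { x ≠ 0 : f x = 0 } ∪ {s} is a minimal 1-saturating set of cardinality 2^v, and it is not a cap. -/
/-- In PG(v,2), v ≥ 2, a hyperplane together with one point outside it is a minimal
1-saturating set of size 2^v which is not a cap. -/
theorem hyperplane_plus_point_minSat (v : ℕ) (hv : 2 ≤ v)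
    (f : (Fin (v + 1) → ZMod 2) →ₗ[ZMod 2] ZMod 2) (hf : f ≠ 0)
    (s : Fin (v + 1) → ZMod 2) (hs : f s = 1) :
    MinSat ({x : Fin (v + 1) → ZMod 2 | x ≠ 0 ∧ f x = 0} ∪ {s}) ∧
    ({x : Fin (v + 1) → ZMod 2 | x ≠ 0 ∧ f x = 0} ∪ {s}).ncard = 2 ^ v ∧
    ¬ IsCap ({x : Fin (v + 1) → ZMod 2 | x ≠ 0 ∧ f x = 0} ∪ {s}) := by
  have two : ∀ x : Fin (v + 1) → ZMod 2, x + x = 0 := fun x => by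
    funext i; exact CharTwo.add_self_eq_zero (x i)
  have hs0 : s ≠ 0 := by rintro rfl; simp at hs
  have z2 : ∀ t : ZMod 2, t = 0 ∨ t = 1 := by decide
  have hcard : (LinearMap.ker f : Set (Fin (v + 1) → ZMod 2)).ncard = 2 ^ v := by
    have h1 := LinearMap.finrank_range_add_finrank_ker f
    have h2 : LinearMap.range f = ⊤ := LinearMap.range_eq_top.2 (LinearMap.surjective hf)
    rw [h2, finrank_top, Module.finrank_self, Module.finrank_fin_fun] at h1
    have h3 : Module.finrank (ZMod 2) (LinearMap.ker f) = v := by omega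
    have h4 := Module.natCard_eq_pow_finrank (K := ZMod 2) (V := LinearMap.ker f)
    rw [h3, Nat.card_zmod] at h4
    exact h4
  have hH : {x : Fin (v + 1) → ZMod 2 | x ≠ 0 ∧ f x = 0} =
      (LinearMap.ker f : Set (Fin (v + 1) → ZMod 2)) \ {0} := by
    ext x
    simp [and_comm]
  have hHc : {x : Fin (v + 1) → ZMod 2 | x ≠ 0 ∧ f x = 0}.ncard + 1 = 2 ^ v := by
    rw [hH, Set.ncard_sdiff_singleton_add_one (by simp) (Set.toFinite _), hcard]
  refine ⟨⟨⟨?_, ?_⟩, ?_⟩, ?_, ?_⟩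
  · rintro x (hx | hx)
    · exact hx.1
    · rw [Set.mem_singleton_iff] at hx; rwa [hx]
  · intro x hx0 hx
    have hxs : x ≠ s := fun h => hx (Or.inr h)
    have hfx : f x = 1 := (z2 (f x)).resolve_left fun h => hx (Or.inl ⟨hx0, h⟩)
    refine ⟨x + s, Or.inl ⟨fun h => hxs ?_, ?_⟩, s, Or.inr rfl, fun h => hx0 ?_, ?_⟩
    · calc x = x + (s + s) := by rw [two, add_zero]
        _ = s := by rw [← add_assoc, h, zero_add]
    · rw [map_add, hfx, hs]; decide
    · simpa using h
    · rw [add_assoc, two, add_zero]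
  · rintro h (⟨h0, hfh⟩ | rfl) ⟨-, hsat⟩
    · obtain ⟨a, ⟨ha, hah⟩, b, ⟨hb, hbh⟩, hab, he⟩ := hsat (h + s)
        (fun e => by have := congrArg f e; simp [hfh, hs] at this)
        (by
          rintro ⟨(⟨-, e⟩ | e), -⟩
          · simp [hfh, hs] at e
          · exact h0 (by simpa using e))
      rcases ha with ⟨-, ha⟩ | rfl <;> rcases hb with ⟨-, hb⟩ | rfl
      · have := congrArg f he
        simp [hfh, hs, ha, hb] at this
      · exact hah (add_right_cancel he).symm
      · rw [add_comm h a] at he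
        exact hbh (add_left_cancel he).symm
      · exact hab rfl
    · obtain ⟨a, ⟨ha, hah⟩, b, ⟨hb, hbh⟩, hab, he⟩ := hsat h hs0 (fun e => e.2 rfl)
      have ha := (ha.resolve_right hah).2
      have hb := (hb.resolve_right hbh).2
      rw [he, map_add, ha, hb] at hs
      simp at hs
  · rw [Set.union_singleton, Set.ncard_insert_of_notMem _ (Set.toFinite _), hHc]
    rintro ⟨-, e⟩
    simp [hs] at e
  · rintro ⟨-, hcap⟩
    have h4 : 2 ^ 2 ≤ 2 ^ v := Nat.pow_le_pow_right (by norm_num) hv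
    obtain ⟨a, ha, b, hb, hab⟩ := (Set.one_lt_ncard (Set.toFinite _)).1
      (show 1 < {x : Fin (v + 1) → ZMod 2 | x ≠ 0 ∧ f x = 0}.ncard by omega)
    refine hcap a (Or.inl ha) b (Or.inl hb) (a + b) (Or.inl ⟨fun e => hab ?_, ?_⟩) hab ?_ ?_ (two _)
    · calc a = a + (b + b) := by rw [two, add_zero]
        _ = b := by rw [← add_assoc, e, zero_add]
    · rw [map_add, ha.2, hb.2, add_zero]
    · intro e; exact hb.1 (by simpa using e)
    · intro e; exact ha.1 (by simpa using e)
end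

section
/- Every minimal 1-saturating set in PG(v,2) has size at most 2^v: if S is a minimal 1-saturating set of nonzero vectors of (ZMod 2)^(v+1) with v ≥ 2, then the cardinality of S is at most 2^v. -/
/-- Every minimal 1-saturating set in PG(v,2), v ≥ 2, has size at most 2^v. -/
theorem minSat_card_le (v : ℕ) (hv : 2 ≤ v) (S : Set (Fin (v + 1) → ZMod 2))
    (hS : MinSat S) : S.ncard ≤ 2 ^ v := by 
  classical
  by_contra hlt
  push Not at hlt
  obtain ⟨⟨hne, _⟩, hmin⟩ := hS
  have hnon : S.Nonempty := by
    rw [← Set.ncard_pos]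
    exact lt_of_le_of_lt (Nat.zero_le _) hlt
  obtain ⟨s, hs⟩ := hnon
  apply hmin s hs
  have hcard : (S \ {s}).ncard + 1 = S.ncard := Set.ncard_sdiff_singleton_add_one hs
  have h0 : ∀ a ∈ S \ {s}, a ≠ 0 := fun a ha => hne a ha.1
  refine ⟨h0, ?_⟩
  generalize S \ {s} = T at hcard h0
  intro x hx hxT
  have hself : ∀ y : Fin (v + 1) → ZMod 2, y + y = 0 := fun y => by
    ext i
    exact CharTwo.add_self_eq_zero (y i)
  by_contra hno
  have hinj : Function.Injective (fun a : Fin (v + 1) → ZMod 2 => a + x) :=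
    add_left_injective x
  have hdis : Disjoint T ((fun a => a + x) '' T) := by
    rw [Set.disjoint_left]
    rintro a ha ⟨b, hb, rfl⟩
    refine hno ⟨b + x, ha, b, hb, ?_, ?_⟩
    · simpa using hx
    · rw [add_right_comm, hself, zero_add]
  have hsub : T ∪ (fun a => a + x) '' T ⊆ {0}ᶜ := by
    rintro a (ha | ⟨b, hb, rfl⟩)
    · exact h0 a ha
    · intro h
      apply hxT
      have h' : b + x = 0 := h
      have : b = x := by
        have := congrArg (· + x) h'
        simpa [add_assoc, hself] using this
      exact this ▸ hb
  have h1 := Set.ncard_le_ncard hsub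
  rw [Set.ncard_union_eq hdis, Set.ncard_image_of_injective _ hinj] at h1
  have h2 := Set.ncard_add_ncard_compl ({0} : Set (Fin (v + 1) → ZMod 2))
  rw [Set.ncard_singleton, Nat.card_eq_fintype_card, Fintype.card_fun, ZMod.card,
    Fintype.card_fin, pow_succ] at h2
  omega
end

section
/- The GL construction produces minimal 1-saturating sets from complete caps: if S is a complete cap of nonzero vectors of (ZMod 2)^(v+1) with v ≥ 2 and s ∈ S, then the set {s} ∪ { s + s' : s' ∈ S, s' ≠ s } (obtained by replacing each point s' ∈ S \ {s} by the third point s + s' of the line through s and s') is a minimal 1-saturating set of the same cardinality as S. -/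
/-- The GL construction: replacing each point s' ≠ s of a complete cap S by the third
point s + s' of the line through s and s' yields a minimal 1-saturating set of the
same cardinality as S. -/
theorem GL_construction_minSat (v : ℕ) (hv : 2 ≤ v)
    (S : Set (Fin (v + 1) → ZMod 2)) (hS : CompleteCap S)
    (s : Fin (v + 1) → ZMod 2) (hs : s ∈ S) :
    MinSat (insert s ((fun s' => s + s') '' (S \ {s}))) ∧
    (insert s ((fun s' => s + s') '' (S \ {s}))).ncard = S.ncard := by
  obtain ⟨⟨hnz, hcap⟩, -, hsat⟩ := hS
  have h2 : ∀ x : Fin (v + 1) → ZMod 2, x + x = 0 := fun x => by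
    funext i; exact CharTwo.add_self_eq_zero (x i)
  have hc : ∀ x y : Fin (v + 1) → ZMod 2, x + (x + y) = y := fun x y => by
    rw [← add_assoc, h2, zero_add]
  have h0 : ∀ x y : Fin (v + 1) → ZMod 2, x + y = 0 → x = y := fun x y h => by
    have := hc x y
    rw [h, add_zero] at this; exact this
  have hd : ∀ x y : Fin (v + 1) → ZMod 2, (s + x) + (s + y) = x + y := fun x y => by
    rw [add_add_add_comm, h2, zero_add]
  have hcap' : ∀ a ∈ S, ∀ b ∈ S, ∀ c ∈ S, a ≠ b → a ≠ c → b ≠ c → c ≠ a + b := by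
    intro a ha b hb c hc' hab hac hbc h
    exact hcap a ha b hb c hc' hab hac hbc (by rw [← h, h2])
  have hsn : s ∉ (fun s' => s + s') '' (S \ {s}) := by
    rintro ⟨a, ⟨ha, -⟩, h⟩
    exact hnz a ha (by simpa using h)
  refine ⟨⟨⟨?_, ?_⟩, ?_⟩, ?_⟩
  · rintro x (rfl | ⟨a, ⟨ha, has⟩, rfl⟩)
    · exact hnz _ hs
    · intro h
      exact has (h0 _ _ h).symm
  · intro x hx hxT
    by_cases hxS : x ∈ S
    · have hxs : x ≠ s := fun h => hxT (Or.inl h)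
      refine ⟨s, Or.inl rfl, s + x, Or.inr ⟨x, ⟨hxS, hxs⟩, rfl⟩, ?_, (hc s x).symm⟩
      intro h
      exact hx (by simpa using h.symm)
    · obtain ⟨a, ha, b, hb, hab, rfl⟩ := hsat x hx hxS
      have has : a ≠ s := by
        rintro rfl
        exact hxT (Or.inr ⟨b, ⟨hb, fun h => hab h.symm⟩, rfl⟩)
      have hbs : b ≠ s := by
        rintro rfl
        exact hxT (Or.inr ⟨a, ⟨ha, has⟩, add_comm _ _⟩)
      exact ⟨s + a, Or.inr ⟨a, ⟨ha, has⟩, rfl⟩, s + b, Or.inr ⟨b, ⟨hb, hbs⟩, rfl⟩,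
        fun h => hab (add_left_cancel h), (hd a b).symm⟩
  · rintro t (rfl | ⟨t, ⟨ht, hts⟩, rfl⟩) ⟨-, hst⟩
    · obtain ⟨a, ⟨ha, has⟩, b, ⟨hb, hbs⟩, hab, h⟩ := hst t (hnz t hs) (fun h => h.2 rfl)
      rcases ha with ha | ⟨a, ⟨ha, ha'⟩, rfl⟩
      · exact has ha
      rcases hb with hb | ⟨b, ⟨hb, hb'⟩, rfl⟩
      · exact hbs hb
      exact hcap' a ha b hb t hs (fun e => hab (by rw [e])) ha' hb' (h.trans (hd a b))
    · have htT : t ∉ insert s ((fun s' => s + s') '' (S \ {s})) := by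
        rintro (h | ⟨a, ⟨ha, ha'⟩, h⟩)
        · exact hts h
        · have hat : a ≠ t := by
            rintro rfl
            exact hnz s hs (by simpa using h)
          exact hcap' s hs a ha t ht (fun e => ha' e.symm) (fun e => hts e.symm) hat h.symm
      obtain ⟨a, ⟨ha, has⟩, b, ⟨hb, hbs⟩, hab, h⟩ := hst t (hnz t ht) (fun h => htT h.1)
      rcases ha with rfl | ⟨a, ⟨ha, ha'⟩, rfl⟩
      · apply hbs
        change b = a + t
        rw [h, hc]
      rcases hb with rfl | ⟨b, ⟨hb, hb'⟩, rfl⟩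
      · apply has
        change b + a = b + t
        rw [h, add_comm (b + a) b]
        simp only [hc]
      exact hcap' a ha b hb t ht (fun e => hab (by rw [e])) (fun e => has (by rw [e]; rfl))
        (fun e => hbs (by rw [e]; rfl)) (h.trans (hd a b))
  · rw [Set.ncard_insert_of_notMem hsn (Set.toFinite _),
      Set.ncard_image_of_injective _ (add_right_injective s),
      Set.ncard_sdiff_singleton_add_one hs (Set.toFinite _)]
end
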